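/- Let Ω ⊂ ℂⁿ, n ≥ 2, be a bounded pseudoconvex domain with C^∞ boundary, and let p ∈ ∂Ω be a strongly pseudoconvex boundary point. If F : Ω → Ω is a holomorphic map with F(z) = z + o(‖z−p‖³) as z → p within Ω, then F(z) = z for all z ∈ Ω. (Equivalently: if F ≢ id, then the order of tangency k in F(z) = z + o(‖z−p‖^k) satisfies k ≤ 2.) -/

import Mathlib

open Complex Topology Filter Metric Set Function

noncomputable section

/-- `ℂⁿ` as a normed space. -/
abbrev En (n : ℕ) : Type := EuclideanSpace ℂ (Fin n)

/-- A domain: a nonempty open connected set. -/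
def IsDomain' {n : ℕ} (Ω : Set (En n)) : Prop :=
  IsOpen Ω ∧ IsConnected Ω

/-- The Levi form of `ρ` at `q` in direction `ξ`:
`(1/4)(H_q(ξ,ξ) + H_q(iξ,iξ))` with `H_q` the second real Fréchet derivative. -/
def LeviForm {n : ℕ} (ρ : En n → ℝ) (q ξ : En n) : ℝ :=
  (1 / 4) * (iteratedFDeriv ℝ 2 ρ q ![ξ, ξ] + iteratedFDeriv ℝ 2 ρ q ![I • ξ, I • ξ])

/-- `ξ` lies in the complex tangent space of `{ρ = 0}` at `q`. -/
def InCplxTangent {n : ℕ} (ρ : En n → ℝ) (q ξ : En n) : Prop :=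
  fderiv ℝ ρ q ξ = 0 ∧ fderiv ℝ ρ q (I • ξ) = 0

/-- `ρ` is a `C^m` defining function for `Ω`. -/
def IsDefiningFunction {n : ℕ} (Ω : Set (En n)) (m : ℕ∞) (ρ : En n → ℝ) : Prop :=
  ContDiff ℝ m ρ ∧ Ω = {z | ρ z < 0} ∧ frontier Ω = {z | ρ z = 0} ∧
    ∀ q ∈ frontier Ω, fderiv ℝ ρ q ≠ 0

/-- `q` is a strongly pseudoconvex point with respect to `ρ`. -/
def StronglyPcxAt {n : ℕ} (ρ : En n → ℝ) (q : En n) : Prop :=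
  ∀ ξ : En n, ξ ≠ 0 → InCplxTangent ρ q ξ → 0 < LeviForm ρ q ξ

/-- `Ω` is pseudoconvex with `C^∞` boundary, witnessed by the defining function `ρ`. -/
def IsPcxCinfBoundary {n : ℕ} (Ω : Set (En n)) (ρ : En n → ℝ) : Prop :=
  IsDefiningFunction Ω ⊤ ρ ∧
    ∀ q ∈ frontier Ω, ∀ ξ : En n, InCplxTangent ρ q ξ → 0 ≤ LeviForm ρ q ξ

/-- `F z = z + o(‖z - p‖^k)` as `z → p` within `Ω`. -/
def LittleOh {n : ℕ} (Ω : Set (En n)) (F : En n → En n) (p : En n) (k : ℕ) : Prop :=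
  Tendsto (fun z => ‖F z - z‖ / ‖z - p‖ ^ k) (𝓝[Ω] p) (𝓝 0)

/-- `F` is an automorphism of `Ω`: a holomorphic bijection with holomorphic inverse. -/
def IsAutomorphismOf {n : ℕ} (F : En n → En n) (Ω : Set (En n)) : Prop :=
  DifferentiableOn ℂ F Ω ∧ MapsTo F Ω Ω ∧
    ∃ G : En n → En n, DifferentiableOn ℂ G Ω ∧ MapsTo G Ω Ω ∧
      (∀ z ∈ Ω, G (F z) = z) ∧ (∀ z ∈ Ω, F (G z) = z)

section FourierH1

open MeasureTheory AddCircle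

variable {V : Type*} [NormedAddCommGroup V] [InnerProductSpace ℂ V]

theorem fourier_eq_pow (k : ℕ) (θ : UnitAddCircle) :
    fourier (k : ℤ) θ = (fourier 1 θ : ℂ) ^ k := by
  simp [fourier_apply, toCircle_nsmul]

theorem norm_fourier_one (θ : UnitAddCircle) : ‖(fourier 1 θ : ℂ)‖ = 1 := by
  rw [fourier_apply]
  exact Circle.norm_coe _

theorem fourierCoeff_translate (Y : UnitAddCircle → V) (h : UnitAddCircle) (k : ℤ) :
    fourierCoeff (fun θ => Y (θ + h)) k = fourier k h • fourierCoeff Y k := by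
  simp only [fourierCoeff]
  rw [← integral_smul, ← integral_add_right_eq_self (fun θ => fourier k h • fourier (-k) θ • Y θ) h]
  apply integral_congr_ae
  filter_upwards with θ
  simp only [smul_smul]
  congr 1
  simp only [fourier_apply]
  rw [← Circle.coe_mul, ← toCircle_add]
  congr 2
  simp [smul_add]

theorem fourierCoeff_sub_continuousMap (f g : C(UnitAddCircle, V)) (k : ℤ) :
    fourierCoeff (fun θ => f θ - g θ) k = fourierCoeff f k - fourierCoeff g k := by
  simp only [fourierCoeff, smul_sub]
  apply integral_sub
  · exact (by fun_prop : Continuous fun θ => fourier (-k) θ • f θ).integrable_of_hasCompactSupport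
        (HasCompactSupport.of_compactSpace _)
  · exact (by fun_prop : Continuous fun θ => fourier (-k) θ • g θ).integrable_of_hasCompactSupport
        (HasCompactSupport.of_compactSpace _)

variable [FiniteDimensional ℂ V]

/-- Parseval's identity for continuous functions on the circle with values in a
finite-dimensional Hilbert space. -/
theorem hasSum_sq_norm_fourierCoeff (Y : C(UnitAddCircle, V)) :
    HasSum (fun k : ℤ => ‖fourierCoeff Y k‖ ^ 2) (∫ θ, ‖Y θ‖ ^ 2 ∂haarAddCircle) := by
  have hscalar : ∀ f : C(UnitAddCircle, ℂ),
      HasSum (fun k : ℤ => ‖fourierCoeff f k‖ ^ 2) (∫ θ, ‖f θ‖ ^ 2 ∂haarAddCircle) := by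
    intro f
    have h := hasSum_sq_fourierCoeff (ContinuousMap.toLp 2 haarAddCircle ℂ f)
    simp only [fourierCoeff_toLp] at h
    convert h using 1
    apply integral_congr_ae
    filter_upwards [ContinuousMap.coeFn_toLp (p := 2) (𝕜 := ℂ) haarAddCircle f] with θ hθ
    rw [hθ]
  let b := stdOrthonormalBasis ℂ V
  let Yi : Fin (Module.finrank ℂ V) → C(UnitAddCircle, ℂ) := fun i =>
    ⟨fun θ => inner ℂ (b i) (Y θ), by fun_prop⟩
  have hcoeff : ∀ i k, fourierCoeff (Yi i) k = inner ℂ (b i) (fourierCoeff Y k) := by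
    intro i k
    have hint : Integrable (fun θ => fourier (-k) θ • Y θ) haarAddCircle :=
      (by fun_prop : Continuous fun θ => fourier (-k) θ • Y θ).integrable_of_hasCompactSupport
        (HasCompactSupport.of_compactSpace _)
    have := (innerSL ℂ (b i)).integral_comp_comm hint
    simp only [fourierCoeff]
    rw [← innerSL_apply_apply, ← this]
    apply integral_congr_ae
    filter_upwards with θ
    simp [Yi]
  have hnorm : ∀ v : V, ‖v‖ ^ 2 = ∑ i, ‖inner ℂ (b i) v‖ ^ 2 := fun v =>
    (b.sum_sq_norm_inner_right v).symm
  have h1 : HasSum (fun k : ℤ => ∑ i, ‖fourierCoeff (Yi i) k‖ ^ 2)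
      (∑ i, ∫ θ, ‖Yi i θ‖ ^ 2 ∂haarAddCircle) :=
    hasSum_sum fun i _ => hscalar (Yi i)
  convert h1 using 1
  · funext k
    rw [hnorm]
    simp_rw [hcoeff]
  · rw [← integral_finsetSum]
    · apply integral_congr_ae
      filter_upwards with θ
      rw [hnorm]
      rfl
    · intro i _
      exact (by fun_prop : Continuous fun θ => ‖Yi i θ‖ ^ 2).integrable_of_hasCompactSupport
        (HasCompactSupport.of_compactSpace _)

theorem norm_zpow_sub_one_div_tendsto (k : ℤ) :
    Tendsto (fun ζ : ℂ => ‖(ζ ^ k - 1) / (ζ - 1)‖ ^ 2) (𝓝[≠] 1) (𝓝 ((k : ℝ) ^ 2)) := by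
  have h := (hasDerivAt_zpow k (1 : ℂ) (Or.inl one_ne_zero)).tendsto_slope
  have h2 := (h.norm.pow 2)
  simp only [one_zpow, mul_one, Complex.norm_intCast, sq_abs] at h2
  refine h2.congr fun ζ => ?_
  simp [slope_def_field]

/-- Square-integrable difference quotients bound the weighted sum of Fourier coefficients. -/
theorem sum_sq_mul_fourierCoeff_le (Y : C(UnitAddCircle, V)) {A : ℝ}
    (hY : ∀ h : UnitAddCircle, ∫ θ, ‖Y (θ + h) - Y θ‖ ^ 2 ∂haarAddCircle
      ≤ A ^ 2 * ‖(fourier 1 h : ℂ) - 1‖ ^ 2) (s : Finset ℤ) :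
    ∑ k ∈ s, (k : ℝ) ^ 2 * ‖fourierCoeff Y k‖ ^ 2 ≤ A ^ 2 := by
  have key : ∀ h : UnitAddCircle, (fourier 1 h : ℂ) ≠ 1 →
      ∑ k ∈ s, ‖(((fourier 1 h : ℂ)) ^ k - 1) / ((fourier 1 h : ℂ) - 1)‖ ^ 2
        * ‖fourierCoeff Y k‖ ^ 2 ≤ A ^ 2 := by
    intro h hh
    let Z : C(UnitAddCircle, V) := ⟨fun θ => Y (θ + h), by fun_prop⟩
    have hp := hasSum_sq_norm_fourierCoeff (Z - Y)
    have hc : ∀ k, fourierCoeff (Z - Y) k = ((fourier 1 h : ℂ) ^ k - 1) • fourierCoeff Y k := by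
      intro k
      have h1 : fourierCoeff (Z - Y) k = fourierCoeff (fun θ => Z θ - Y θ) k := rfl
      rw [h1, fourierCoeff_sub_continuousMap, sub_smul, one_smul]
      congr 1
      have h2 : fourierCoeff Z k = fourierCoeff (fun θ => Y (θ + h)) k := rfl
      rw [h2, fourierCoeff_translate]
      congr 1
      simp [fourier_apply, toCircle_zsmul]
    have hle := (sum_le_hasSum s (fun k _ => by positivity) hp).trans (hY h)
    have hpos : 0 < ‖(fourier 1 h : ℂ) - 1‖ ^ 2 := by
      have := norm_pos_iff.2 (sub_ne_zero.2 hh)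
      positivity
    rw [← div_le_iff₀ hpos, Finset.sum_div] at hle
    refine le_trans (le_of_eq (Finset.sum_congr rfl fun k _ => ?_)) hle
    rw [hc, norm_smul, norm_div]
    field_simp
  have hlim : Tendsto (fun ζ : ℂ => ∑ k ∈ s, ‖(ζ ^ k - 1) / (ζ - 1)‖ ^ 2 * ‖fourierCoeff Y k‖ ^ 2)
      (𝓝[≠] 1) (𝓝 (∑ k ∈ s, (k : ℝ) ^ 2 * ‖fourierCoeff Y k‖ ^ 2)) :=
    tendsto_finsetSum _ fun k _ => (norm_zpow_sub_one_div_tendsto k).mul_const _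
  have hseq : Tendsto (fun j : ℕ => (fourier 1 (((1 / (j + 2 : ℝ) : ℝ)) : UnitAddCircle) : ℂ))
      atTop (𝓝[≠] 1) := by
    rw [tendsto_nhdsWithin_iff]
    have h0 : Tendsto (fun j : ℕ => (1 / (j + 2 : ℝ) : ℝ)) atTop (𝓝 0) := by
      have := (tendsto_const_div_atTop_nhds_zero_nat (1:ℝ)).comp (tendsto_add_atTop_nat 2)
      refine this.congr fun j => ?_
      simp
    constructor
    · have hc : Continuous fun x : ℝ => (fourier 1 (x : UnitAddCircle) : ℂ) :=
        (fourier 1).continuous.comp (AddCircle.continuous_mk' 1)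
      have := (hc.tendsto 0).comp h0
      simpa [Function.comp_def] using this
    · refine Eventually.of_forall fun j => ?_
      have hinj := AddCircle.injective_toCircle (T := 1) one_ne_zero
      intro hcon
      have h1 : toCircle (((1 / (j + 2 : ℝ) : ℝ)) : UnitAddCircle) = toCircle (0 : UnitAddCircle) := by
        ext
        simpa [fourier_apply] using hcon
      have h2 := hinj h1
      rw [AddCircle.coe_eq_zero_iff] at h2
      obtain ⟨m, hm⟩ := h2
      have hj : (0:ℝ) < j + 2 := by positivity
      have h3 : (0:ℝ) < m := by
        have : (m : ℝ) = 1 / (j + 2 : ℝ) := by simpa using hm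
        rw [this]; positivity
      have h4 : (m : ℝ) < 1 := by
        have : (m : ℝ) = 1 / (j + 2 : ℝ) := by simpa using hm
        rw [this, div_lt_one hj]; linarith [(Nat.cast_nonneg j : (0:ℝ) ≤ j)]
      have h5 : (0:ℤ) < m := by exact_mod_cast h3
      have h6 : m < (1:ℤ) := by exact_mod_cast h4
      omega
  refine le_of_tendsto (hlim.comp hseq) ?_
  filter_upwards [hseq.eventually self_mem_nhdsWithin] with j hj
  exact key _ hj

end FourierH1

section DiscMap

open MeasureTheory AddCircle

variable {V : Type*} [NormedAddCommGroup V]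

/-- The first-order Sobolev bound `∑ (1 + k²) ‖c k‖² ≤ B²` for a sequence of coefficients. -/
def SobolevBound (B : ℝ) (c : ℕ → V) : Prop :=
  ∀ s : Finset ℕ, ∑ k ∈ s, (1 + (k : ℝ) ^ 2) * ‖c k‖ ^ 2 ≤ B ^ 2

/-- The constant of the embedding of the first-order Sobolev space into `ℓ¹`. -/
def sobolevConst : ℝ := √(∑' k : ℕ, 1 / (1 + (k : ℝ) ^ 2))

theorem summable_one_div_one_add_sq : Summable fun k : ℕ => 1 / (1 + (k : ℝ) ^ 2) := by
  have h := (summable_nat_add_iff 1).1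
    ((summable_nat_add_iff 1).2 (Real.summable_one_div_nat_pow.2 (by norm_num : 1 < 2)))
  rw [← summable_nat_add_iff 1]
  refine Summable.of_nonneg_of_le (fun k => by positivity) (fun k => ?_)
    ((summable_nat_add_iff 1).2 h)
  gcongr
  linarith

theorem one_le_sobolevConst : 1 ≤ sobolevConst := by
  rw [sobolevConst, Real.one_le_sqrt]
  have := summable_one_div_one_add_sq.sum_le_tsum {0} (fun k _ => by positivity)
  simpa using this

theorem SobolevBound.sum_norm_le {B : ℝ} (hB : 0 ≤ B) {c : ℕ → V} (hc : SobolevBound B c)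
    (s : Finset ℕ) : ∑ k ∈ s, ‖c k‖ ≤ sobolevConst * B := by
  have h1 := Finset.sum_mul_sq_le_sq_mul_sq s (fun k : ℕ => 1 / √(1 + (k : ℝ) ^ 2))
    (fun k => √(1 + (k : ℝ) ^ 2) * ‖c k‖)
  have h2 : ∀ k : ℕ, 1 / √(1 + (k : ℝ) ^ 2) * (√(1 + (k : ℝ) ^ 2) * ‖c k‖) = ‖c k‖ := by
    intro k
    have : 0 < √(1 + (k : ℝ) ^ 2) := Real.sqrt_pos.2 (by positivity)
    field_simp
  have h3 : ∀ k : ℕ, (1 / √(1 + (k : ℝ) ^ 2)) ^ 2 = 1 / (1 + (k : ℝ) ^ 2) := by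
    intro k
    rw [div_pow, Real.sq_sqrt (by positivity)]
    simp
  have h4 : ∀ k : ℕ, (√(1 + (k : ℝ) ^ 2) * ‖c k‖) ^ 2 = (1 + (k : ℝ) ^ 2) * ‖c k‖ ^ 2 := by
    intro k
    rw [mul_pow, Real.sq_sqrt (by positivity)]
  simp only [h2, h3, h4] at h1
  have h5 := summable_one_div_one_add_sq.sum_le_tsum s (fun k _ => by positivity)
  have h6 : (∑ k ∈ s, ‖c k‖) ^ 2 ≤ (sobolevConst * B) ^ 2 := by
    rw [mul_pow, sobolevConst, Real.sq_sqrt (tsum_nonneg fun k => by positivity)]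
    exact h1.trans (mul_le_mul h5 (hc s) (Finset.sum_nonneg fun k _ => by positivity)
      (tsum_nonneg fun k => by positivity))
  exact (abs_le_of_sq_le_sq' h6 (mul_nonneg (Real.sqrt_nonneg _) hB)).2

theorem SobolevBound.summable_norm {B : ℝ} (hB : 0 ≤ B) {c : ℕ → V} (hc : SobolevBound B c) :
    Summable fun k => ‖c k‖ :=
  summable_of_sum_le (fun _ => norm_nonneg _) (hc.sum_norm_le hB)

variable [InnerProductSpace ℂ V]

/-- The power series with coefficients `c`. -/
def discMap (c : ℕ → V) (ζ : ℂ) : V := ∑' k, ζ ^ k • c k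

variable [FiniteDimensional ℂ V]

section

variable {c : ℕ → V} (hc : Summable fun k => ‖c k‖)

include hc

omit [FiniteDimensional ℂ V] in
theorem summable_discMap {ζ : ℂ} (hζ : ‖ζ‖ ≤ 1) : Summable fun k => ‖ζ ^ k • c k‖ := by
  refine Summable.of_nonneg_of_le (fun _ => norm_nonneg _) (fun k => ?_) hc
  rw [norm_smul, norm_pow]
  exact mul_le_of_le_one_left (norm_nonneg _) (pow_le_one₀ (norm_nonneg _) hζ)

theorem continuousOn_discMap : ContinuousOn (discMap c) (closedBall 0 1) := by
  refine continuousOn_tsum (fun k => by fun_prop) hc fun k ζ hζ => ?_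
  rw [norm_smul, norm_pow]
  exact mul_le_of_le_one_left (norm_nonneg _) (pow_le_one₀ (norm_nonneg _) (by simpa using hζ))

theorem differentiableOn_discMap : DifferentiableOn ℂ (discMap c) (ball 0 1) := by
  have := FiniteDimensional.complete ℂ V
  refine Complex.differentiableOn_tsum_of_summable_norm hc (fun k => by fun_prop) isOpen_ball
    fun k ζ hζ => ?_
  rw [norm_smul, norm_pow]
  exact mul_le_of_le_one_left (norm_nonneg _)
    (pow_le_one₀ (norm_nonneg _) (by simpa using (mem_ball_zero_iff.1 hζ).le))

theorem continuous_discMap_fourier : Continuous fun θ : UnitAddCircle => discMap c (fourier 1 θ) :=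
  (continuousOn_discMap hc).comp_continuous (fourier 1).continuous fun θ => by
    simpa using (norm_fourier_one θ).le

theorem fourierCoeff_discMap (k : ℤ) :
    fourierCoeff (fun θ : UnitAddCircle => discMap c (fourier 1 θ)) k
      = if 0 ≤ k then c k.toNat else 0 := by
  have := FiniteDimensional.complete ℂ V
  have hcoef : ∀ j : ℕ, ∫ θ : UnitAddCircle, fourier (-k) θ • (fourier 1 θ : ℂ) ^ j • c j
      ∂haarAddCircle = if k = j then c j else 0 := by
    intro j
    have h1 : ∀ θ : UnitAddCircle, fourier (-k) θ • (fourier 1 θ : ℂ) ^ j • c j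
        = (fourier (-k) θ • fourier (j : ℤ) θ) • c j := by
      intro θ
      rw [smul_assoc, fourier_eq_pow]
    simp_rw [h1]
    rw [integral_smul_const]
    have h2 := fourierCoeff_fourier (T := 1) (j : ℤ)
    have h3 := congrFun h2 k
    rw [fourierCoeff] at h3
    rw [h3, Pi.single_apply]
    split_ifs <;> simp
  have hsum := hasSum_integral_of_summable_integral_norm (μ := haarAddCircle)
    (F := fun (j : ℕ) (θ : UnitAddCircle) => fourier (-k) θ • (fourier 1 θ : ℂ) ^ j • c j)
    (fun j => (by fun_prop : Continuous fun θ : UnitAddCircle =>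
      fourier (-k) θ • (fourier 1 θ : ℂ) ^ j • c j).integrable_of_hasCompactSupport
        (HasCompactSupport.of_compactSpace _)) (by
      refine hc.congr fun j => ?_
      have h1 : ∀ θ : UnitAddCircle, ‖(fourier (-k) θ : ℂ)‖ = 1 := by
        intro θ; rw [fourier_apply]; exact Circle.norm_coe _
      simp only [norm_smul, norm_pow, norm_fourier_one, h1, one_pow, one_mul, integral_const,
        probReal_univ, smul_eq_mul])
  simp_rw [hcoef] at hsum
  have heq : ∀ θ : UnitAddCircle, ∑' j : ℕ, fourier (-k) θ • (fourier 1 θ : ℂ) ^ j • c j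
      = fourier (-k) θ • discMap c (fourier 1 θ) := by
    intro θ
    rw [discMap, Summable.tsum_const_smul]
    exact (summable_discMap hc (norm_fourier_one θ).le).of_norm
  simp_rw [heq] at hsum
  rw [fourierCoeff, ← hsum.tsum_eq]
  split_ifs with hk
  · rw [tsum_eq_single k.toNat]
    · simp [hk]
    · intro j hj
      rw [if_neg]
      rintro rfl
      simp at hj
  · convert tsum_zero with j
    rw [if_neg]
    omega

theorem hasSum_sq_norm_discMap :
    HasSum (fun k => ‖c k‖ ^ 2)
      (∫ θ : UnitAddCircle, ‖discMap c (fourier 1 θ)‖ ^ 2 ∂haarAddCircle) := by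
  have h := hasSum_sq_norm_fourierCoeff
    (⟨_, continuous_discMap_fourier hc⟩ : C(UnitAddCircle, V))
  simp only [ContinuousMap.coe_mk, fourierCoeff_discMap hc] at h
  rw [← Nat.cast_injective.hasSum_iff (f := fun k : ℤ => ‖if 0 ≤ k then c k.toNat else 0‖ ^ 2)] at h
  · simpa [Function.comp_def] using h
  · intro k hk
    have : ¬ 0 ≤ k := fun hk0 => hk ⟨k.toNat, by simp [hk0]⟩
    simp [this]

theorem norm_discMap_le_two_mul {ζ : ℂ} (hζ : ‖ζ‖ ≤ 1 / 2) {N : ℝ} (hN : 0 ≤ N)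
    (hcN : ∀ s : Finset ℕ, ∑ k ∈ s, ‖c k‖ ^ 2 ≤ N ^ 2) : ‖discMap c ζ‖ ≤ 2 * N := by
  have hsum := summable_discMap hc (hζ.trans (by norm_num))
  refine (norm_tsum_le_tsum_norm hsum).trans (hsum.tsum_le_of_sum_le fun s => ?_)
  have h1 := Finset.sum_mul_sq_le_sq_mul_sq s (fun k : ℕ => ‖ζ‖ ^ k) (fun k => ‖c k‖)
  have h2 : ∑ k ∈ s, (‖ζ‖ ^ k) ^ 2 ≤ 2 := by
    have : ∀ k ∈ s, (‖ζ‖ ^ k) ^ 2 ≤ (1 / 2 : ℝ) ^ k := by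
      intro k _
      rw [← pow_mul, mul_comm, pow_mul]
      refine pow_le_pow_left₀ (by positivity) ?_ k
      nlinarith [norm_nonneg ζ]
    refine (Finset.sum_le_sum this).trans ?_
    exact (summable_geometric_two.sum_le_tsum s (fun k _ => by positivity)).trans
      tsum_geometric_two.le
  have h3 : ∑ k ∈ s, ‖ζ ^ k • c k‖ = ∑ k ∈ s, ‖ζ‖ ^ k * ‖c k‖ := by
    simp_rw [norm_smul, norm_pow]
  rw [h3]
  have h4 : (∑ k ∈ s, ‖ζ‖ ^ k * ‖c k‖) ^ 2 ≤ (2 * N) ^ 2 := by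
    refine h1.trans ((mul_le_mul h2 (hcN s) (Finset.sum_nonneg fun k _ => by positivity)
      (by norm_num)).trans ?_)
    nlinarith [sq_nonneg N]
  exact (abs_le_of_sq_le_sq' h4 (by positivity)).2

end

theorem norm_pow_sub_one_le {ζ : ℂ} (hζ : ‖ζ‖ = 1) (k : ℕ) : ‖ζ ^ k - 1‖ ≤ k * ‖ζ - 1‖ := by
  rw [← mul_geom_sum ζ k, mul_comm, norm_mul]
  gcongr
  refine (norm_sum_le _ _).trans ?_
  simp [hζ]

theorem SobolevBound.integral_translate_le {B : ℝ} (hB : 0 ≤ B) {c : ℕ → V}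
    (hc : SobolevBound B c) (h : UnitAddCircle) :
    ∫ θ : UnitAddCircle, ‖discMap c (fourier 1 (θ + h)) - discMap c (fourier 1 θ)‖ ^ 2
      ∂haarAddCircle ≤ B ^ 2 * ‖(fourier 1 h : ℂ) - 1‖ ^ 2 := by
  have hcs := hc.summable_norm hB
  have hle : ∀ k, ‖((fourier 1 h : ℂ) ^ k - 1) • c k‖ ^ 2
      ≤ ((1 + (k : ℝ) ^ 2) * ‖c k‖ ^ 2) * ‖(fourier 1 h : ℂ) - 1‖ ^ 2 := by
    intro k
    have h1 := norm_pow_sub_one_le (norm_fourier_one h) k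
    rw [norm_smul, mul_pow]
    have h2 : ‖(fourier 1 h : ℂ) ^ k - 1‖ ^ 2 ≤ (k * ‖(fourier 1 h : ℂ) - 1‖) ^ 2 := by gcongr
    nlinarith [mul_le_mul_of_nonneg_right h2 (sq_nonneg ‖c k‖),
      mul_nonneg (sq_nonneg ‖c k‖) (sq_nonneg ‖(fourier 1 h : ℂ) - 1‖)]
  have hd : Summable fun k => ‖((fourier 1 h : ℂ) ^ k - 1) • c k‖ := by
    refine Summable.of_nonneg_of_le (fun _ => norm_nonneg _) (fun k => ?_) (hcs.mul_left 2)
    rw [norm_smul]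
    gcongr
    refine (norm_sub_le _ _).trans ?_
    simp only [norm_pow, norm_fourier_one]
    norm_num
  have heq : ∀ θ : UnitAddCircle, discMap c (fourier 1 (θ + h)) - discMap c (fourier 1 θ)
      = discMap (fun k => ((fourier 1 h : ℂ) ^ k - 1) • c k) (fourier 1 θ) := by
    intro θ
    have := FiniteDimensional.complete ℂ V
    have hmul : (fourier 1 (θ + h) : ℂ) = fourier 1 θ * fourier 1 h := by
      simp [fourier_apply, toCircle_add]
    simp only [discMap]
    rw [← Summable.tsum_sub (summable_discMap hcs (norm_fourier_one _).le).of_norm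
      (summable_discMap hcs (norm_fourier_one _).le).of_norm]
    congr 1
    funext k
    rw [hmul, mul_pow, smul_smul, ← sub_smul]
    congr 1
    ring
  simp_rw [heq]
  refine hasSum_le_of_sum_le (hasSum_sq_norm_discMap hd) fun s => ?_
  refine (Finset.sum_le_sum fun k _ => hle k).trans ?_
  rw [← Finset.sum_mul]
  gcongr
  exact hc s

end DiscMap

section QuadLip

open MeasureTheory AddCircle

variable {V : Type*} [NormedAddCommGroup V] {W : Type*} [NormedAddCommGroup W]

/-- A map vanishing at the origin whose Lipschitz constant on small balls is linear in the radius. -/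
def QuadLip (C r : ℝ) (M : V → W) : Prop :=
  M 0 = 0 ∧ ∀ x y, ‖x‖ ≤ r → ‖y‖ ≤ r → ‖M x - M y‖ ≤ C * max ‖x‖ ‖y‖ * ‖x - y‖

theorem QuadLip.norm_le {C r : ℝ} {M : V → W} (hM : QuadLip C r M) {x : V} (hx : ‖x‖ ≤ r) :
    ‖M x‖ ≤ C * ‖x‖ ^ 2 := by
  have h := hM.2 x 0 hx (by simpa using (norm_nonneg x).trans hx)
  simp only [hM.1, sub_zero, norm_zero, norm_nonneg, sup_of_le_left] at h
  nlinarith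

variable [InnerProductSpace ℂ V]

theorem QuadLip.norm_inv_smul_sub_le {C r : ℝ} {M : V → V} (hM : QuadLip C r M) (hC : 0 ≤ C)
    {β : ℝ} (hβ : 2 * β ≤ r) {s t : ℂ} (hs : ‖s‖ ≤ 2) (ht : ‖t‖ ≤ 2) {x y : V}
    (hx : ‖x‖ ≤ β) (hy : ‖y‖ ≤ β) :
    ‖s⁻¹ • M (s • x) - t⁻¹ • M (t • y)‖ ≤ 2 * C * β * ‖x - y‖ + 2 * C * β ^ 2 * ‖s - t‖ := by
  have hβ0 : 0 ≤ β := (norm_nonneg x).trans hx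
  have hsmul : ∀ {a : ℂ} {z : V}, ‖a‖ ≤ 2 → ‖z‖ ≤ β → ‖a • z‖ ≤ r := by
    intro a z ha hz
    rw [norm_smul]
    exact (mul_le_mul ha hz (norm_nonneg _) (by norm_num)).trans hβ
  have h1 : ‖s⁻¹ • M (s • x) - s⁻¹ • M (s • y)‖ ≤ 2 * C * β * ‖x - y‖ := by
    rcases eq_or_ne s 0 with rfl | hs0
    · simp only [inv_zero, zero_smul, sub_self, norm_zero]
      positivity
    · have hsp := norm_pos_iff.2 hs0
      have h := hM.2 (s • x) (s • y) (hsmul hs hx) (hsmul hs hy)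
      have hmax : max ‖s • x‖ ‖s • y‖ ≤ ‖s‖ * β := by
        rw [norm_smul, norm_smul]
        exact max_le (by gcongr) (by gcongr)
      rw [← smul_sub, norm_smul, norm_inv, inv_mul_le_iff₀ hsp]
      rw [← smul_sub, norm_smul s (x - y)] at h
      calc _ ≤ C * (‖s‖ * β) * (‖s‖ * ‖x - y‖) := h.trans (by gcongr)
        _ = ‖s‖ * (‖s‖ * C * β * ‖x - y‖) := by ring
        _ ≤ ‖s‖ * (2 * C * β * ‖x - y‖) := by gcongr
  have h2 : ∀ s t : ℂ, ‖s‖ ≤ 2 → ‖t‖ ≤ 2 → ‖t‖ ≤ ‖s‖ →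
      ‖s⁻¹ • M (s • y) - t⁻¹ • M (t • y)‖ ≤ 2 * C * β ^ 2 * ‖s - t‖ := by
    intro s t hs ht hts
    rcases eq_or_ne s 0 with rfl | hs0
    · have : t = 0 := by simpa using hts
      simp [this]
    have hsp := norm_pos_iff.2 hs0
    rcases eq_or_ne t 0 with rfl | ht0
    · have h := hM.norm_le (hsmul hs hy)
      simp only [inv_zero, zero_smul, sub_zero]
      rw [norm_smul, norm_inv, inv_mul_le_iff₀ hsp]
      rw [norm_smul] at h
      calc _ ≤ C * (‖s‖ * ‖y‖) ^ 2 := h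
        _ ≤ C * (‖s‖ * β) ^ 2 := by gcongr
        _ ≤ ‖s‖ * (2 * C * β ^ 2 * ‖s‖) := by
          nlinarith [mul_nonneg hC (mul_nonneg (sq_nonneg ‖s‖) (sq_nonneg β))]
    · have htp := norm_pos_iff.2 ht0
      have e : s⁻¹ • M (s • y) - t⁻¹ • M (t • y)
          = s⁻¹ • (M (s • y) - M (t • y)) + (s⁻¹ - t⁻¹) • M (t • y) := by
        rw [smul_sub, sub_smul]; abel
      have ha := hM.2 (s • y) (t • y) (hsmul hs hy) (hsmul ht hy)
      have hmax : max ‖s • y‖ ‖t • y‖ ≤ ‖s‖ * β := by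
        rw [norm_smul, norm_smul]
        exact max_le (by gcongr) (by gcongr)
      have ha2 : ‖s⁻¹ • (M (s • y) - M (t • y))‖ ≤ C * β ^ 2 * ‖s - t‖ := by
        rw [norm_smul, norm_inv, inv_mul_le_iff₀ hsp]
        rw [← sub_smul, norm_smul (s - t)] at ha
        calc _ ≤ C * (‖s‖ * β) * (‖s - t‖ * β) := ha.trans (by gcongr)
          _ = ‖s‖ * (C * β ^ 2 * ‖s - t‖) := by ring
      have hb := hM.norm_le (hsmul ht hy)
      have hb2 : ‖(s⁻¹ - t⁻¹) • M (t • y)‖ ≤ C * β ^ 2 * ‖s - t‖ := by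
        rw [norm_smul, inv_sub_inv hs0 ht0, norm_div, norm_mul, norm_sub_rev t s, div_mul_eq_mul_div,
          div_le_iff₀ (by positivity)]
        rw [norm_smul] at hb
        calc _ ≤ ‖s - t‖ * (C * (‖t‖ * β) ^ 2) := by
              gcongr
              exact hb.trans (by gcongr)
          _ = C * β ^ 2 * ‖s - t‖ * (‖t‖ * ‖t‖) := by ring
          _ ≤ C * β ^ 2 * ‖s - t‖ * (‖s‖ * ‖t‖) := by gcongr
      rw [e]
      refine (norm_add_le _ _).trans ?_
      linarith
  have h3 : ‖s⁻¹ • M (s • y) - t⁻¹ • M (t • y)‖ ≤ 2 * C * β ^ 2 * ‖s - t‖ := by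
    rcases le_total ‖t‖ ‖s‖ with h | h
    · exact h2 s t hs ht h
    · rw [norm_sub_rev, norm_sub_rev s t]
      exact h2 t s ht hs h
  calc _ ≤ ‖s⁻¹ • M (s • x) - s⁻¹ • M (s • y)‖ + ‖s⁻¹ • M (s • y) - t⁻¹ • M (t • y)‖ :=
        norm_sub_le_norm_sub_add_norm_sub _ _ _
    _ ≤ _ := add_le_add h1 h3

/-- The function `s⁻¹ M(s Ψ)` on the circle, where `s = 1 - ζ` and `Ψ` is the power series with
coefficients `c`. -/
def boundaryTerm (M : V → V) (c : ℕ → V) (θ : UnitAddCircle) : V :=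
  (1 - fourier 1 θ : ℂ)⁻¹ • M ((1 - fourier 1 θ : ℂ) • discMap c (fourier 1 θ))

theorem norm_one_sub_fourier_le (θ : UnitAddCircle) : ‖(1 - fourier 1 θ : ℂ)‖ ≤ 2 := by
  refine (norm_sub_le _ _).trans ?_
  rw [norm_fourier_one]
  norm_num

variable [FiniteDimensional ℂ V]

theorem SobolevBound.norm_discMap_le {B : ℝ} (hB : 0 ≤ B) {c : ℕ → V} (hc : SobolevBound B c)
    {ζ : ℂ} (hζ : ‖ζ‖ ≤ 1) : ‖discMap c ζ‖ ≤ sobolevConst * B := by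
  have hs := hc.summable_norm hB
  have h1 := summable_discMap (c := c) hs hζ
  refine (norm_tsum_le_tsum_norm h1).trans (h1.tsum_le_of_sum_le fun s => ?_)
  refine (Finset.sum_le_sum fun k _ => ?_).trans (hc.sum_norm_le hB s)
  rw [norm_smul, norm_pow]
  exact mul_le_of_le_one_left (norm_nonneg _) (pow_le_one₀ (norm_nonneg _) hζ)

section

variable {C r B : ℝ} {M : V → V} (hM : QuadLip C r M) (hC : 0 ≤ C) (hB : 0 ≤ B)
  (hr : 2 * (sobolevConst * B) ≤ r) {c c' : ℕ → V} (hc : SobolevBound B c)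
  (hc' : SobolevBound B c')

include hM hC hB hr hc

theorem norm_boundaryTerm_sub_le (θ θ' : UnitAddCircle) (hc' : SobolevBound B c') :
    ‖boundaryTerm M c θ - boundaryTerm M c' θ'‖
      ≤ 2 * C * (sobolevConst * B) * ‖discMap c (fourier 1 θ) - discMap c' (fourier 1 θ')‖
        + 2 * C * (sobolevConst * B) ^ 2 * ‖(fourier 1 θ : ℂ) - fourier 1 θ'‖ := by
  have h := hM.norm_inv_smul_sub_le hC hr (norm_one_sub_fourier_le θ) (norm_one_sub_fourier_le θ')
    (hc.norm_discMap_le hB (norm_fourier_one θ).le) (hc'.norm_discMap_le hB (norm_fourier_one θ').le)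
  rwa [sub_sub_sub_cancel_left, norm_sub_rev (fourier 1 θ' : ℂ)] at h

theorem norm_boundaryTerm_le (θ : UnitAddCircle) :
    ‖boundaryTerm M c θ‖ ≤ 2 * C * (sobolevConst * B) ^ 2 := by
  have h := hM.norm_inv_smul_sub_le hC hr (norm_one_sub_fourier_le θ) (norm_one_sub_fourier_le θ)
    (hc.norm_discMap_le hB (norm_fourier_one θ).le) (y := 0)
    (by simpa using mul_nonneg (zero_le_one.trans one_le_sobolevConst) hB)
  simp only [smul_zero, hM.1, sub_zero, sub_self, norm_zero, mul_zero, add_zero] at h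
  refine h.trans ?_
  have h0 : 0 ≤ sobolevConst := zero_le_one.trans one_le_sobolevConst
  calc _ ≤ 2 * C * (sobolevConst * B) * (sobolevConst * B) := by
        gcongr
        exact hc.norm_discMap_le hB (norm_fourier_one θ).le
    _ = _ := by ring

theorem continuous_boundaryTerm : Continuous (boundaryTerm M c) := by
  rw [continuous_iff_continuousAt]
  intro θ
  rw [ContinuousAt, tendsto_iff_norm_sub_tendsto_zero]
  have h1 := continuous_discMap_fourier (hc.summable_norm hB)
  have h2 : Continuous fun θ' : UnitAddCircle => 2 * C * (sobolevConst * B) *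
      ‖discMap c (fourier 1 θ') - discMap c (fourier 1 θ)‖
        + 2 * C * (sobolevConst * B) ^ 2 * ‖(fourier 1 θ' : ℂ) - fourier 1 θ‖ := by
    have := (fourier (T := 1) 1).continuous
    fun_prop
  have h3 := h2.tendsto θ
  simp only [sub_self, norm_zero, mul_zero, add_zero] at h3
  exact squeeze_zero (fun _ => norm_nonneg _)
    (fun θ' => norm_boundaryTerm_sub_le hM hC hB hr hc θ' θ hc) h3

theorem sum_boundaryTerm_coeff_le (s : Finset ℤ) :
    ∑ k ∈ s, (1 + (k : ℝ) ^ 2) * ‖fourierCoeff (boundaryTerm M c) k‖ ^ 2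
      ≤ (5 * C * sobolevConst ^ 2 * B ^ 2) ^ 2 := by
  have hcont := continuous_boundaryTerm hM hC hB hr hc
  let Y : C(UnitAddCircle, V) := ⟨boundaryTerm M c, hcont⟩
  have h0 := one_le_sobolevConst
  set b := sobolevConst * B with hb
  have hb0 : 0 ≤ b := by positivity
  have hi : ∀ {f : UnitAddCircle → ℝ}, Continuous f → Integrable f haarAddCircle := fun hf =>
    hf.integrable_of_hasCompactSupport (HasCompactSupport.of_compactSpace _)
  have hd := continuous_discMap_fourier (hc.summable_norm hB)
  have h1 : ∑ k ∈ s, (k : ℝ) ^ 2 * ‖fourierCoeff Y k‖ ^ 2 ≤ (4 * C * b ^ 2) ^ 2 := by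
    refine sum_sq_mul_fourierCoeff_le Y (fun h => ?_) s
    set δ := ‖(fourier 1 h : ℂ) - 1‖ with hδ
    have hpt : ∀ θ : UnitAddCircle, ‖Y (θ + h) - Y θ‖ ^ 2 ≤ 2 * (2 * C * b) ^ 2 *
        ‖discMap c (fourier 1 (θ + h)) - discMap c (fourier 1 θ)‖ ^ 2
          + 2 * (2 * C * b ^ 2 * δ) ^ 2 := by
      intro θ
      have h1 := norm_boundaryTerm_sub_le hM hC hB hr hc (θ + h) θ hc
      have h2 : ‖(fourier 1 (θ + h) : ℂ) - fourier 1 θ‖ = δ := by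
        have hmul : (fourier 1 (θ + h) : ℂ) = fourier 1 θ * fourier 1 h := by
          simp [fourier_apply, toCircle_add]
        rw [hmul, ← mul_sub_one, norm_mul, norm_fourier_one, one_mul]
      rw [h2, ← hb] at h1
      have h3 : ‖Y (θ + h) - Y θ‖ ^ 2 ≤ (2 * C * b *
        ‖discMap c (fourier 1 (θ + h)) - discMap c (fourier 1 θ)‖ + 2 * C * b ^ 2 * δ) ^ 2 :=
        pow_le_pow_left₀ (norm_nonneg _) h1 2
      nlinarith [sq_nonneg (2 * C * b *
        ‖discMap c (fourier 1 (θ + h)) - discMap c (fourier 1 θ)‖ - 2 * C * b ^ 2 * δ)]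
    have hc1 : Continuous fun θ : UnitAddCircle =>
        ‖discMap c (fourier 1 (θ + h)) - discMap c (fourier 1 θ)‖ ^ 2 :=
      ((hd.comp (continuous_add_const h)).sub hd).norm.pow 2
    calc _ ≤ ∫ θ : UnitAddCircle, (2 * (2 * C * b) ^ 2 *
        ‖discMap c (fourier 1 (θ + h)) - discMap c (fourier 1 θ)‖ ^ 2
          + 2 * (2 * C * b ^ 2 * δ) ^ 2) ∂haarAddCircle :=
          integral_mono (hi (by fun_prop)) (hi (by fun_prop)) hpt
      _ = 2 * (2 * C * b) ^ 2 * (∫ θ : UnitAddCircle,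
        ‖discMap c (fourier 1 (θ + h)) - discMap c (fourier 1 θ)‖ ^ 2 ∂haarAddCircle)
          + 2 * (2 * C * b ^ 2 * δ) ^ 2 := by
          rw [integral_add (hi (by fun_prop)) (hi (by fun_prop)), integral_const_mul]
          simp
      _ ≤ 2 * (2 * C * b) ^ 2 * (B ^ 2 * δ ^ 2) + 2 * (2 * C * b ^ 2 * δ) ^ 2 := by
          gcongr
          exact hc.integral_translate_le hB h
      _ ≤ 2 * (2 * C * b) ^ 2 * (b ^ 2 * δ ^ 2) + 2 * (2 * C * b ^ 2 * δ) ^ 2 := by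
          gcongr
          exact le_mul_of_one_le_left hB h0
      _ = _ := by ring
  have h2 : ∑ k ∈ s, ‖fourierCoeff Y k‖ ^ 2 ≤ (2 * C * b ^ 2) ^ 2 := by
    refine (sum_le_hasSum s (fun k _ => by positivity) (hasSum_sq_norm_fourierCoeff Y)).trans ?_
    calc _ ≤ ∫ θ : UnitAddCircle, (2 * C * b ^ 2) ^ 2 ∂haarAddCircle :=
          integral_mono (hi (by fun_prop)) (hi (by fun_prop)) fun θ =>
            pow_le_pow_left₀ (norm_nonneg _) (norm_boundaryTerm_le hM hC hB hr hc θ) 2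
      _ = _ := by simp
  have h3 : ∀ k : ℤ, (1 + (k : ℝ) ^ 2) * ‖fourierCoeff (boundaryTerm M c) k‖ ^ 2
      = ‖fourierCoeff Y k‖ ^ 2 + (k : ℝ) ^ 2 * ‖fourierCoeff Y k‖ ^ 2 := by
    intro k
    have : fourierCoeff (boundaryTerm M c) k = fourierCoeff Y k := rfl
    rw [this]; ring
  simp_rw [h3]
  rw [Finset.sum_add_distrib]
  have h4 : 5 * C * sobolevConst ^ 2 * B ^ 2 = 5 * C * b ^ 2 := by rw [hb]; ring
  rw [h4]
  nlinarith [sq_nonneg (C * b ^ 2)]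

theorem sum_boundaryTerm_coeff_sub_le (hc' : SobolevBound B c') {N : ℝ}
    (hN : ∀ s : Finset ℕ, ∑ k ∈ s, ‖c k - c' k‖ ^ 2 ≤ N ^ 2) (s : Finset ℤ) :
    ∑ k ∈ s, ‖fourierCoeff (boundaryTerm M c) k - fourierCoeff (boundaryTerm M c') k‖ ^ 2
      ≤ (2 * C * (sobolevConst * B) * N) ^ 2 := by
  have hcont := continuous_boundaryTerm hM hC hB hr hc
  have hcont' := continuous_boundaryTerm hM hC hB hr hc'
  let Y : C(UnitAddCircle, V) := ⟨boundaryTerm M c, hcont⟩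
  let Y' : C(UnitAddCircle, V) := ⟨boundaryTerm M c', hcont'⟩
  have hi : ∀ {f : UnitAddCircle → ℝ}, Continuous f → Integrable f haarAddCircle := fun hf =>
    hf.integrable_of_hasCompactSupport (HasCompactSupport.of_compactSpace _)
  have hs := hc.summable_norm hB
  have hs' := hc'.summable_norm hB
  have hsub : Summable fun k => ‖c k - c' k‖ :=
    (hs.add hs').of_nonneg_of_le (fun _ => norm_nonneg _) fun k => norm_sub_le _ _
  have h1 := hasSum_sq_norm_fourierCoeff (Y - Y')
  have h2 : ∀ k, fourierCoeff (Y - Y') k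
      = fourierCoeff (boundaryTerm M c) k - fourierCoeff (boundaryTerm M c') k :=
    fourierCoeff_sub_continuousMap Y Y'
  simp_rw [h2] at h1
  refine (sum_le_hasSum s (fun k _ => by positivity) h1).trans ?_
  have heq : ∀ θ : UnitAddCircle, discMap c (fourier 1 θ) - discMap c' (fourier 1 θ)
      = discMap (fun k => c k - c' k) (fourier 1 θ) := by
    intro θ
    have := FiniteDimensional.complete ℂ V
    simp only [discMap, smul_sub]
    rw [Summable.tsum_sub (summable_discMap hs (norm_fourier_one _).le).of_norm
      (summable_discMap hs' (norm_fourier_one _).le).of_norm]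
  have hd := continuous_discMap_fourier hsub
  calc _ ≤ ∫ θ : UnitAddCircle, (2 * C * (sobolevConst * B)) ^ 2 *
        ‖discMap (fun k => c k - c' k) (fourier 1 θ)‖ ^ 2 ∂haarAddCircle := by
        refine integral_mono (hi (by fun_prop)) (hi (by fun_prop)) fun θ => ?_
        have h := norm_boundaryTerm_sub_le hM hC hB hr hc θ θ hc'
        rw [sub_self, norm_zero, mul_zero, add_zero, heq] at h
        rw [← mul_pow]
        exact pow_le_pow_left₀ (norm_nonneg _) h 2
    _ = (2 * C * (sobolevConst * B)) ^ 2 * ∫ θ : UnitAddCircle,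
        ‖discMap (fun k => c k - c' k) (fourier 1 θ)‖ ^ 2 ∂haarAddCircle := integral_const_mul _ _
    _ ≤ (2 * C * (sobolevConst * B)) ^ 2 * N ^ 2 := by
        gcongr
        exact hasSum_le_of_sum_le (hasSum_sq_norm_discMap hsub) hN
    _ = _ := by ring

end

end QuadLip

section FixedPoint

open MeasureTheory AddCircle

variable {V : Type*} [NormedAddCommGroup V]

theorem sum_mul_sq_norm_ite_sub_le {w : ℕ → ℝ} (hw0 : w 0 = 1) {a : ℕ → V}
    {N X : ℝ} (hN0 : 0 ≤ N) (hN : ∀ s : Finset ℕ, ∑ k ∈ s, w k * ‖a k‖ ^ 2 ≤ N ^ 2) {x : V}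
    (hx : ‖x‖ ≤ X) (s : Finset ℕ) :
    ∑ k ∈ s, w k * ‖(if k = 0 then x else 0) - a k‖ ^ 2 ≤ (X + N) ^ 2 := by
  have hX : 0 ≤ X := (norm_nonneg x).trans hx
  have ha0 : ‖a 0‖ ≤ N := by
    have := hN {0}
    simp only [Finset.sum_singleton, hw0, one_mul] at this
    exact (abs_le_of_sq_le_sq' this hN0).2
  have hpt : ∀ k ∈ s, w k * ‖(if k = 0 then x else 0) - a k‖ ^ 2
      ≤ w k * ‖a k‖ ^ 2 + if k = 0 then X ^ 2 + 2 * X * N else 0 := by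
    intro k _
    split_ifs with hk
    · subst hk
      rw [hw0, one_mul, one_mul]
      have h1 : ‖x - a 0‖ ^ 2 ≤ (X + ‖a 0‖) ^ 2 := by
        gcongr
        exact (norm_sub_le _ _).trans (by gcongr)
      nlinarith [mul_le_mul_of_nonneg_left ha0 hX]
    · simp
  refine (Finset.sum_le_sum hpt).trans ?_
  rw [Finset.sum_add_distrib]
  have h2 : (∑ k ∈ s, if k = 0 then X ^ 2 + 2 * X * N else 0) ≤ X ^ 2 + 2 * X * N := by
    rw [Finset.sum_ite_eq' s 0]
    split_ifs
    · exact le_rfl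
    · positivity
  nlinarith [hN s]

variable [InnerProductSpace ℂ V]

/-- The nonnegative Fourier coefficients of the boundary term. -/
def plusCoeff (M : V → V) (c : ℕ → V) (k : ℕ) : V := fourierCoeff (boundaryTerm M c) (k : ℤ)

/-- The Picard operator of the boundary value problem. -/
def nextCoeff (M : V → V) (P : V →L[ℂ] V) (b : V) (t : ℂ) (c : ℕ → V) (k : ℕ) : V :=
  (if k = 0 then b + P (discMap (plusCoeff M c) t) else 0) - plusCoeff M c k

variable [FiniteDimensional ℂ V]

section

variable {C r B : ℝ} {M : V → V} (hM : QuadLip C r M) (hC : 0 ≤ C) (hB : 0 ≤ B)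
  (hr : 2 * (sobolevConst * B) ≤ r) {c c' : ℕ → V} (hc : SobolevBound B c)
  (hc' : SobolevBound B c')

include hM hC hB hr hc

theorem sobolevBound_plusCoeff :
    SobolevBound (5 * C * sobolevConst ^ 2 * B ^ 2) (plusCoeff M c) := by
  intro s
  have h := sum_boundaryTerm_coeff_le hM hC hB hr hc (s.map Nat.castEmbedding)
  simpa [plusCoeff] using h

theorem sum_plusCoeff_sub_le (hc' : SobolevBound B c') {N : ℝ}
    (hN : ∀ s : Finset ℕ, ∑ k ∈ s, ‖c k - c' k‖ ^ 2 ≤ N ^ 2) (s : Finset ℕ) :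
    ∑ k ∈ s, ‖plusCoeff M c k - plusCoeff M c' k‖ ^ 2 ≤ (2 * C * (sobolevConst * B) * N) ^ 2 := by
  have h := sum_boundaryTerm_coeff_sub_le hM hC hB hr hc hc' hN (s.map Nat.castEmbedding)
  simpa [plusCoeff] using h

theorem summable_plusCoeff : Summable fun k => ‖plusCoeff M c k‖ :=
  (sobolevBound_plusCoeff hM hC hB hr hc).summable_norm (by positivity)

theorem norm_discMap_plusCoeff_le {t : ℂ} (ht : ‖t‖ ≤ 1 / 2) :
    ‖discMap (plusCoeff M c) t‖ ≤ 2 * (5 * C * sobolevConst ^ 2 * B ^ 2) := by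
  refine norm_discMap_le_two_mul (summable_plusCoeff hM hC hB hr hc) ht (by positivity) fun s => ?_
  refine le_trans (Finset.sum_le_sum fun k _ => ?_) (sobolevBound_plusCoeff hM hC hB hr hc s)
  nlinarith [sq_nonneg (k : ℝ), sq_nonneg ‖plusCoeff M c k‖,
    mul_nonneg (sq_nonneg (k : ℝ)) (sq_nonneg ‖plusCoeff M c k‖)]

theorem norm_discMap_plusCoeff_sub_le (hc' : SobolevBound B c') {N : ℝ} (hN0 : 0 ≤ N)
    (hN : ∀ s : Finset ℕ, ∑ k ∈ s, ‖c k - c' k‖ ^ 2 ≤ N ^ 2) {t : ℂ} (ht : ‖t‖ ≤ 1 / 2) :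
    ‖discMap (plusCoeff M c) t - discMap (plusCoeff M c') t‖
      ≤ 2 * (2 * C * (sobolevConst * B) * N) := by
  have h0 : 0 ≤ sobolevConst := zero_le_one.trans one_le_sobolevConst
  have hs := summable_plusCoeff hM hC hB hr hc
  have hs' := summable_plusCoeff hM hC hB hr hc'
  have ht1 : ‖t‖ ≤ 1 := ht.trans (by norm_num)
  have := FiniteDimensional.complete ℂ V
  have heq : discMap (plusCoeff M c) t - discMap (plusCoeff M c') t
      = discMap (fun k => plusCoeff M c k - plusCoeff M c' k) t := by
    simp only [discMap, smul_sub]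
    rw [Summable.tsum_sub (summable_discMap hs ht1).of_norm (summable_discMap hs' ht1).of_norm]
  rw [heq]
  exact norm_discMap_le_two_mul ((hs.add hs').of_nonneg_of_le (fun _ => norm_nonneg _)
    fun k => norm_sub_le _ _) ht (by positivity) (sum_plusCoeff_sub_le hM hC hB hr hc hc' hN)

theorem sobolevBound_nextCoeff {P : V →L[ℂ] V} (hP : ∀ x, ‖P x‖ ≤ ‖x‖)
    (hsmall : 30 * C * sobolevConst ^ 2 * B ≤ 1) {b : V} (hb : ‖b‖ ≤ B / 2) {t : ℂ}
    (ht : ‖t‖ ≤ 1 / 2) : SobolevBound B (nextCoeff M P b t c) := by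
  intro s
  have h := sum_mul_sq_norm_ite_sub_le (w := fun k : ℕ => 1 + (k : ℝ) ^ 2)
    (by simp) (by positivity) (sobolevBound_plusCoeff hM hC hB hr hc)
    (x := b + P (discMap (plusCoeff M c) t)) (X := B / 2 + 2 * (5 * C * sobolevConst ^ 2 * B ^ 2))
    ((norm_add_le _ _).trans (add_le_add hb
      ((hP _).trans (norm_discMap_plusCoeff_le hM hC hB hr hc ht)))) s
  refine h.trans (pow_le_pow_left₀ (by positivity) ?_ 2)
  nlinarith

theorem sum_nextCoeff_sub_le {P : V →L[ℂ] V} (hP : ∀ x, ‖P x‖ ≤ ‖x‖)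
    (hsmall : 30 * C * sobolevConst ^ 2 * B ≤ 1) (b : V) {t : ℂ} (ht : ‖t‖ ≤ 1 / 2)
    (hc' : SobolevBound B c') {N : ℝ} (hN0 : 0 ≤ N)
    (hN : ∀ s : Finset ℕ, ∑ k ∈ s, ‖c k - c' k‖ ^ 2 ≤ N ^ 2) (s : Finset ℕ) :
    ∑ k ∈ s, ‖nextCoeff M P b t c k - nextCoeff M P b t c' k‖ ^ 2 ≤ (1 / 2 * N) ^ 2 := by
  have h0 : 1 ≤ sobolevConst := one_le_sobolevConst
  have h := sum_mul_sq_norm_ite_sub_le (w := fun _ : ℕ => 1) rfl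
    (by positivity : 0 ≤ 2 * C * (sobolevConst * B) * N)
    (by simpa using sum_plusCoeff_sub_le hM hC hB hr hc hc' hN)
    ((hP _).trans (norm_discMap_plusCoeff_sub_le hM hC hB hr hc hc' hN0 hN ht)) s
  simp only [one_mul] at h
  have heq : ∀ k, nextCoeff M P b t c k - nextCoeff M P b t c' k
      = (if k = 0 then P (discMap (plusCoeff M c) t - discMap (plusCoeff M c') t) else 0)
        - (plusCoeff M c k - plusCoeff M c' k) := by
    intro k
    simp only [nextCoeff]
    split_ifs
    · rw [map_sub]; abel
    · abel
  simp_rw [heq]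
  refine h.trans (pow_le_pow_left₀ (by positivity) ?_ 2)
  have h1 : C * (sobolevConst * B) * N ≤ C * sobolevConst ^ 2 * B * N := by
    have : sobolevConst ≤ sobolevConst ^ 2 := by nlinarith
    nlinarith [mul_le_mul_of_nonneg_right this (mul_nonneg (mul_nonneg hC hB) hN0)]
  nlinarith [mul_le_mul_of_nonneg_right hsmall hN0]

end

omit [FiniteDimensional ℂ V] in
theorem lp_sum_sq_le (x : lp (fun _ : ℕ => V) 2) (s : Finset ℕ) :
    ∑ k ∈ s, ‖x k‖ ^ 2 ≤ ‖x‖ ^ 2 := by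
  have h := lp.sum_rpow_le_norm_rpow (p := 2) (by simp) x s
  simpa using h

omit [FiniteDimensional ℂ V] in
theorem lp_norm_le_of_sum_sq_le (x : lp (fun _ : ℕ => V) 2) {N : ℝ} (hN : 0 ≤ N)
    (h : ∀ s : Finset ℕ, ∑ k ∈ s, ‖x k‖ ^ 2 ≤ N ^ 2) : ‖x‖ ≤ N := by
  refine lp.norm_le_of_forall_sum_le (p := 2) (by simp) hN fun s => ?_
  simpa using h s

omit [FiniteDimensional ℂ V] in
theorem SobolevBound.sum_sq_le {B : ℝ} {c : ℕ → V} (hc : SobolevBound B c) (s : Finset ℕ) :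
    ∑ k ∈ s, ‖c k‖ ^ 2 ≤ B ^ 2 := by
  refine le_trans (Finset.sum_le_sum fun k _ => ?_) (hc s)
  nlinarith [mul_nonneg (sq_nonneg (k : ℝ)) (sq_nonneg ‖c k‖)]

theorem SobolevBound.memℓp {B : ℝ} {c : ℕ → V} (hc : SobolevBound B c) : Memℓp c 2 := by
  refine memℓp_gen' (C := B ^ 2) fun s => ?_
  simpa using hc.sum_sq_le s

theorem exists_nextCoeff_fixed {C r B : ℝ} {M : V → V} (hM : QuadLip C r M) (hC : 0 ≤ C)
    (hB : 0 ≤ B) (hr : 2 * (sobolevConst * B) ≤ r) {P : V →L[ℂ] V} (hP : ∀ x, ‖P x‖ ≤ ‖x‖)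
    (hsmall : 30 * C * sobolevConst ^ 2 * B ≤ 1) {b : V} (hb : ‖b‖ ≤ B / 2) {t : ℂ}
    (ht : ‖t‖ ≤ 1 / 2) : ∃ c : ℕ → V, SobolevBound B c ∧ nextCoeff M P b t c = c := by
  have := FiniteDimensional.complete ℂ V
  let S : Set (lp (fun _ : ℕ => V) 2) := {x | SobolevBound B x}
  have hS : IsClosed S := by
    have hcoe := (lp.uniformContinuous_coe (E := fun _ : ℕ => V) (p := 2)).continuous
    have : S = ⋂ s : Finset ℕ, {x | ∑ k ∈ s, (1 + (k : ℝ) ^ 2) * ‖x k‖ ^ 2 ≤ B ^ 2} := by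
      ext x; simp [S, SobolevBound]
    rw [this]
    refine isClosed_iInter fun s => isClosed_le (continuous_finsetSum _ fun k _ => ?_)
      continuous_const
    exact continuous_const.mul (((continuous_apply k).comp hcoe).norm.pow 2)
  have : CompleteSpace S := hS.completeSpace_coe
  have : Nonempty S := ⟨⟨0, fun s => by simpa using sq_nonneg B⟩⟩
  have hnext : ∀ x : S, SobolevBound B (nextCoeff M P b t x.1) := fun x =>
    sobolevBound_nextCoeff hM hC hB hr x.2 hP hsmall hb ht
  let T : S → S := fun x => ⟨⟨nextCoeff M P b t x.1, (hnext x).memℓp⟩, hnext x⟩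
  have hT : ContractingWith (1 / 2) T := by
    refine ⟨by norm_num, LipschitzWith.of_dist_le_mul fun x y => ?_⟩
    rw [Subtype.dist_eq, Subtype.dist_eq, dist_eq_norm, dist_eq_norm]
    refine lp_norm_le_of_sum_sq_le _ (by positivity) fun s => ?_
    have h := sum_nextCoeff_sub_le hM hC hB hr x.2 hP hsmall b ht y.2 (norm_nonneg (x.1 - y.1))
      (fun s => lp_sum_sq_le (x.1 - y.1) s) s
    simpa using h
  refine ⟨hT.fixedPoint.1, hT.fixedPoint.2, ?_⟩
  have h := hT.fixedPoint_isFixedPt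
  exact congrArg (fun x : S => (x.1 : ℕ → V)) h

theorem discMap_sub {c c' : ℕ → V} (hc : Summable fun k => ‖c k‖) (hc' : Summable fun k => ‖c' k‖)
    {t : ℂ} (ht : ‖t‖ ≤ 1) :
    discMap c t - discMap c' t = discMap (fun k => c k - c' k) t := by
  have := FiniteDimensional.complete ℂ V
  simp only [discMap, smul_sub]
  rw [Summable.tsum_sub (summable_discMap hc ht).of_norm (summable_discMap hc' ht).of_norm]

theorem continuousOn_discMap_nextCoeff_fixed {C r B : ℝ} {M : V → V} (hM : QuadLip C r M)
    (hC : 0 ≤ C) (hB : 0 ≤ B) (hr : 2 * (sobolevConst * B) ≤ r) {P : V →L[ℂ] V}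
    (hP : ∀ x, ‖P x‖ ≤ ‖x‖) (hsmall : 30 * C * sobolevConst ^ 2 * B ≤ 1) {b : ℂ → V}
    {s : Set ℂ} (hs : ∀ t ∈ s, ‖t‖ ≤ 1 / 2) (hbc : ContinuousOn b s)
    (hb : ∀ t ∈ s, ‖b t‖ ≤ B / 2) {c : ℂ → ℕ → V} (hc : ∀ t ∈ s, SobolevBound B (c t))
    (hfix : ∀ t ∈ s, nextCoeff M P (b t) t (c t) = c t) :
    ContinuousOn (fun t => discMap (c t) t) s := by
  intro t₀ ht₀
  let A := discMap (plusCoeff M (c t₀))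
  let δ : ℂ → V := fun t => b t - b t₀ + P (A t - A t₀)
  have hsub : s ⊆ closedBall 0 1 := fun t ht => by
    simpa using (hs t ht).trans (by norm_num)
  have hA : ContinuousOn A s :=
    (continuousOn_discMap (summable_plusCoeff hM hC hB hr (hc t₀ ht₀))).mono hsub
  have hδ : Tendsto (fun t => ‖δ t‖) (𝓝[s] t₀) (𝓝 0) := by
    have h1 : ContinuousOn (fun t => ‖δ t‖) s := by fun_prop
    have h2 := (h1 t₀ ht₀).tendsto
    simpa [δ] using h2
  have hbound : ∀ t ∈ s, ∀ u : Finset ℕ, ∑ k ∈ u, ‖c t k - c t₀ k‖ ^ 2 ≤ (2 * ‖δ t‖) ^ 2 := by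
    intro t ht
    let X : lp (fun _ : ℕ => V) 2 := ⟨c t, (hc t ht).memℓp⟩
    let X₀ : lp (fun _ : ℕ => V) 2 := ⟨c t₀, (hc t₀ ht₀).memℓp⟩
    let Y : lp (fun _ : ℕ => V) 2 := ⟨nextCoeff M P (b t) t (c t₀),
      (sobolevBound_nextCoeff hM hC hB hr (hc t₀ ht₀) hP hsmall (hb t ht) (hs t ht)).memℓp⟩
    have h1 : ‖X - Y‖ ≤ 1 / 2 * ‖X - X₀‖ := by
      refine lp_norm_le_of_sum_sq_le _ (by positivity) fun u => ?_
      have h := sum_nextCoeff_sub_le hM hC hB hr (hc t ht) hP hsmall (b t) (hs t ht) (hc t₀ ht₀)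
        (norm_nonneg (X - X₀)) (fun s => lp_sum_sq_le (X - X₀) s) u
      rwa [hfix t ht] at h
    have h2 : ‖Y - X₀‖ ≤ ‖δ t‖ := by
      refine lp_norm_le_of_sum_sq_le _ (by positivity) fun u => ?_
      have h := sum_mul_sq_norm_ite_sub_le (w := fun _ : ℕ => 1) rfl (a := fun _ => (0 : V)) le_rfl
        (by simp) (x := δ t) le_rfl u
      simp only [one_mul, add_zero, sub_zero] at h
      refine (le_of_eq (Finset.sum_congr rfl fun k _ => ?_)).trans h
      have : (Y - X₀) k = nextCoeff M P (b t) t (c t₀) k - c t₀ k := rfl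
      rw [this]
      nth_rewrite 2 [← hfix t₀ ht₀]
      simp only [nextCoeff]
      congr 2
      split_ifs
      · simp only [δ, A, map_sub]; abel
      · abel
    have h3 : ‖X - X₀‖ ≤ 2 * ‖δ t‖ := by
      have := norm_sub_le_norm_sub_add_norm_sub X Y X₀
      linarith
    intro u
    exact (lp_sum_sq_le (X - X₀) u).trans (pow_le_pow_left₀ (norm_nonneg _) h3 2)
  have hsum : ∀ t ∈ s, Summable fun k => ‖c t k‖ := fun t ht => (hc t ht).summable_norm hB
  have h1 : ∀ t ∈ s, ‖discMap (c t) t - discMap (c t₀) t‖ ≤ 2 * (2 * ‖δ t‖) := by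
    intro t ht
    rw [discMap_sub (hsum t ht) (hsum t₀ ht₀) ((hs t ht).trans (by norm_num))]
    exact norm_discMap_le_two_mul (((hsum t ht).add (hsum t₀ ht₀)).of_nonneg_of_le
      (fun _ => norm_nonneg _) fun k => norm_sub_le _ _) (hs t ht) (by positivity) (hbound t ht)
  have h2 : Tendsto (fun t => discMap (c t) t - discMap (c t₀) t) (𝓝[s] t₀) (𝓝 0) := by
    rw [tendsto_zero_iff_norm_tendsto_zero]
    refine squeeze_zero' (Eventually.of_forall fun _ => norm_nonneg _)
      (eventually_mem_nhdsWithin.mono h1) ?_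
    simpa using (hδ.const_mul 2).const_mul 2
  have h3 := ((continuousOn_discMap (hsum t₀ ht₀)).mono hsub t₀ ht₀).tendsto
  have h4 := h2.add h3
  simpa [ContinuousWithinAt] using h4

end FixedPoint

section BoundaryValues

open MeasureTheory AddCircle

open scoped ComplexConjugate

variable {V : Type*} [NormedAddCommGroup V] [InnerProductSpace ℂ V] [FiniteDimensional ℂ V]

theorem inner_fourierCoeff (v : V) (Y : C(UnitAddCircle, V)) (k : ℤ) :
    inner ℂ v (fourierCoeff Y k) = fourierCoeff (fun θ => inner ℂ v (Y θ)) k := by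
  have := FiniteDimensional.complete ℂ V
  have hint : Integrable (fun θ => fourier (-k) θ • Y θ) haarAddCircle :=
    (by fun_prop : Continuous fun θ => fourier (-k) θ • Y θ).integrable_of_hasCompactSupport
      (HasCompactSupport.of_compactSpace _)
  have h := (innerSL ℂ v).integral_comp_comm hint
  simp only [fourierCoeff]
  rw [← innerSL_apply_apply, ← h]
  apply integral_congr_ae
  filter_upwards with θ
  simp

theorem hasSum_fourier_smul_fourierCoeff (Y : C(UnitAddCircle, V))
    (hY : Summable fun k => ‖fourierCoeff Y k‖) (θ : UnitAddCircle) :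
    HasSum (fun k : ℤ => fourier k θ • fourierCoeff Y k) (Y θ) := by
  have := FiniteDimensional.complete ℂ V
  have hs : Summable fun k : ℤ => fourier k θ • fourierCoeff Y k := by
    refine Summable.of_norm (hY.congr fun k => ?_)
    rw [norm_smul, fourier_apply, Circle.norm_coe, one_mul]
  convert hs.hasSum
  refine ext_inner_left ℂ fun v => ?_
  let y : C(UnitAddCircle, ℂ) := ⟨fun θ => inner ℂ v (Y θ), by fun_prop⟩
  have hcoeff : ∀ k, fourierCoeff y k = inner ℂ v (fourierCoeff Y k) := fun k =>
    (inner_fourierCoeff v Y k).symm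
  have hsy : Summable (fourierCoeff y) := by
    refine Summable.of_norm ((hY.mul_left ‖v‖).of_nonneg_of_le (fun _ => norm_nonneg _) fun k => ?_)
    rw [hcoeff]
    exact norm_inner_le_norm _ _
  have h1 := has_pointwise_sum_fourier_series_of_summable hsy θ
  have h2 := (innerSL ℂ v).hasSum hs.hasSum
  refine h1.unique (h2.congr_fun fun k => ?_) 
  simp [hcoeff, mul_comm]

omit [FiniteDimensional ℂ V] in
theorem summable_norm_int_of_sobolev {a : ℤ → V} {B : ℝ} (hB : 0 ≤ B)
    (ha : ∀ s : Finset ℤ, ∑ k ∈ s, (1 + (k : ℝ) ^ 2) * ‖a k‖ ^ 2 ≤ B ^ 2) :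
    Summable fun k => ‖a k‖ := by
  have h1 : SobolevBound B fun k : ℕ => a k := fun s => by
    simpa using ha (s.map Nat.castEmbedding)
  have h2 : SobolevBound B fun k : ℕ => a (-k) := fun s => by
    simpa using ha (s.map (Nat.castEmbedding.trans (Equiv.neg ℤ).toEmbedding))
  exact Summable.of_nat_of_neg (h1.summable_norm hB) (h2.summable_norm hB)

theorem eq_sub_conj_of_conj_eq {y : C(UnitAddCircle, ℂ)}
    (hs : Summable fun k => ‖fourierCoeff y k‖)
    (hy : ∀ θ, conj (y θ) = -(fourier 1 θ * y θ)) (θ : UnitAddCircle) :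
    y θ = discMap (fun k : ℕ => fourierCoeff y (k : ℤ)) (fourier 1 θ)
      - conj (fourier 1 θ * discMap (fun k : ℕ => fourierCoeff y (k : ℤ)) (fourier 1 θ)) := by
  have hcoeff : ∀ k : ℕ, fourierCoeff y (-(k + 1) : ℤ) = -conj (fourierCoeff y (k : ℤ)) := by
    intro k
    simp only [fourierCoeff]
    rw [← integral_conj, ← integral_neg]
    apply integral_congr_ae
    filter_upwards with θ
    simp only [smul_eq_mul, map_mul, hy, neg_neg]
    rw [fourier_add, fourier_neg (n := (k : ℤ)), Complex.conj_conj]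
    ring
  have h1 := (hasSum_fourier_smul_fourierCoeff y hs θ).nat_add_neg_add_one
  have hsn : Summable fun k : ℕ => ‖fourierCoeff y (k : ℤ)‖ :=
    hs.comp_injective Nat.cast_injective
  have h2 := (summable_discMap hsn (norm_fourier_one θ).le).of_norm.hasSum
  have h3 := (Complex.hasSum_conj'.2 (h2.mul_left (fourier 1 θ : ℂ)))
  refine h1.unique ((h2.sub h3).congr_fun fun k => ?_)
  rw [hcoeff, fourier_eq_pow, fourier_neg, fourier_add, fourier_eq_pow]
  simp only [smul_eq_mul, map_mul]
  ring

section

variable {C r B : ℝ} {M : V → V} (hM : QuadLip C r M) (hC : 0 ≤ C) (hB : 0 ≤ B)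
  (hr : 2 * (sobolevConst * B) ≤ r) {P : V →L[ℂ] V} {b : V} {t : ℂ} {c : ℕ → V}
  (hc : SobolevBound B c) (hfix : nextCoeff M P b t c = c)

include hM hC hB hr hc

theorem summable_norm_boundaryTerm_coeff :
    Summable fun k => ‖fourierCoeff (boundaryTerm M c) k‖ :=
  summable_norm_int_of_sobolev (by positivity) (sum_boundaryTerm_coeff_le hM hC hB hr hc)

include hfix

theorem discMap_eq_of_fixed {ζ : ℂ} (hζ : ‖ζ‖ ≤ 1) :
    discMap c ζ = b + P (discMap (plusCoeff M c) t) - discMap (plusCoeff M c) ζ := by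
  have := FiniteDimensional.complete ℂ V
  have hs := (summable_discMap (summable_plusCoeff hM hC hB hr hc) hζ).of_norm
  have h1 : HasSum (fun k : ℕ => ζ ^ k • (if k = 0 then b + P (discMap (plusCoeff M c) t) else 0))
      (b + P (discMap (plusCoeff M c) t)) := by
    convert hasSum_single (f := fun k : ℕ => ζ ^ k •
      (if k = 0 then b + P (discMap (plusCoeff M c) t) else 0)) 0 ?_ using 1
    · simp
    · intro k hk
      simp [hk]
  have h2 := h1.sub hs.hasSum
  conv_lhs => rw [← hfix]
  rw [discMap]
  exact (h2.congr_fun fun k => by simp only [nextCoeff, smul_sub]).tsum_eq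

theorem exists_conj_discMap_of_fixed : ∃ (q : V) (a : ℕ → V), (Summable fun k => ‖a k‖) ∧
    ∀ θ : UnitAddCircle, discMap c (fourier 1 θ) + boundaryTerm M c θ
      = q + discMap a (conj (fourier 1 θ)) := by
  let Y : C(UnitAddCircle, V) := ⟨boundaryTerm M c, continuous_boundaryTerm hM hC hB hr hc⟩
  have hs : Summable fun k => ‖fourierCoeff Y k‖ := summable_norm_boundaryTerm_coeff hM hC hB hr hc
  have ha : Summable fun k : ℕ => ‖fourierCoeff Y (-k : ℤ)‖ :=
    hs.comp_injective (i := fun k : ℕ => -(k : ℤ)) (neg_injective.comp Nat.cast_injective)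
  refine ⟨b + P (discMap (plusCoeff M c) t) - fourierCoeff Y 0,
    fun k => fourierCoeff Y (-k : ℤ), ha, fun θ => ?_⟩
  have := FiniteDimensional.complete ℂ V
  have h1 := (hasSum_fourier_smul_fourierCoeff Y hs θ).nat_add_neg
  have h2 := (summable_discMap (summable_plusCoeff hM hC hB hr hc)
    (norm_fourier_one θ).le).of_norm.hasSum
  have h3 := (summable_discMap ha (ζ := conj (fourier 1 θ))
    (by rw [RCLike.norm_conj, norm_fourier_one])).of_norm.hasSum
  have h4 := h1.unique ((h2.add h3).congr_fun fun k => by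
    rw [fourier_neg, fourier_eq_pow, map_pow]
    rfl)
  rw [discMap_eq_of_fixed hM hC hB hr hc hfix (norm_fourier_one θ).le]
  simp only [fourier_zero, one_smul] at h4
  change Y θ + _ = discMap (plusCoeff M c) _ + discMap _ _ at h4
  have h5 : boundaryTerm M c θ = discMap (plusCoeff M c) (fourier 1 θ)
    + discMap (fun k : ℕ => fourierCoeff Y (-k : ℤ)) (conj (fourier 1 θ)) - fourierCoeff Y 0 :=
    eq_sub_of_add_eq h4
  rw [h5]
  abel

theorem inner_discMap_of_fixed {e : V} (heb : inner ℂ e b = 0) (heP : ∀ x, inner ℂ e (P x) = 0)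
    {ζ : ℂ} (hζ : ‖ζ‖ ≤ 1) :
    inner ℂ e (discMap c ζ) = -inner ℂ e (discMap (plusCoeff M c) ζ) := by
  rw [discMap_eq_of_fixed hM hC hB hr hc hfix hζ, inner_sub_right, inner_add_right, heb, heP]
  simp

theorem map_discMap_of_fixed (hPP : ∀ x, P (P x) = P x) (hb : P b = b) (ht : ‖t‖ ≤ 1) :
    P (discMap c t) = b := by
  rw [discMap_eq_of_fixed hM hC hB hr hc hfix ht, map_sub, map_add, hPP, hb]
  abel

variable {e : V} (heb : inner ℂ e b = 0) (heP : ∀ x, inner ℂ e (P x) = 0) {R : V → ℝ}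
  (hR : ∀ x, inner ℂ e (M x) = -(R x : ℂ))

include heb heP hR

theorem exists_scalar_boundary_of_fixed : ∃ y : C(UnitAddCircle, ℂ),
    (Summable fun k => ‖fourierCoeff y k‖) ∧
    (∀ θ, y θ = (1 - fourier 1 θ : ℂ)⁻¹ * R ((1 - fourier 1 θ : ℂ) • discMap c (fourier 1 θ))) ∧
    ∀ ζ : ℂ, ‖ζ‖ ≤ 1 → inner ℂ e (discMap c ζ)
      = discMap (fun k : ℕ => fourierCoeff y (k : ℤ)) ζ := by
  let Y : C(UnitAddCircle, V) := ⟨boundaryTerm M c, continuous_boundaryTerm hM hC hB hr hc⟩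
  have hs : Summable fun k => ‖fourierCoeff Y k‖ := summable_norm_boundaryTerm_coeff hM hC hB hr hc
  let y : C(UnitAddCircle, ℂ) := ⟨fun θ => inner ℂ (-e) (Y θ), by fun_prop⟩
  have hcoeff : ∀ k, fourierCoeff y k = inner ℂ (-e) (fourierCoeff Y k) := fun k =>
    (inner_fourierCoeff (-e) Y k).symm
  refine ⟨y, ?_, fun θ => ?_, fun ζ hζ => ?_⟩
  · refine (hs.mul_left ‖-e‖).of_nonneg_of_le (fun _ => norm_nonneg _) fun k => ?_
    rw [hcoeff]
    exact norm_inner_le_norm _ _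
  · change inner ℂ (-e) (boundaryTerm M c θ) = _
    rw [boundaryTerm, inner_neg_left, inner_smul_right, hR]
    ring
  · rw [inner_discMap_of_fixed hM hC hB hr hc hfix heb heP hζ, ← inner_neg_left]
    have := FiniteDimensional.complete ℂ V
    have h2 := (summable_discMap (summable_plusCoeff hM hC hB hr hc) hζ).of_norm.hasSum
    have h3 := (innerSL ℂ (-e)).hasSum h2
    rw [innerSL_apply_apply] at h3
    refine h3.tsum_eq.symm.trans (tsum_congr fun k => ?_)
    simp only [hcoeff]
    rw [innerSL_apply_apply, inner_smul_right]
    rfl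

theorem two_mul_re_of_fixed (θ : UnitAddCircle) :
    R ((1 - fourier 1 θ : ℂ) • discMap c (fourier 1 θ))
      = 2 * (inner ℂ e ((1 - fourier 1 θ : ℂ) • discMap c (fourier 1 θ))).re := by
  obtain ⟨y, hys, hy, hχ⟩ := exists_scalar_boundary_of_fixed hM hC hB hr hc hfix heb heP hR
  have hconj : ∀ θ : UnitAddCircle, (fourier 1 θ : ℂ) * conj (fourier 1 θ : ℂ) = 1 := by
    intro θ
    rw [Complex.mul_conj, Complex.normSq_eq_norm_sq, norm_fourier_one]
    simp
  have h1 := eq_sub_conj_of_conj_eq hys (fun θ => by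
    rw [hy]
    rcases eq_or_ne (1 - fourier 1 θ : ℂ) 0 with h0 | h0
    · rw [h0]
      simp only [inv_zero, zero_mul, mul_zero, map_zero, neg_zero]
    · have h0' : conj (1 - fourier 1 θ : ℂ) ≠ 0 := (map_ne_zero _).2 h0
      rw [map_mul, map_inv₀, Complex.conj_ofReal]
      have : conj (1 - fourier 1 θ : ℂ) * -(fourier 1 θ) = 1 - fourier 1 θ := by
        rw [map_sub, map_one]
        linear_combination hconj θ
      generalize (R ((1 - fourier 1 θ : ℂ) • discMap c (fourier 1 θ)) : ℂ) = ρ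
      rw [inv_mul_eq_iff_eq_mul₀ h0']
      linear_combination (-(1 - fourier 1 θ : ℂ)⁻¹ * ρ) * this - ρ * mul_inv_cancel₀ h0) θ
  rw [← hχ _ (norm_fourier_one θ).le, hy] at h1
  rcases eq_or_ne (1 - fourier 1 θ : ℂ) 0 with h0 | h0
  · have hR0 : R 0 = 0 := by
      have := hR 0
      rw [hM.1, inner_zero_right] at this
      simpa using this.symm
    rw [h0]
    simp [hR0]
  · have h2 : (R ((1 - fourier 1 θ : ℂ) • discMap c (fourier 1 θ)) : ℂ)
        = (1 - fourier 1 θ : ℂ) * inner ℂ e (discMap c (fourier 1 θ))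
          + conj ((1 - fourier 1 θ : ℂ) * inner ℂ e (discMap c (fourier 1 θ))) := by
      rw [inv_mul_eq_iff_eq_mul₀ h0] at h1
      rw [h1, map_mul, map_mul, map_sub, map_one]
      linear_combination conj (inner ℂ e (discMap c (fourier 1 θ))) * hconj θ
    rw [Complex.add_conj] at h2
    rw [inner_smul_right]
    exact_mod_cast h2

theorem norm_inner_discMap_sub_le (hP : ∀ x, ‖P x‖ ≤ ‖x‖) (hb : ‖b‖ ≤ B / 2) (ht : ‖t‖ ≤ 1 / 2)
    {E : V → ℝ} {CE : ℝ} (hCE : 0 ≤ CE) (hE : ∀ x, ‖x‖ ≤ r → |E x| ≤ CE * ‖x‖ ^ 3)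
    (hRE : ∀ x, R x = ‖x‖ ^ 2 + E x) :
    ‖inner ℂ e (discMap c t) - (‖b‖ ^ 2 : ℝ)‖
      ≤ 2 * ((40 * C * sobolevConst ^ 4 + 4 * CE * sobolevConst ^ 3) * B ^ 3) := by
  obtain ⟨y, hys, hy, hχ⟩ := exists_scalar_boundary_of_fixed hM hC hB hr hc hfix heb heP hR
  have h0 := one_le_sobolevConst
  set δ := (40 * C * sobolevConst ^ 4 + 4 * CE * sobolevConst ^ 3) * B ^ 3 with hδ
  have hδ0 : 0 ≤ δ := by positivity
  have hΨ : ∀ θ : UnitAddCircle, ‖discMap c (fourier 1 θ)‖ ≤ sobolevConst * B := fun θ =>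
    hc.norm_discMap_le hB (norm_fourier_one θ).le
  have hplus := sobolevBound_plusCoeff hM hC hB hr hc
  have hdiff : ∀ θ : UnitAddCircle, ‖discMap c (fourier 1 θ) - b‖
      ≤ 10 * C * sobolevConst ^ 3 * B ^ 2 := by
    intro θ
    rw [discMap_eq_of_fixed hM hC hB hr hc hfix (norm_fourier_one θ).le]
    have e1 : b + P (discMap (plusCoeff M c) t) - discMap (plusCoeff M c) (fourier 1 θ) - b
      = P (discMap (plusCoeff M c) t) - discMap (plusCoeff M c) (fourier 1 θ) := by abel
    rw [e1]
    have h1 := hplus.norm_discMap_le (by positivity) (ht.trans (by norm_num : (1 / 2 : ℝ) ≤ 1))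
    have h2 := hplus.norm_discMap_le (by positivity) (norm_fourier_one θ).le
    have h3 := norm_sub_le (P (discMap (plusCoeff M c) t)) (discMap (plusCoeff M c) (fourier 1 θ))
    have h4 := hP (discMap (plusCoeff M c) t)
    nlinarith
  let y₀ : C(UnitAddCircle, ℂ) :=
    ⟨fun θ => (‖b‖ ^ 2 : ℝ) • ((fourier 0 θ : ℂ) - fourier (-1) θ), by fun_prop⟩
  have hpt : ∀ θ, ‖(y - y₀) θ‖ ≤ δ := by
    intro θ
    have hy₀ : y₀ θ = (‖b‖ ^ 2 : ℝ) * conj (1 - fourier 1 θ : ℂ) := by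
      change (‖b‖ ^ 2 : ℝ) • ((fourier 0 θ : ℂ) - fourier (-1) θ) = _
      rw [fourier_neg, fourier_zero, map_sub, map_one, Complex.real_smul]
    rw [ContinuousMap.sub_apply, hy₀, hy]
    have hs2 := norm_one_sub_fourier_le θ
    set s := (1 - fourier 1 θ : ℂ) with hs
    set Ψ := discMap c (fourier 1 θ) with hΨd
    rcases eq_or_ne s 0 with hs0 | hs0
    · simpa [hs0] using hδ0
    have hsp := norm_pos_iff.2 hs0
    have e1 : s⁻¹ * (R (s • Ψ) : ℂ) - (‖b‖ ^ 2 : ℝ) * conj s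
        = conj s * ((‖Ψ‖ ^ 2 - ‖b‖ ^ 2 : ℝ) : ℂ) + s⁻¹ * (E (s • Ψ) : ℂ) := by
      rw [hRE, norm_smul, mul_pow]
      have e2 : ((‖s‖ ^ 2 : ℝ) : ℂ) = s * conj s := by
        rw [Complex.mul_conj, Complex.normSq_eq_norm_sq]
      push_cast at e2 ⊢
      rw [e2]
      field_simp
      ring
    rw [e1]
    have e3 : |‖Ψ‖ ^ 2 - ‖b‖ ^ 2| ≤ (10 * C * sobolevConst ^ 3 * B ^ 2) * (2 * (sobolevConst * B)) := by
      have : ‖Ψ‖ ^ 2 - ‖b‖ ^ 2 = (‖Ψ‖ - ‖b‖) * (‖Ψ‖ + ‖b‖) := by ring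
      rw [this, abs_mul, abs_of_nonneg (by positivity : 0 ≤ ‖Ψ‖ + ‖b‖)]
      have h5 : ‖b‖ ≤ sobolevConst * B := by nlinarith
      gcongr
      · exact (abs_norm_sub_norm_le _ _).trans (hdiff θ)
      · linarith [hΨ θ]
    have e4 : ‖s⁻¹ * (E (s • Ψ) : ℂ)‖ ≤ 4 * CE * (sobolevConst * B) ^ 3 := by
      rw [norm_mul, norm_inv, Complex.norm_real, Real.norm_eq_abs, inv_mul_le_iff₀ hsp]
      have h6 : ‖s • Ψ‖ ≤ ‖s‖ * (sobolevConst * B) := by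
        rw [norm_smul]; gcongr; exact hΨ θ
      have h7 : ‖s • Ψ‖ ≤ r := h6.trans (le_trans (by gcongr) hr)
      calc |E (s • Ψ)| ≤ CE * ‖s • Ψ‖ ^ 3 := hE _ h7
        _ ≤ CE * (‖s‖ * (sobolevConst * B)) ^ 3 := by gcongr
        _ = ‖s‖ * (‖s‖ ^ 2 * CE * (sobolevConst * B) ^ 3) := by ring
        _ ≤ ‖s‖ * (2 ^ 2 * CE * (sobolevConst * B) ^ 3) := by gcongr
        _ = _ := by ring
    refine (norm_add_le _ _).trans ?_
    rw [norm_mul, RCLike.norm_conj, Complex.norm_real, Real.norm_eq_abs]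
    calc _ ≤ 2 * ((10 * C * sobolevConst ^ 3 * B ^ 2) * (2 * (sobolevConst * B)))
          + 4 * CE * (sobolevConst * B) ^ 3 := by gcongr
      _ = δ := by rw [hδ]; ring
  have hpars := hasSum_sq_norm_fourierCoeff (y - y₀)
  have hint : ∫ θ, ‖(y - y₀) θ‖ ^ 2 ∂haarAddCircle ≤ δ ^ 2 := by
    have hi : ∀ {f : UnitAddCircle → ℝ}, Continuous f → Integrable f haarAddCircle := fun hf =>
      hf.integrable_of_hasCompactSupport (HasCompactSupport.of_compactSpace _)
    calc _ ≤ ∫ θ : UnitAddCircle, δ ^ 2 ∂haarAddCircle :=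
          integral_mono (hi (by fun_prop)) (hi (by fun_prop)) fun θ =>
            pow_le_pow_left₀ (norm_nonneg _) (hpt θ) 2
      _ = _ := by simp
  have hcoeff : ∀ k : ℕ, fourierCoeff (y - y₀) (k : ℤ)
      = fourierCoeff y (k : ℤ) - if k = 0 then ((‖b‖ ^ 2 : ℝ) : ℂ) else 0 := by
    intro k
    have h1 : fourierCoeff (y - y₀) (k : ℤ) = fourierCoeff y k - fourierCoeff y₀ k :=
      fourierCoeff_sub_continuousMap y y₀ k
    have h2 : fourierCoeff y₀ k = (‖b‖ ^ 2 : ℝ) •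
        fourierCoeff (fun θ : UnitAddCircle => (fourier 0 θ : ℂ) - fourier (-1) θ) k := by
      simp only [fourierCoeff, y₀, ContinuousMap.coe_mk]
      rw [← integral_smul]
      apply integral_congr_ae
      filter_upwards with θ
      exact smul_comm _ _ _
    rw [h1, h2, fourierCoeff_sub_continuousMap, fourierCoeff_fourier, fourierCoeff_fourier,
      Pi.single_apply, Pi.single_apply, if_neg (by omega : ¬ ((k : ℤ) = -1))]
    simp
  have hchi := hχ t (ht.trans (by norm_num))
  have hsn : Summable fun k : ℕ => ‖fourierCoeff y (k : ℤ)‖ := hys.comp_injective Nat.cast_injective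
  have hs0 : HasSum (fun k : ℕ => t ^ k • if k = 0 then ((‖b‖ ^ 2 : ℝ) : ℂ) else 0)
      ((‖b‖ ^ 2 : ℝ) : ℂ) := by
    convert hasSum_single (f := fun k : ℕ => t ^ k • if k = 0 then ((‖b‖ ^ 2 : ℝ) : ℂ) else 0) 0
      ?_ using 1
    · simp
    · intro k hk
      simp [hk]
  have hsn0 : Summable fun k : ℕ => ‖if k = 0 then ((‖b‖ ^ 2 : ℝ) : ℂ) else 0‖ :=
    summable_of_ne_finset_zero (s := {0}) fun k hk => by
      simp only [Finset.mem_singleton] at hk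
      simp [hk]
  have hfin : inner ℂ e (discMap c t) - ((‖b‖ ^ 2 : ℝ) : ℂ)
      = discMap (fun k : ℕ => fourierCoeff (y - y₀) (k : ℤ)) t := by
    rw [hchi, ← hs0.tsum_eq]
    simp_rw [hcoeff]
    exact discMap_sub hsn hsn0 (ht.trans (by norm_num))
  rw [hfin]
  refine norm_discMap_le_two_mul ?_ ht hδ0 fun s => ?_
  · simp_rw [hcoeff]
    exact (hsn.add hsn0).of_nonneg_of_le (fun _ => norm_nonneg _) fun k => norm_sub_le _ _
  · have h := (sum_le_hasSum (s.map Nat.castEmbedding) (fun k _ => by positivity) hpars).trans hint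
    simpa using h

end

end BoundaryValues

section UnitDisc

open scoped ComplexConjugate

theorem norm_le_of_eventually_norm_le_sphere {F : Type*} [NormedAddCommGroup F] [NormedSpace ℂ F]
    {f : ℂ → F} (hf : DifferentiableOn ℂ f (ball 0 1)) {C : ℝ}
    (hC : ∀ ξ ∈ sphere (0 : ℂ) 1, ∀ᶠ ζ in 𝓝[ball 0 1] ξ, ‖f ζ‖ ≤ C) {z : ℂ}
    (hz : z ∈ ball (0 : ℂ) 1) : ‖f z‖ ≤ C := by
  have hC' : ∀ ξ ∈ sphere (0 : ℂ) 1, ∃ U : Set ℂ, IsOpen U ∧ ξ ∈ U ∧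
      ∀ ζ ∈ U ∩ ball 0 1, ‖f ζ‖ ≤ C := by
    intro ξ hξ
    obtain ⟨U, hU, hξU, hU2⟩ := mem_nhdsWithin.1 (hC ξ hξ)
    exact ⟨U, hU, hξU, hU2⟩
  choose! U hUo hUm hU using hC'
  let O : Set ℂ := ⋃ ξ ∈ sphere (0 : ℂ) 1, U ξ
  have hO : IsOpen O := isOpen_biUnion hUo
  have hOC : ∀ ζ ∈ O ∩ ball 0 1, ‖f ζ‖ ≤ C := by
    rintro ζ ⟨hζ, hζ1⟩
    obtain ⟨ξ, hξ, hζξ⟩ := mem_iUnion₂.1 hζ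
    exact hU ξ hξ ζ ⟨hζξ, hζ1⟩
  have hK : IsClosed ((closedBall (0 : ℂ) 1 \ O) ∪ {z}) :=
    (isClosed_closedBall.sdiff hO).union isClosed_singleton
  have hKsub : (closedBall (0 : ℂ) 1 \ O) ∪ {z} ⊆ ball 0 1 := by
    rintro ζ (⟨h1, h2⟩ | h)
    · rcases (mem_closedBall.1 h1).lt_or_eq with h3 | h3
      · exact h3
      · exact absurd (mem_iUnion₂.2 ⟨ζ, h3, hUm ζ h3⟩) h2
    · rw [h]; exact hz
  obtain ⟨ρ, hρ, hKρ⟩ := exists_lt_subset_ball hK hKsub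
  have hzρ : z ∈ ball (0 : ℂ) ρ := hKρ (Or.inr rfl)
  have hρ0 : ρ ≠ 0 := by
    rintro rfl
    simp at hzρ
  refine Complex.norm_le_of_forall_mem_frontier_norm_le (isBounded_ball (x := (0 : ℂ)) (r := ρ))
    ?_ (fun ζ hζ => ?_) (subset_closure hzρ)
  · refine DifferentiableOn.diffContOnCl (hf.mono ?_)
    rw [closure_ball _ hρ0]
    exact closedBall_subset_ball hρ
  · rw [frontier_ball _ hρ0] at hζ
    have h1 : ζ ∈ ball (0 : ℂ) 1 := sphere_subset_closedBall.trans (closedBall_subset_ball hρ) hζ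
    refine hOC ζ ⟨?_, h1⟩
    by_contra h2
    have h3 := hKρ (Or.inl ⟨ball_subset_closedBall h1, h2⟩)
    exact absurd (mem_sphere.1 hζ) (ne_of_lt (mem_ball.1 h3))

theorem re_nonneg_of_eventually_sphere {h : ℂ → ℂ} (hh : DifferentiableOn ℂ h (ball 0 1))
    (hb : ∀ ξ ∈ sphere (0 : ℂ) 1, ∀ ε > 0, ∀ᶠ ζ in 𝓝[ball 0 1] ξ, -ε ≤ (h ζ).re) {z : ℂ}
    (hz : z ∈ ball (0 : ℂ) 1) : 0 ≤ (h z).re := by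
  refine le_of_forall_pos_le_add fun ε hε => ?_
  have h1 := norm_le_of_eventually_norm_le_sphere (f := fun ζ => Complex.exp (-h ζ)) hh.neg.cexp
    (C := Real.exp ε) (fun ξ hξ => by
      filter_upwards [hb ξ hξ ε hε] with ζ hζ
      rw [Complex.norm_exp, neg_re]
      exact Real.exp_le_exp.2 (by linarith)) hz
  rw [Complex.norm_exp, neg_re, Real.exp_le_exp] at h1
  linarith

theorem eqOn_const_of_re_nonneg {h : ℂ → ℂ} (hh : DifferentiableOn ℂ h (ball 0 1))
    (hre : ∀ z ∈ ball (0 : ℂ) 1, 0 ≤ (h z).re) {w : ℂ} (hw : w ∈ ball (0 : ℂ) 1)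
    (h0 : (h w).re = 0) {z : ℂ} (hz : z ∈ ball (0 : ℂ) 1) : h z = h w := by
  have hre1 : ∀ z ∈ ball (0 : ℂ) 1, 1 ≤ ‖1 + h z - h w‖ := by
    intro z hz
    refine le_trans ?_ (Complex.re_le_norm _)
    simp only [sub_re, add_re, one_re, h0]
    linarith [hre z hz]
  have hne : ∀ z ∈ ball (0 : ℂ) 1, 1 + h z - h w ≠ 0 := fun z hz =>
    norm_pos_iff.1 (zero_lt_one.trans_le (hre1 z hz))
  have hd : DifferentiableOn ℂ (fun z => (1 + h z - h w)⁻¹) (ball 0 1) :=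
    DifferentiableOn.inv (by fun_prop) hne
  have h1 := Complex.eqOn_of_isPreconnected_of_isMaxOn_norm
    (convex_ball (0 : ℂ) 1).isPreconnected isOpen_ball hd hw
    (fun z hz => by
      simp only [mem_ofPred_eq, comp_apply, norm_inv, add_sub_cancel_right, norm_one, inv_one]
      exact inv_le_one_of_one_le₀ (hre1 z hz)) hz
  simp only [const_apply, add_sub_cancel_right, inv_one, inv_eq_one] at h1
  linear_combination h1

theorem eq_zero_of_re_nonneg_of_tendsto {h : ℂ → ℂ} (hh : DifferentiableOn ℂ h (ball 0 1))
    (hre : ∀ z ∈ ball (0 : ℂ) 1, 0 ≤ (h z).re)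
    (ht : Tendsto (fun r : ℝ => ‖h r‖ / (1 - r)) (𝓝[<] 1) (𝓝 0)) {z : ℂ}
    (hz : z ∈ ball (0 : ℂ) 1) : h z = 0 := by
  have hmem : ∀ᶠ r : ℝ in 𝓝[<] 1, 0 < r ∧ r < 1 :=
    Ioo_mem_nhdsLT (by norm_num : (0 : ℝ) < 1)
  have hsub : Tendsto (fun r : ℝ => 1 - r) (𝓝[<] 1) (𝓝 0) := by
    have : Continuous fun r : ℝ => 1 - r := by fun_prop
    simpa using (this.tendsto 1).mono_left (nhdsWithin_le_nhds (s := Iio 1))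
  have ht0 : Tendsto (fun r : ℝ => ‖h r‖) (𝓝[<] 1) (𝓝 0) := by
    have := ht.mul hsub
    rw [zero_mul] at this
    refine this.congr' ?_
    filter_upwards [hmem] with r hr
    have : 1 - r ≠ 0 := by linarith [hr.2]
    field_simp
  have hball : ∀ r : ℝ, 0 < r ∧ r < 1 → (r : ℂ) ∈ ball (0 : ℂ) 1 := by
    intro r hr
    rw [mem_ball_zero_iff, Complex.norm_real, Real.norm_eq_abs, abs_of_pos hr.1]
    exact hr.2
  have h00 := hre 0 (mem_ball_self zero_lt_one)
  rcases h00.eq_or_lt with h0 | h0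
  · have hconst := fun z hz => eqOn_const_of_re_nonneg hh hre
      (mem_ball_self zero_lt_one) h0.symm (z := z) hz
    rw [hconst z hz]
    have : Tendsto (fun r : ℝ => ‖h r‖) (𝓝[<] 1) (𝓝 ‖h 0‖) := by
      refine tendsto_const_nhds.congr' ?_
      filter_upwards [hmem] with r hr
      rw [hconst _ (hball r hr)]
    exact norm_eq_zero.1 (tendsto_nhds_unique this ht0)
  · exfalso
    set A := h 0 with hA
    have hne : ∀ z ∈ ball (0 : ℂ) 1, h z + conj A ≠ 0 := by
      intro z hz hcon
      have := congrArg Complex.re hcon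
      simp only [add_re, conj_re, zero_re] at this
      linarith [hre z hz]
    have key : ∀ z ∈ ball (0 : ℂ) 1, ‖h z + conj A‖ ^ 2 - ‖h z - A‖ ^ 2 = 4 * (h z).re * A.re := by
      intro z _
      rw [← Complex.normSq_eq_norm_sq, ← Complex.normSq_eq_norm_sq, Complex.normSq_apply,
        Complex.normSq_apply]
      simp only [add_re, conj_re, add_im, conj_im, sub_re, sub_im]
      ring
    let q : ℂ → ℂ := fun z => (h z - A) / (h z + conj A)
    have hq : DifferentiableOn ℂ q (ball 0 1) :=
      DifferentiableOn.div (by fun_prop) (by fun_prop) hne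
    have hq0 : q 0 = 0 := by simp [q, hA]
    have hle : ∀ z ∈ ball (0 : ℂ) 1, ‖h z - A‖ ≤ ‖h z + conj A‖ := by
      intro z hz
      refine (abs_le_of_sq_le_sq' ?_ (norm_nonneg _)).2
      nlinarith [key z hz, mul_nonneg (hre z hz) h00]
    have hqm : MapsTo q (ball 0 1) (closedBall 0 1) := by
      intro z hz
      rw [mem_closedBall_zero_iff, norm_div]
      exact div_le_one_of_le₀ (hle z hz) (norm_nonneg _)
    have hbound : ∀ r : ℝ, 0 < r ∧ r < 1 →
        ‖h r + conj A‖ ^ 2 ≤ 4 * A.re * (‖h r‖ / (1 - r)) := by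
      intro r hr
      have hrb := hball r hr
      have hrn : ‖(r : ℂ)‖ = r := by
        rw [Complex.norm_real, Real.norm_eq_abs, abs_of_pos hr.1]
      have hs : ‖q r‖ ≤ r := by
        have := Complex.norm_le_norm_of_mapsTo_ball hq hqm hq0 (by rw [hrn]; exact hr.2)
        rwa [hrn] at this
      have hp := norm_pos_iff.2 (hne r hrb)
      have hs2 : ‖h r - A‖ ≤ r * ‖h r + conj A‖ := by
        have : ‖q r‖ = ‖h r - A‖ / ‖h r + conj A‖ := norm_div _ _
        rw [this, div_le_iff₀ hp] at hs
        exact hs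
      have h1 : 0 < 1 - r := by linarith [hr.2]
      rw [← mul_div_assoc, le_div_iff₀ h1]
      have h2 : ‖h r - A‖ ^ 2 ≤ r * ‖h r + conj A‖ ^ 2 := by
        have h3 : ‖h r - A‖ ^ 2 ≤ (r * ‖h r + conj A‖) ^ 2 := by gcongr
        have h4 : r ^ 2 ≤ r := by nlinarith [hr.1, hr.2]
        nlinarith [mul_le_mul_of_nonneg_right h4 (sq_nonneg ‖h r + conj A‖)]
      have h5 := key r hrb
      have h6 := Complex.re_le_norm (h r)
      nlinarith
    have hl : Tendsto (fun r : ℝ => ‖h r + conj A‖ ^ 2) (𝓝[<] 1) (𝓝 (‖conj A‖ ^ 2)) := by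
      have h1 : Tendsto (fun r : ℝ => h r) (𝓝[<] 1) (𝓝 0) := tendsto_zero_iff_norm_tendsto_zero.2 ht0
      have h2 := ((h1.add_const (conj A)).norm.pow 2)
      simpa using h2
    have hr' := ht.const_mul (4 * A.re)
    have hfin := le_of_tendsto_of_tendsto hl hr' (hmem.mono hbound)
    rw [mul_zero, RCLike.norm_conj] at hfin
    have : 0 < ‖A‖ := h0.trans_le (Complex.re_le_norm A)
    nlinarith

end UnitDisc

section ConjDisc

open MeasureTheory AddCircle

open scoped ComplexConjugate

variable {V : Type*} [NormedAddCommGroup V] [InnerProductSpace ℂ V] [FiniteDimensional ℂ V]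

theorem inner_discMap_conj {a : ℕ → V} (ha : Summable fun k => ‖a k‖) (v : V) {ζ : ℂ}
    (hζ : ‖ζ‖ ≤ 1) :
    inner ℂ (discMap a (conj ζ)) v = discMap (fun k => inner ℂ (a k) v) ζ := by
  have := FiniteDimensional.complete ℂ V
  have h1 := (summable_discMap ha (ζ := conj ζ) (by rwa [RCLike.norm_conj])).of_norm.hasSum
  have h2 := (innerSL ℂ v).hasSum h1
  rw [innerSL_apply_apply] at h2
  have h3 := (Complex.hasSum_conj'.2 h2).tsum_eq
  rw [inner_conj_symm] at h3
  rw [discMap, discMap, ← h3]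
  refine tsum_congr fun k => ?_
  rw [innerSL_apply_apply, inner_smul_right, map_mul, inner_conj_symm, map_pow, Complex.conj_conj,
    smul_eq_mul]

omit [FiniteDimensional ℂ V] in
theorem summable_norm_inner {a : ℕ → V} (ha : Summable fun k => ‖a k‖) (v : V) :
    Summable fun k => ‖inner ℂ (a k) v‖ :=
  (ha.mul_right ‖v‖).of_nonneg_of_le (fun _ => norm_nonneg _) fun _ => norm_inner_le_norm _ _

theorem differentiableOn_inner_discMap_conj {a : ℕ → V} (ha : Summable fun k => ‖a k‖)
    {v : ℂ → V} (hv : DifferentiableOn ℂ v (ball 0 1)) :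
    DifferentiableOn ℂ (fun ζ => inner ℂ (discMap a (conj ζ)) (v ζ)) (ball 0 1) := by
  let b := stdOrthonormalBasis ℂ V
  have h1 : DifferentiableOn ℂ (fun ζ => ∑ i, discMap (fun k => inner ℂ (a k) (b i)) ζ
      * inner ℂ (b i) (v ζ)) (ball 0 1) := by
    refine DifferentiableOn.fun_sum fun i _ => ?_
    exact (differentiableOn_discMap (summable_norm_inner ha (b i))).mul
      ((innerSL ℂ (b i)).differentiable.comp_differentiableOn hv)
  refine h1.congr fun ζ hζ => ?_
  rw [← b.sum_inner_mul_inner]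
  refine Finset.sum_congr rfl fun i _ => ?_
  rw [inner_discMap_conj ha _ (mem_ball_zero_iff.1 hζ).le]

theorem continuousOn_discMap_conj {a : ℕ → V} (ha : Summable fun k => ‖a k‖) :
    ContinuousOn (fun ζ => discMap a (conj ζ)) (closedBall 0 1) :=
  (continuousOn_discMap ha).comp Complex.continuous_conj.continuousOn fun ζ hζ => by
    simpa using hζ

theorem exists_fourier_one_eq {ξ : ℂ} (hξ : ξ ∈ sphere (0 : ℂ) 1) :
    ∃ θ : UnitAddCircle, fourier 1 θ = ξ := by
  let z : Circle := ⟨ξ, by simpa [Submonoid.unitSphere] using hξ⟩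
  obtain ⟨θ, hθ⟩ := (AddCircle.homeomorphCircle (T := 1) one_ne_zero).surjective z
  refine ⟨θ, ?_⟩
  rw [AddCircle.homeomorphCircle_apply] at hθ
  rw [fourier_one, hθ]

theorem exists_boundaryTerm_split {C r B : ℝ} {M : V → V} (hM : QuadLip C r M) (hC : 0 ≤ C)
    (hB : 0 ≤ B) (hr : 2 * (sobolevConst * B) ≤ r) {c : ℕ → V} (hc : SobolevBound B c) :
    ∃ a a' : ℕ → V, (Summable fun k => ‖a k‖) ∧ (Summable fun k => ‖a' k‖) ∧
      ∀ θ : UnitAddCircle, boundaryTerm M c θ = discMap a (fourier 1 θ)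
        + conj (fourier 1 θ : ℂ) • discMap a' (conj (fourier 1 θ)) := by
  let Y : C(UnitAddCircle, V) := ⟨boundaryTerm M c, continuous_boundaryTerm hM hC hB hr hc⟩
  have hs : Summable fun k => ‖fourierCoeff Y k‖ := summable_norm_boundaryTerm_coeff hM hC hB hr hc
  have ha : Summable fun k : ℕ => ‖fourierCoeff Y (k : ℤ)‖ := hs.comp_injective Nat.cast_injective
  have ha' : Summable fun k : ℕ => ‖fourierCoeff Y (-(k + 1) : ℤ)‖ :=
    hs.comp_injective (i := fun k : ℕ => (-(k + 1) : ℤ)) fun i j hij => by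
      simpa using hij
  refine ⟨_, _, ha, ha', fun θ => ?_⟩
  have := FiniteDimensional.complete ℂ V
  have h1 := (hasSum_fourier_smul_fourierCoeff Y hs θ).nat_add_neg_add_one
  have h2 := (summable_discMap ha (norm_fourier_one θ).le).of_norm.hasSum
  have h3 := (summable_discMap ha' (ζ := conj (fourier 1 θ))
    (by rw [RCLike.norm_conj, norm_fourier_one])).of_norm.hasSum.const_smul (conj (fourier 1 θ : ℂ))
  refine h1.unique ((h2.add h3).congr_fun fun k => ?_)
  rw [fourier_neg, fourier_eq_pow, fourier_add, fourier_eq_pow, smul_smul, map_mul, map_pow,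
    mul_comm (conj _)]

end ConjDisc

section Model

open AddCircle

open scoped ComplexConjugate

variable {V : Type*} [NormedAddCommGroup V] [InnerProductSpace ℂ V]

/-- The component orthogonal to the unit vector `e`. -/
def perp (e : V) : V →L[ℂ] V :=
  ContinuousLinearMap.id ℂ V - (innerSL ℂ e).smulRight e

theorem perp_apply (e x : V) : perp e x = x - inner ℂ e x • e := rfl

theorem perp_add_inner_smul (e x : V) : perp e x + inner ℂ e x • e = x := by
  rw [perp_apply, sub_add_cancel]

section Perp

variable {e : V} (he : ‖e‖ = 1)

include he

theorem inner_self_of_norm_eq_one : inner ℂ e e = (1 : ℂ) := by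
  rw [inner_self_eq_norm_sq_to_K, he]; simp

theorem inner_perp (x : V) : inner ℂ e (perp e x) = 0 := by
  rw [perp_apply, inner_sub_right, inner_smul_right, inner_self_of_norm_eq_one he, mul_one, sub_self]

theorem inner_perp_left (x : V) : inner ℂ (perp e x) e = 0 := by
  rw [← inner_conj_symm, inner_perp he, map_zero]

theorem perp_self : perp e e = 0 := by
  rw [perp_apply, inner_self_of_norm_eq_one he, one_smul, sub_self]

theorem perp_perp (x : V) : perp e (perp e x) = perp e x := by
  rw [perp_apply, inner_perp he, zero_smul, sub_zero]

theorem norm_sq_perp_add (x : V) : ‖x‖ ^ 2 = ‖perp e x‖ ^ 2 + ‖inner ℂ e x‖ ^ 2 := by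
  conv_lhs => rw [← perp_add_inner_smul e x]
  rw [norm_add_sq (𝕜 := ℂ), inner_smul_right, inner_perp_left he, norm_smul, he]
  simp

theorem norm_perp_le (x : V) : ‖perp e x‖ ≤ ‖x‖ := by
  refine le_of_sq_le_sq ?_ (norm_nonneg x) 
  rw [norm_sq_perp_add he x]
  nlinarith [sq_nonneg ‖inner ℂ e x‖]

theorem inner_perp_comm (x y : V) : inner ℂ (perp e x) y = inner ℂ (perp e x) (perp e y) := by
  rw [perp_apply e y, inner_sub_right, inner_smul_right, inner_perp_left he, mul_zero, sub_zero]

end Perp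

/-- Minus the `e`-component of the gradient of the model defining function. -/
def modelU (e : V) (η : V → V) (x : V) : ℂ := 1 - inner ℂ e x - inner ℂ e (η x)

/-- The nonlinearity of the boundary value problem for extremal discs. -/
def modelMap (e : V) (E : V → ℝ) (η : V → V) (x : V) : V :=
  (modelU e η x)⁻¹ • perp e (x + η x) - perp e x - ((‖x‖ ^ 2 + E x : ℝ) : ℂ) • e

/-- The nonlinear part of the logarithm of `modelU`, as a map into `V`. -/
def modelLog (e : V) (η : V → V) (x : V) : V := (Complex.log (modelU e η x) + inner ℂ e x) • e

/-- The model defining function. -/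
def modelRho (e : V) (E : V → ℝ) (x : V) : ℝ := ‖x‖ ^ 2 - 2 * (inner ℂ e x).re + E x

/-- The gradient of the model defining function. -/
def modelGrad (e : V) (η : V → V) (x : V) : V := x - e + η x

/-- A defining function `‖x‖² - 2 Re ⟨e, x⟩ + E x` whose error term `E`, with gradient `2 η`, is
small in the ball of radius `r`. -/
structure ModelData (e : V) (E : V → ℝ) (η : V → V) (C r : ℝ) : Prop where
  r_pos : 0 < r
  C_nonneg : 0 ≤ C
  norm_e : ‖e‖ = 1
  abs_E_le : ∀ x, ‖x‖ ≤ r → |E x| ≤ C * ‖x‖ ^ 3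
  taylor : ∀ x y, ‖x‖ ≤ r → ‖y‖ ≤ r →
    |E y - E x - 2 * (inner ℂ (η x) (y - x)).re| ≤ 1 / 2 * ‖y - x‖ ^ 2
  continuousOn : ContinuousOn η (closedBall 0 r)
  modelU_ne : ∀ x, ‖x‖ ≤ r → modelU e η x ≠ 0
  quadLip_map : QuadLip C r (modelMap e E η)
  quadLip_log : QuadLip C r (modelLog e η)

section

variable {e : V} {E : V → ℝ} {η : V → V} {C r : ℝ} (h : ModelData e E η C r)

include h

theorem ModelData.inner_modelMap (x : V) :
    inner ℂ e (modelMap e E η x) = -((‖x‖ ^ 2 + E x : ℝ) : ℂ) := by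
  rw [modelMap, inner_sub_right, inner_sub_right, inner_smul_right, inner_smul_right,
    inner_perp h.norm_e, inner_perp h.norm_e, inner_self_of_norm_eq_one h.norm_e]
  simp

omit h in
theorem modelGrad_eq (x : V) :
    modelGrad e η x = perp e (x + η x) - modelU e η x • e := by
  rw [perp_apply, modelU, modelGrad, inner_add_right, sub_smul, sub_smul, add_smul, one_smul]
  abel

theorem ModelData.convex_ineq {x y : V} (hx : ‖x‖ ≤ r) (hy : ‖y‖ ≤ r) :
    modelRho e E x + 2 * (inner ℂ (modelGrad e η x) (y - x)).re + 1 / 2 * ‖y - x‖ ^ 2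
      ≤ modelRho e E y := by
  have h1 := (abs_le.1 (h.taylor x y hx hy)).1
  have h2 : ‖y‖ ^ 2 = ‖x‖ ^ 2 + 2 * (inner ℂ x (y - x)).re + ‖y - x‖ ^ 2 := by
    have := norm_add_sq (𝕜 := ℂ) x (y - x)
    rwa [add_sub_cancel] at this
  rw [modelRho, modelRho, modelGrad, inner_add_left, inner_sub_left, h2]
  have h3 : inner ℂ e (y - x) = inner ℂ e y - inner ℂ e x := inner_sub_right _ _ _
  rw [h3, Complex.add_re, Complex.sub_re, Complex.sub_re]
  linarith

theorem ModelData.continuousOn_modelGrad : ContinuousOn (modelGrad e η) (closedBall 0 r) :=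
  (continuousOn_id.sub continuousOn_const).add h.continuousOn

theorem ModelData.continuousOn_modelRho : ContinuousOn (modelRho e E) (closedBall 0 r) := by
  have hE : ContinuousOn E (closedBall 0 r) := by
    intro x hx
    have hx' : ‖x‖ ≤ r := mem_closedBall_zero_iff.1 hx
    rw [ContinuousWithinAt, tendsto_iff_dist_tendsto_zero]
    have hlim : Tendsto (fun y => 2 * ‖η x‖ * ‖y - x‖ + 1 / 2 * ‖y - x‖ ^ 2)
        (𝓝[closedBall 0 r] x) (𝓝 0) := by
      have : Continuous fun y => 2 * ‖η x‖ * ‖y - x‖ + 1 / 2 * ‖y - x‖ ^ 2 := by fun_prop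
      simpa using this.continuousWithinAt (s := closedBall 0 r) (x := x) |>.tendsto
    refine squeeze_zero' (Eventually.of_forall fun _ => dist_nonneg) ?_ hlim
    filter_upwards [self_mem_nhdsWithin] with y hy
    have h1 := h.taylor x y hx' (mem_closedBall_zero_iff.1 hy)
    have h2 := (Complex.abs_re_le_norm _).trans (norm_inner_le_norm (𝕜 := ℂ) (η x) (y - x))
    rw [Real.dist_eq]
    calc |E y - E x| = |(E y - E x - 2 * (inner ℂ (η x) (y - x)).re)
          + 2 * (inner ℂ (η x) (y - x)).re| := by ring_nf
      _ ≤ _ := abs_add_le _ _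
      _ ≤ _ := by rw [abs_mul, abs_two]; nlinarith
  have h1 : Continuous fun x : V => ‖x‖ ^ 2 - 2 * (inner ℂ e x).re := by fun_prop
  exact h1.continuousOn.add hE

end

theorem conj_one_sub_of_norm_eq_one {ξ : ℂ} (hξ : ‖ξ‖ = 1) : conj (1 - ξ) = -(conj ξ) * (1 - ξ) := by
  have : conj ξ * ξ = 1 := by rw [Complex.conj_mul', hξ]; simp
  rw [map_sub, map_one]
  linear_combination -this

theorem one_sub_sq_of_norm_eq_one {ξ : ℂ} (hξ : ‖ξ‖ = 1) :
    conj (1 - ξ) ^ 2 = -(conj ξ) * (‖1 - ξ‖ ^ 2 : ℝ) := by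
  have h1 := conj_one_sub_of_norm_eq_one hξ
  have h2 := Complex.conj_mul' (1 - ξ)
  push_cast
  rw [← h2, sq]
  nth_rewrite 1 [h1]
  ring

section Multiplier

variable [FiniteDimensional ℂ V] {e : V} {E : V → ℝ} {η : V → V} {C r : ℝ}
  (h : ModelData e E η C r) {B : ℝ} (hB : 0 ≤ B) (hr : 2 * (sobolevConst * B) ≤ r)
  {c : ℕ → V} (hc : SobolevBound B c)

include hB hc in
theorem norm_one_sub_smul_discMap_le {ζ : ℂ} (hζ : ‖ζ‖ ≤ 1) :
    ‖(1 - ζ) • discMap c ζ‖ ≤ ‖1 - ζ‖ * (sobolevConst * B) := by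
  rw [norm_smul]
  exact mul_le_mul_of_nonneg_left (hc.norm_discMap_le hB hζ) (norm_nonneg _)

include hB hr hc in
theorem norm_one_sub_smul_discMap_le_radius {ζ : ℂ} (hζ : ‖ζ‖ ≤ 1) :
    ‖(1 - ζ) • discMap c ζ‖ ≤ r := by
  refine (norm_one_sub_smul_discMap_le hB hc hζ).trans (le_trans ?_ hr)
  have h1 : ‖1 - ζ‖ ≤ 2 := (norm_sub_le _ _).trans (by rw [norm_one]; linarith)
  have h2 : 0 ≤ sobolevConst * B := mul_nonneg (zero_le_one.trans one_le_sobolevConst) hB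
  exact mul_le_mul_of_nonneg_right h1 h2

include h hB hr hc

/-- An outer-type function whose argument on the circle is that of the conjugate of `modelU`. -/
theorem exists_exp_eq_conj_modelU : ∃ H : ℂ → ℂ, ContinuousOn H (closedBall 0 1) ∧
    DifferentiableOn ℂ H (ball 0 1) ∧ ∀ ξ ∈ sphere (0 : ℂ) 1, ξ ≠ 1 →
      ∃ κ : ℝ, 0 < κ ∧ Complex.exp (H ξ) = κ * conj (modelU e η ((1 - ξ) • discMap c ξ)) := by
  obtain ⟨a, a', ha, ha', hsplit⟩ := exists_boundaryTerm_split h.quadLip_log h.C_nonneg hB hr hc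
  have hcs := hc.summable_norm hB
  refine ⟨fun ζ => (1 - ζ) * (inner ℂ e (discMap c ζ) - inner ℂ e (discMap a ζ)
    - inner ℂ (discMap a' (conj ζ)) e), ?_, ?_, ?_⟩
  · refine (continuousOn_const.sub continuousOn_id).mul
      (((continuousOn_const.inner (𝕜 := ℂ) (continuousOn_discMap hcs)).sub
        (continuousOn_const.inner (𝕜 := ℂ) (continuousOn_discMap ha))).sub
        ((continuousOn_discMap_conj ha').inner (𝕜 := ℂ) continuousOn_const))
  · refine ((differentiableOn_const 1).sub differentiableOn_id).mul
      ((((innerSL ℂ e).differentiable.comp_differentiableOn (differentiableOn_discMap hcs)).sub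
        ((innerSL ℂ e).differentiable.comp_differentiableOn (differentiableOn_discMap ha))).sub
        (differentiableOn_inner_discMap_conj ha' (differentiableOn_const e)))
  · intro ξ hξ hξ1
    have hn : ‖ξ‖ = 1 := by simpa using hξ
    have hs : 1 - ξ ≠ 0 := sub_ne_zero.2 hξ1.symm
    set φ := (1 - ξ) • discMap c ξ with hφ
    obtain ⟨θ, hθ⟩ := exists_fourier_one_eq hξ
    have h1 := hsplit θ
    rw [boundaryTerm, hθ, ← hφ, modelLog, smul_smul] at h1
    have h2 := congrArg (inner ℂ e) h1
    rw [inner_smul_right, inner_self_of_norm_eq_one h.norm_e, mul_one, inner_add_right,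
      inner_smul_right e (discMap a' (conj ξ))] at h2
    have hφe : inner ℂ e φ = (1 - ξ) * inner ℂ e (discMap c ξ) := inner_smul_right _ _ _
    have hlog : Complex.log (modelU e η φ) = (1 - ξ) * (inner ℂ e (discMap a ξ)
        - inner ℂ e (discMap c ξ)) - conj ((1 - ξ) * inner ℂ (discMap a' (conj ξ)) e) := by
      rw [map_mul, inner_conj_symm, conj_one_sub_of_norm_eq_one hn]
      rw [inv_mul_eq_iff_eq_mul₀ hs, hφe] at h2
      linear_combination h2
    have hu := h.modelU_ne φ (norm_one_sub_smul_discMap_le_radius hB hr hc hn.le)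
    set H := (1 - ξ) * (inner ℂ e (discMap c ξ) - inner ℂ e (discMap a ξ)
      - inner ℂ (discMap a' (conj ξ)) e) with hH
    set q := (1 - ξ) * inner ℂ (discMap a' (conj ξ)) e
    have hsum : H = -conj q - q - Complex.log (modelU e η φ) := by
      rw [hlog, hH]; ring
    have hreal : H = ((2 * -q.re - 2 * (Complex.log (modelU e η φ)).re : ℝ) : ℂ)
        + conj (Complex.log (modelU e η φ)) := by
      rw [hsum]
      apply Complex.ext <;> simp
      ring
    refine ⟨Real.exp (2 * -q.re - 2 * (Complex.log (modelU e η φ)).re), Real.exp_pos _, ?_⟩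
    change Complex.exp H = _
    rw [hreal, Complex.exp_add, Complex.exp_conj, Complex.exp_log hu, Complex.ofReal_exp]

variable {b : V} {t : ℂ} (hfix : nextCoeff (modelMap e E η) (perp e) b t c = c)

include hfix

theorem exists_multiplier : ∃ Γ : ℂ → V, ContinuousOn Γ (closedBall 0 1) ∧
    (∀ v : ℂ → V, DifferentiableOn ℂ v (ball 0 1) →
      DifferentiableOn ℂ (fun ζ => inner ℂ (Γ ζ) (v ζ)) (ball 0 1)) ∧
    ∀ ξ ∈ sphere (0 : ℂ) 1, ξ ≠ 1 → ∃ μ : ℝ, 0 < μ ∧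
      (conj (1 - ξ) ^ 2)⁻¹ • Γ ξ = (μ : ℂ) • modelGrad e η ((1 - ξ) • discMap c ξ) := by
  obtain ⟨H, hHc, hHd, hH⟩ := exists_exp_eq_conj_modelU h hB hr hc
  obtain ⟨q, a, ha, hN⟩ := exists_conj_discMap_of_fixed h.quadLip_map h.C_nonneg hB hr hc hfix
  have hcs := hc.summable_norm hB
  refine ⟨fun ζ => conj (Complex.exp (H ζ)) •
    (conj (1 - ζ) • perp e (q + discMap a (conj ζ)) + conj ζ • e), ?_, ?_, ?_⟩
  · have hconj : ContinuousOn (fun ζ : ℂ => conj ζ) (closedBall (0 : ℂ) 1) :=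
      Complex.continuous_conj.continuousOn
    refine (Complex.continuous_conj.comp_continuousOn
      (Complex.continuous_exp.comp_continuousOn hHc)).smul (ContinuousOn.add ?_ ?_)
    · refine (Complex.continuous_conj.comp_continuousOn
        (continuousOn_const.sub continuousOn_id)).smul ?_
      exact (perp e).continuous.comp_continuousOn
        (continuousOn_const.add (continuousOn_discMap_conj ha))
    · exact hconj.smul continuousOn_const
  · intro v hv
    have h1 : DifferentiableOn ℂ (fun ζ => Complex.exp (H ζ) *
        ((1 - ζ) * (inner ℂ q (perp e (v ζ)) + inner ℂ (discMap a (conj ζ)) (perp e (v ζ)))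
          + ζ * inner ℂ e (v ζ))) (ball 0 1) := by
      have hPv : DifferentiableOn ℂ (fun ζ => perp e (v ζ)) (ball 0 1) :=
        (perp e).differentiable.comp_differentiableOn hv
      refine (hHd.cexp).mul (DifferentiableOn.add ?_ ?_)
      · exact ((differentiableOn_const 1).sub differentiableOn_id).mul
          (((innerSL ℂ q).differentiable.comp_differentiableOn hPv).add
            (differentiableOn_inner_discMap_conj ha hPv))
      · exact differentiableOn_id.mul ((innerSL ℂ e).differentiable.comp_differentiableOn hv)
    refine h1.congr fun ζ _ => ?_
    have hP : ∀ x y : V, inner ℂ (perp e x) y = inner ℂ x (perp e y) := by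
      intro x y
      rw [inner_perp_comm h.norm_e, perp_apply e x, inner_sub_left, inner_smul_left,
        inner_perp h.norm_e, mul_zero, sub_zero]
    rw [inner_smul_left, inner_add_left, inner_smul_left, inner_smul_left, hP, inner_add_left]
    simp only [Complex.conj_conj]
  · intro ξ hξ hξ1
    have hn : ‖ξ‖ = 1 := by simpa using hξ
    have hs : 1 - ξ ≠ 0 := sub_ne_zero.2 hξ1.symm
    obtain ⟨κ, hκ, hexp⟩ := hH ξ hξ hξ1
    set φ := (1 - ξ) • discMap c ξ with hφ
    have hu := h.modelU_ne φ (norm_one_sub_smul_discMap_le_radius hB hr hc hn.le)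
    obtain ⟨θ, hθ⟩ := exists_fourier_one_eq hξ
    have hNθ := hN θ
    rw [boundaryTerm, hθ, ← hφ] at hNθ
    have hPN : perp e (q + discMap a (conj ξ))
        = (1 - ξ)⁻¹ • (modelU e η φ)⁻¹ • perp e (φ + η φ) := by
      rw [← hNθ, map_add, map_smul (perp e) (1 - ξ)⁻¹, modelMap, map_sub, map_sub,
        map_smul (perp e) (modelU e η φ)⁻¹, map_smul (perp e) (((‖φ‖ ^ 2 + E φ : ℝ) : ℂ)),
        perp_perp h.norm_e, perp_perp h.norm_e, perp_self h.norm_e, smul_zero, sub_zero, smul_sub]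
      have : (1 - ξ)⁻¹ • perp e φ = perp e (discMap c ξ) := by
        rw [hφ, map_smul, inv_smul_smul₀ hs]
      rw [this]; abel
    refine ⟨κ / ‖1 - ξ‖ ^ 2, div_pos hκ (by positivity), ?_⟩
    have hξ0 : conj ξ ≠ 0 := by
      rw [Ne, ← norm_eq_zero, RCLike.norm_conj, hn]; exact one_ne_zero
    have hsn : ((‖1 - ξ‖ : ℝ) : ℂ) ≠ 0 := by exact_mod_cast norm_ne_zero_iff.2 hs
    change (conj (1 - ξ) ^ 2)⁻¹ • (conj (Complex.exp (H ξ)) •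
      (conj (1 - ξ) • perp e (q + discMap a (conj ξ)) + conj ξ • e)) = _
    rw [hexp, hPN, one_sub_sq_of_norm_eq_one hn, conj_one_sub_of_norm_eq_one hn,
      modelGrad_eq, map_mul, Complex.conj_conj, Complex.conj_ofReal]
    simp only [smul_add, smul_sub, smul_smul]
    rw [sub_eq_add_neg (((κ / ‖1 - ξ‖ ^ 2 : ℝ) : ℂ) • perp e (φ + η φ)), ← neg_smul]
    congr 2
    · push_cast; field_simp
    · push_cast; field_simp

end Multiplier

end Model

section Extremal

open AddCircle

open scoped ComplexConjugate

variable {V : Type*} [NormedAddCommGroup V] [InnerProductSpace ℂ V] [FiniteDimensional ℂ V]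
  {e : V} {E : V → ℝ} {η : V → V} {C r : ℝ}
  (h : ModelData e E η C r) {B : ℝ} (hB : 0 ≤ B) (hr : 2 * (sobolevConst * B) ≤ r)
  {c : ℕ → V} (hc : SobolevBound B c)

include hB hc

theorem continuousOn_one_sub_smul_discMap :
    ContinuousOn (fun ζ : ℂ => (1 - ζ) • discMap c ζ) (closedBall 0 1) :=
  (continuousOn_const.sub continuousOn_id).smul (continuousOn_discMap (hc.summable_norm hB))

theorem differentiableOn_one_sub_smul_discMap :
    DifferentiableOn ℂ (fun ζ : ℂ => (1 - ζ) • discMap c ζ) (ball 0 1) :=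
  ((differentiableOn_const 1).sub differentiableOn_id).smul
    (differentiableOn_discMap (hc.summable_norm hB))

variable {b : V} (hb : inner ℂ e b = 0) {t : ℂ}
  (hfix : nextCoeff (modelMap e E η) (perp e) b t c = c)

include h hr hb hfix

theorem modelRho_eq_zero_of_fixed {ξ : ℂ} (hξ : ξ ∈ sphere (0 : ℂ) 1) :
    modelRho e E ((1 - ξ) • discMap c ξ) = 0 := by
  obtain ⟨θ, rfl⟩ := exists_fourier_one_eq hξ
  have := two_mul_re_of_fixed h.quadLip_map h.C_nonneg hB hr hc hfix hb
    (inner_perp h.norm_e) h.inner_modelMap θ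
  rw [modelRho]
  linarith

theorem modelRho_neg_of_fixed (hb0 : b ≠ 0) (ht : ‖t‖ < 1) {ζ : ℂ} (hζ : ζ ∈ ball (0 : ℂ) 1) :
    modelRho e E ((1 - ζ) • discMap c ζ) < 0 := by
  set φ : ℂ → V := fun ζ => (1 - ζ) • discMap c ζ with hφ
  have hφc := continuousOn_one_sub_smul_discMap hB hc
  have hφd := differentiableOn_one_sub_smul_discMap hB hc
  have hφr : ∀ z : ℂ, ‖z‖ ≤ 1 → ‖φ z‖ ≤ r := fun z hz =>
    norm_one_sub_smul_discMap_le_radius hB hr hc hz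
  set k : ℂ → ℂ := fun z => -2 * inner ℂ (modelGrad e η (φ ζ)) (φ z - φ ζ)
    - (modelRho e E (φ ζ) : ℂ) with hk
  have hζ1 : ‖ζ‖ < 1 := mem_ball_zero_iff.1 hζ
  have hkd : DifferentiableOn ℂ k (ball 0 1) :=
    (((innerSL ℂ (modelGrad e η (φ ζ))).differentiable.comp_differentiableOn
      (hφd.sub (differentiableOn_const _))).const_mul (-2)).sub (differentiableOn_const _)
  have hkc : ContinuousOn k (closedBall 0 1) :=
    (continuousOn_const.mul (continuousOn_const.inner (𝕜 := ℂ)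
      (hφc.sub continuousOn_const))).sub continuousOn_const
  have hkre : ∀ ξ ∈ sphere (0 : ℂ) 1, 1 / 2 * ‖φ ξ - φ ζ‖ ^ 2 ≤ (k ξ).re := by
    intro ξ hξ
    have h1 := h.convex_ineq (hφr ζ hζ1.le) (hφr ξ (mem_sphere_zero_iff_norm.1 hξ).le)
    rw [modelRho_eq_zero_of_fixed h hB hr hc hb hfix hξ] at h1
    have h2 : (k ξ).re = -2 * (inner ℂ (modelGrad e η (φ ζ)) (φ ξ - φ ζ)).re
        - modelRho e E (φ ζ) := by
      simp [hk]
    rw [h2]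
    linarith
  have hlim : ∀ ξ ∈ sphere (0 : ℂ) 1, Tendsto k (𝓝[ball 0 1] ξ) (𝓝 (k ξ)) := fun ξ hξ =>
    ((hkc ξ (sphere_subset_closedBall hξ)).mono ball_subset_closedBall).tendsto
  have hnonneg : ∀ z ∈ ball (0 : ℂ) 1, 0 ≤ (k z).re := by
    intro z hz
    refine re_nonneg_of_eventually_sphere hkd (fun ξ hξ ε hε => ?_) hz
    have h1 : -ε < (k ξ).re := by
      have := hkre ξ hξ
      have h2 := sq_nonneg ‖φ ξ - φ ζ‖
      linarith
    exact ((Complex.continuous_re.tendsto _).comp (hlim ξ hξ)).eventually (lt_mem_nhds h1)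
      |>.mono fun _ h => h.le
  have hkζ : (k ζ).re = -modelRho e E (φ ζ) := by simp [hk]
  have hle : modelRho e E (φ ζ) ≤ 0 := by linarith [hnonneg ζ hζ]
  refine lt_of_le_of_ne hle fun (h0 : modelRho e E (φ ζ) = 0) => ?_
  have hconst : ∀ z ∈ ball (0 : ℂ) 1, k z = 0 := by
    intro z hz
    rw [eqOn_const_of_re_nonneg hkd hnonneg hζ (by rw [hkζ, h0, neg_zero]) hz]
    simp [hk, h0]
  have hbdry : ∀ ξ ∈ sphere (0 : ℂ) 1, φ ξ = φ ζ := by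
    intro ξ hξ
    have hne : (𝓝[ball (0 : ℂ) 1] ξ).NeBot := by
      rw [← mem_closure_iff_nhdsWithin_neBot, closure_ball _ one_ne_zero]
      exact sphere_subset_closedBall hξ
    have h1 : k ξ = 0 := tendsto_nhds_unique (hlim ξ hξ)
      (tendsto_const_nhds.congr' (by
        filter_upwards [self_mem_nhdsWithin] with z hz using (hconst z hz).symm))
    have h2 := hkre ξ hξ
    rw [h1, Complex.zero_re] at h2
    have h3 : ‖φ ξ - φ ζ‖ = 0 := by
      have := sq_nonneg ‖φ ξ - φ ζ‖
      exact pow_eq_zero_iff two_ne_zero |>.1 (by linarith)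
    exact sub_eq_zero.1 (norm_eq_zero.1 h3)
  have hφ1 : φ 1 = 0 := by simp [hφ]
  have hφζ : φ ζ = 0 := by rw [← hbdry 1 (by simp), hφ1]
  have hφt : φ t = 0 := by
    have ht' : t ∈ ball (0 : ℂ) 1 := mem_ball_zero_iff.2 ht
    refine norm_le_zero_iff.1 (le_of_forall_pos_le_add fun ε hε => ?_)
    refine norm_le_of_eventually_norm_le_sphere hφd (fun ξ hξ => ?_) ht'
    have h1 : Tendsto (fun z => ‖φ z‖) (𝓝[ball 0 1] ξ) (𝓝 ‖φ ξ‖) :=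
      ((hφc ξ (sphere_subset_closedBall hξ)).mono ball_subset_closedBall).norm.tendsto
    rw [hbdry ξ hξ, hφζ, norm_zero] at h1
    exact (h1.eventually (gt_mem_nhds (by linarith : (0 : ℝ) < 0 + ε))).mono fun _ h => h.le
  have hPb : perp e b = b := by rw [perp_apply, hb, zero_smul, sub_zero]
  have hPt := map_discMap_of_fixed h.quadLip_map h.C_nonneg hB hr hc hfix
    (perp_perp h.norm_e) hPb ht.le
  have ht1 : (1 - t) ≠ 0 := sub_ne_zero.2 fun h => by rw [← h, norm_one] at ht; exact lt_irrefl _ ht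
  have : discMap c t = 0 := (smul_eq_zero.1 hφt).resolve_left ht1
  rw [this, map_zero] at hPt
  exact hb0 hPt.symm

theorem eq_self_on_disc_of_fixed (hb0 : b ≠ 0) (ht : ‖t‖ < 1) {f : V → V} {r₁ : ℝ}
    (hr₁ : 2 * (sobolevConst * B) < r₁)
    (hfd : DifferentiableOn ℂ f ({x | modelRho e E x < 0} ∩ ball 0 r₁))
    (hfm : ∀ x, modelRho e E x < 0 → ‖x‖ < r₁ → modelRho e E (f x) < 0 ∧ ‖f x‖ ≤ r)
    (hfo : ∀ ε > 0, ∃ δ > 0, ∀ x, modelRho e E x < 0 → ‖x‖ < δ → ‖f x - x‖ ≤ ε * ‖x‖ ^ 3)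
    {ζ : ℂ} (hζ : ζ ∈ ball (0 : ℂ) 1) :
    f ((1 - ζ) • discMap c ζ) = (1 - ζ) • discMap c ζ := by
  set φ : ℂ → V := fun ζ => (1 - ζ) • discMap c ζ with hφ
  have hφc : ContinuousOn φ (closedBall 0 1) := continuousOn_one_sub_smul_discMap hB hc
  have hφd : DifferentiableOn ℂ φ (ball 0 1) := differentiableOn_one_sub_smul_discMap hB hc
  have hφr : ∀ z : ℂ, ‖z‖ ≤ 1 → ‖φ z‖ ≤ r := fun z hz =>
    norm_one_sub_smul_discMap_le_radius hB hr hc hz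
  have hSB : 0 ≤ sobolevConst * B := mul_nonneg (zero_le_one.trans one_le_sobolevConst) hB
  have hφs : ∀ z : ℂ, ‖z‖ ≤ 1 → ‖φ z‖ ≤ ‖1 - z‖ * (sobolevConst * B) := fun z hz =>
    norm_one_sub_smul_discMap_le hB hc hz
  have hφr₁ : ∀ z : ℂ, ‖z‖ ≤ 1 → ‖φ z‖ < r₁ := fun z hz =>
    (norm_one_sub_smul_discMap_le_radius hB le_rfl hc hz).trans_lt hr₁
  have hφneg : ∀ z ∈ ball (0 : ℂ) 1, modelRho e E (φ z) < 0 := fun z hz =>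
    modelRho_neg_of_fixed h hB hr hc hb hfix hb0 ht hz
  obtain ⟨Γ, hΓc, hΓd, hΓ⟩ := exists_multiplier h hB hr hc hfix
  obtain ⟨K, hK⟩ := (isCompact_closedBall (0 : ℂ) 1).exists_bound_of_continuousOn hΓc
  have hK0 : 0 ≤ K := (norm_nonneg _).trans (hK 0 (by simp))
  set v : ℂ → V := fun z => f (φ z) - φ z with hv
  have hvd : DifferentiableOn ℂ v (ball 0 1) := by
    refine (hfd.comp hφd fun z hz => ⟨hφneg z hz, ?_⟩).sub hφd
    exact mem_ball_zero_iff.2 (hφr₁ z (mem_ball_zero_iff.1 hz).le)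
  have hv2r : ∀ z ∈ ball (0 : ℂ) 1, ‖v z‖ ≤ 2 * r := by
    intro z hz
    have hz1 := (mem_ball_zero_iff.1 hz).le
    have h1 := (hfm (φ z) (hφneg z hz) (hφr₁ z hz1)).2
    have h2 := hφr z hz1
    exact (norm_sub_le _ _).trans (by linarith)
  have hne1 : ∀ z ∈ ball (0 : ℂ) 1, 1 - z ≠ 0 := by
    intro z hz h0
    rw [mem_ball_zero_iff, ← sub_eq_zero.1 h0, norm_one] at hz
    exact lt_irrefl _ hz
  set G : ℂ → V := fun z => -((conj (1 - z) ^ 2)⁻¹ • Γ z) with hG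
  set k : ℂ → ℂ := fun z => inner ℂ (G z) (v z) with hk
  have hkeq : ∀ z, k z = -(((1 - z) ^ 2)⁻¹ * inner ℂ (Γ z) (v z)) := by
    intro z
    simp only [hk, hG, inner_neg_left, inner_smul_left, map_inv₀, map_pow, Complex.conj_conj]
  have hkd : DifferentiableOn ℂ k (ball 0 1) := by
    have h1 : DifferentiableOn ℂ (fun z : ℂ => ((1 - z) ^ 2)⁻¹) (ball 0 1) :=
      (((differentiableOn_const 1).sub differentiableOn_id).pow 2).inv
        fun z hz => pow_ne_zero 2 (hne1 z hz)
    exact ((h1.mul (hΓd v hvd)).neg).congr fun z _ => hkeq z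
  -- control at boundary points other than `1`
  have hreg : ∀ ξ ∈ sphere (0 : ℂ) 1, ξ ≠ 1 → ∃ μ : ℝ, 0 < μ ∧ ∀ ε > 0,
      ∀ᶠ z in 𝓝[ball 0 1] ξ, μ / 4 * ‖v z‖ ^ 2 - ε ≤ (k z).re := by
    intro ξ hξ hξ1
    have hξc : ξ ∈ closedBall (0 : ℂ) 1 := sphere_subset_closedBall hξ
    obtain ⟨μ, hμ, hμΓ⟩ := hΓ ξ hξ hξ1
    refine ⟨μ, hμ, fun ε hε => ?_⟩
    have hφlim : Tendsto φ (𝓝[ball 0 1] ξ) (𝓝 (φ ξ)) :=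
      ((hφc ξ hξc).mono ball_subset_closedBall).tendsto
    have hφlim' : Tendsto φ (𝓝[ball 0 1] ξ) (𝓝[closedBall 0 r] (φ ξ)) := by
      refine tendsto_nhdsWithin_iff.2 ⟨hφlim, ?_⟩
      filter_upwards [self_mem_nhdsWithin] with z hz
      exact mem_closedBall_zero_iff.2 (hφr z (mem_ball_zero_iff.1 hz).le)
    have hφξ : φ ξ ∈ closedBall (0 : V) r :=
      mem_closedBall_zero_iff.2 (hφr ξ (mem_closedBall_zero_iff.1 hξc))
    have hgrad := (h.continuousOn_modelGrad _ hφξ).tendsto.comp hφlim'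
    have hrho := (h.continuousOn_modelRho _ hφξ).tendsto.comp hφlim'
    rw [modelRho_eq_zero_of_fixed h hB hr hc hb hfix hξ] at hrho
    have hΓlim : Tendsto Γ (𝓝[ball 0 1] ξ) (𝓝 (Γ ξ)) :=
      ((hΓc ξ hξc).mono ball_subset_closedBall).tendsto
    have hs0 : conj (1 - ξ) ^ 2 ≠ 0 :=
      pow_ne_zero 2 ((map_ne_zero _).2 (sub_ne_zero.2 hξ1.symm))
    have hinv : Tendsto (fun z : ℂ => (conj (1 - z) ^ 2)⁻¹) (𝓝[ball 0 1] ξ)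
        (𝓝 (conj (1 - ξ) ^ 2)⁻¹) := by
      have : Continuous fun z : ℂ => conj (1 - z) ^ 2 := by fun_prop
      exact (this.continuousWithinAt.tendsto).inv₀ hs0
    have hGlim : Tendsto (fun z => G z + (μ : ℂ) • modelGrad e η (φ z)) (𝓝[ball 0 1] ξ) (𝓝 0) := by
      have h1 := ((hinv.smul hΓlim).neg).add (hgrad.const_smul (μ : ℂ))
      rw [hμΓ, neg_add_cancel] at h1
      exact h1
    have hsmall : Tendsto (fun z => ‖G z + (μ : ℂ) • modelGrad e η (φ z)‖ * (2 * r)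
        - μ / 2 * modelRho e E (φ z)) (𝓝[ball 0 1] ξ) (𝓝 0) := by
      have := (hGlim.norm.mul_const (2 * r)).sub (hrho.const_mul (μ / 2))
      simpa using this
    filter_upwards [self_mem_nhdsWithin, hsmall.eventually (gt_mem_nhds hε)] with z hz hzε
    have hz1 := (mem_ball_zero_iff.1 hz).le
    obtain ⟨hfneg, hfr⟩ := hfm (φ z) (hφneg z hz) (hφr₁ z hz1)
    have hconv := h.convex_ineq (hφr z hz1) hfr
    change _ + 2 * (inner ℂ (modelGrad e η (φ z)) (v z)).re + 1 / 2 * ‖v z‖ ^ 2 ≤ _ at hconv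
    have hsplit : (k z).re = (inner ℂ (G z + (μ : ℂ) • modelGrad e η (φ z)) (v z)).re
        - μ * (inner ℂ (modelGrad e η (φ z)) (v z)).re := by
      rw [inner_add_left, inner_smul_left, Complex.conj_ofReal, Complex.add_re,
        Complex.re_ofReal_mul]
      ring
    have herr : -(‖G z + (μ : ℂ) • modelGrad e η (φ z)‖ * (2 * r))
        ≤ (inner ℂ (G z + (μ : ℂ) • modelGrad e η (φ z)) (v z)).re := by
      have h1 := (Complex.abs_re_le_norm _).trans
        (norm_inner_le_norm (𝕜 := ℂ) (G z + (μ : ℂ) • modelGrad e η (φ z)) (v z))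
      have h2 := mul_le_mul_of_nonneg_left (hv2r z hz)
        (norm_nonneg (G z + (μ : ℂ) • modelGrad e η (φ z)))
      have h3 := (abs_le.1 h1).1
      linarith
    have hmul : μ * (modelRho e E (φ z) + 2 * (inner ℂ (modelGrad e η (φ z)) (v z)).re
        + 1 / 2 * ‖v z‖ ^ 2) ≤ 0 :=
      mul_nonpos_of_nonneg_of_nonpos hμ.le (hconv.trans hfneg.le)
    rw [hsplit]
    linarith
  -- control at the boundary point `1`
  have hone : ∀ ε > 0, ∃ δ > 0, ∀ z ∈ ball (0 : ℂ) 1, ‖1 - z‖ < δ →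
      ‖v z‖ ≤ ε * ‖1 - z‖ ^ 3 := by
    intro ε hε
    obtain ⟨δ, hδ, hfδ⟩ := hfo (ε / (sobolevConst * B + 1) ^ 3) (by positivity)
    refine ⟨δ / (sobolevConst * B + 1), by positivity, fun z hz hzδ => ?_⟩
    have hz1 := (mem_ball_zero_iff.1 hz).le
    have h1 : ‖φ z‖ ≤ ‖1 - z‖ * (sobolevConst * B + 1) :=
      (hφs z hz1).trans (mul_le_mul_of_nonneg_left (by linarith) (norm_nonneg _))
    have h2 := hfδ (φ z) (hφneg z hz) (h1.trans_lt ((lt_div_iff₀ (by positivity)).1 hzδ))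
    refine h2.trans ?_
    calc ε / (sobolevConst * B + 1) ^ 3 * ‖φ z‖ ^ 3
        ≤ ε / (sobolevConst * B + 1) ^ 3 * (‖1 - z‖ * (sobolevConst * B + 1)) ^ 3 := by gcongr
      _ = ε * ‖1 - z‖ ^ 3 := by field_simp
  have hkone : ∀ ε > 0, ∃ δ > 0, ∀ z ∈ ball (0 : ℂ) 1, ‖1 - z‖ < δ → ‖k z‖ ≤ ε * ‖1 - z‖ := by
    intro ε hε
    obtain ⟨δ, hδ, hvδ⟩ := hone (ε / (K + 1)) (by positivity)
    refine ⟨δ, hδ, fun z hz hzδ => ?_⟩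
    have hs : 0 < ‖1 - z‖ := norm_pos_iff.2 (hne1 z hz)
    rw [hkeq, norm_neg, norm_mul, norm_inv, norm_pow]
    calc (‖1 - z‖ ^ 2)⁻¹ * ‖inner ℂ (Γ z) (v z)‖
        ≤ (‖1 - z‖ ^ 2)⁻¹ * ((K + 1) * (ε / (K + 1) * ‖1 - z‖ ^ 3)) := by
          have h1 := norm_inner_le_norm (𝕜 := ℂ) (Γ z) (v z)
          have h2 := hK z (ball_subset_closedBall hz)
          have h3 := hvδ z hz hzδ
          have h4 : ‖Γ z‖ * ‖v z‖ ≤ (K + 1) * (ε / (K + 1) * ‖1 - z‖ ^ 3) :=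
            mul_le_mul (by linarith) h3 (norm_nonneg _) (by linarith)
          gcongr
          exact h1.trans h4
      _ = ε * ‖1 - z‖ := by field_simp
  have hnear : ∀ δ > 0, ∀ᶠ z in 𝓝[ball (0 : ℂ) 1] 1, ‖1 - z‖ < δ := by
    intro δ hδ
    filter_upwards [mem_nhdsWithin_of_mem_nhds (ball_mem_nhds (1 : ℂ) hδ)] with z hz
    rwa [mem_ball, dist_comm, dist_eq_norm] at hz
  have hlt2 : ∀ z ∈ ball (0 : ℂ) 1, ‖1 - z‖ ≤ 2 := fun z hz =>
    (norm_sub_le _ _).trans (by rw [norm_one]; linarith [mem_ball_zero_iff.1 hz])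
  have hknonneg : ∀ z ∈ ball (0 : ℂ) 1, 0 ≤ (k z).re := by
    intro z hz
    refine re_nonneg_of_eventually_sphere hkd (fun ξ hξ ε hε => ?_) hz
    by_cases hξ1 : ξ = 1
    · subst hξ1
      obtain ⟨δ, hδ, hkδ⟩ := hkone (ε / 2) (by positivity)
      filter_upwards [self_mem_nhdsWithin, hnear δ hδ] with w hw hwδ
      have h1 := (Complex.abs_re_le_norm _).trans (hkδ w hw hwδ)
      have h2 := hlt2 w hw
      have h3 := (abs_le.1 h1).1
      nlinarith
    · obtain ⟨μ, hμ, hev⟩ := hreg ξ hξ hξ1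
      filter_upwards [hev ε hε] with w hw
      have : 0 ≤ μ / 4 * ‖v w‖ ^ 2 := by positivity
      linarith
  have hk0 : ∀ z ∈ ball (0 : ℂ) 1, k z = 0 := by
    intro z hz
    refine eq_zero_of_re_nonneg_of_tendsto hkd hknonneg ?_ hz
    rw [Metric.tendsto_nhdsWithin_nhds]
    intro ε hε
    obtain ⟨δ, hδ, hkδ⟩ := hkone (ε / 2) (by positivity)
    refine ⟨min δ 1, lt_min hδ one_pos, fun {x} hx hxδ => ?_⟩
    have hx1 : x < 1 := hx
    rw [Real.dist_eq, abs_sub_comm, abs_of_pos (sub_pos.2 hx1)] at hxδ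
    have hx0 : 0 < x := by linarith [hxδ.trans_le (min_le_right δ 1)]
    have hn : ‖(1 : ℂ) - (x : ℂ)‖ = 1 - x := by
      rw [← Complex.ofReal_one, ← Complex.ofReal_sub, Complex.norm_real, Real.norm_eq_abs,
        abs_of_pos (sub_pos.2 hx1)]
    have hxb : (x : ℂ) ∈ ball (0 : ℂ) 1 := by
      rw [mem_ball_zero_iff, Complex.norm_real, Real.norm_eq_abs, abs_of_pos hx0]
      exact hx1
    have h1 := hkδ x hxb (by rw [hn]; exact hxδ.trans_le (min_le_left _ _))
    rw [hn] at h1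
    rw [Real.dist_eq, sub_zero, abs_of_nonneg (div_nonneg (norm_nonneg _) (sub_pos.2 hx1).le),
      div_lt_iff₀ (sub_pos.2 hx1)]
    have : ε / 2 * (1 - x) < ε * (1 - x) := by
      have := sub_pos.2 hx1
      nlinarith
    linarith
  refine sub_eq_zero.1 (norm_le_zero_iff.1 (le_of_forall_pos_le_add fun ε hε => ?_))
  rw [zero_add]
  refine norm_le_of_eventually_norm_le_sphere hvd (fun ξ hξ => ?_) hζ
  by_cases hξ1 : ξ = 1
  · subst hξ1
    obtain ⟨δ, hδ, hvδ⟩ := hone (ε / 8) (by positivity)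
    filter_upwards [self_mem_nhdsWithin, hnear δ hδ] with w hw hwδ
    have h1 := hvδ w hw hwδ
    have h2 : ‖1 - w‖ ^ 3 ≤ 2 ^ 3 := pow_le_pow_left₀ (norm_nonneg _) (hlt2 w hw) 3
    nlinarith
  · obtain ⟨μ, hμ, hev⟩ := hreg ξ hξ hξ1
    filter_upwards [self_mem_nhdsWithin, hev (μ / 4 * ε ^ 2) (by positivity)] with w hw hwε
    rw [hk0 w hw, Complex.zero_re] at hwε
    have h1 : ‖v w‖ ^ 2 ≤ ε ^ 2 := by
      have : μ / 4 * ‖v w‖ ^ 2 ≤ μ / 4 * ε ^ 2 := by linarith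
      exact le_of_mul_le_mul_left this (by positivity)
    exact le_of_sq_le_sq h1 hε.le

end Extremal

section Slice

variable {V : Type*} [NormedAddCommGroup V] [InnerProductSpace ℂ V]
  {e : V} {E : V → ℝ} {η : V → V} {C r : ℝ} (h : ModelData e E η C r)

include h

theorem ModelData.convex_inter_ball {r₁ : ℝ} (hr₁ : r₁ ≤ r) :
    Convex ℝ ({x | modelRho e E x < 0} ∩ ball 0 r₁) := by
  intro x hx y hy a b ha hb hab
  have hm : a • x + b • y ∈ ball (0 : V) r₁ := convex_ball (0 : V) r₁ hx.2 hy.2 ha hb hab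
  refine ⟨?_, hm⟩
  set m := a • x + b • y with hmdef
  have hle : ∀ z ∈ ball (0 : V) r₁, ‖z‖ ≤ r := fun z hz =>
    (mem_ball_zero_iff.1 hz).le.trans hr₁
  have h1 := h.convex_ineq (hle m hm) (hle x hx.2)
  have h2 := h.convex_ineq (hle m hm) (hle y hy.2)
  have hx0 : modelRho e E x < 0 := hx.1
  have hy0 : modelRho e E y < 0 := hy.1
  have h3 : a * (inner ℂ (modelGrad e η m) (x - m)).re
      + b * (inner ℂ (modelGrad e η m) (y - m)).re = 0 := by
    rw [← Complex.re_ofReal_mul, ← Complex.re_ofReal_mul, ← inner_smul_right, ← inner_smul_right,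
      ← Complex.add_re, ← inner_add_right]
    have : (a : ℂ) • (x - m) + (b : ℂ) • (y - m) = 0 := by
      rw [Complex.coe_smul, Complex.coe_smul, smul_sub, smul_sub]
      have : a • m + b • m = m := by rw [← add_smul, hab, one_smul]
      calc a • x - a • m + (b • y - b • m) = a • x + b • y - (a • m + b • m) := by abel
        _ = 0 := by rw [this, ← hmdef, sub_self]
    rw [this, inner_zero_right, Complex.zero_re]
  have h4 : a * modelRho e E x + b * modelRho e E y < 0 := by
    rcases ha.eq_or_lt with rfl | ha
    · have : b = 1 := by linarith
      subst this; linarith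
    · nlinarith [mul_nonneg hb (neg_nonneg.2 hy0.le), mul_pos ha (neg_pos.2 hx0)]
  have h5 := mul_le_mul_of_nonneg_left h1 ha
  have h6 := mul_le_mul_of_nonneg_left h2 hb
  have h7 : 0 ≤ a * ‖x - m‖ ^ 2 + b * ‖y - m‖ ^ 2 := by positivity
  have h8 : a * modelRho e E m + b * modelRho e E m = modelRho e E m := by
    rw [← add_mul, hab, one_mul]
  change modelRho e E m < 0
  nlinarith

theorem ModelData.isOpen_inter_ball {r₁ : ℝ} (hr₁ : r₁ ≤ r) :
    IsOpen ({x | modelRho e E x < 0} ∩ ball 0 r₁) := by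
  have h1 : ContinuousOn (modelRho e E) (ball 0 r₁) :=
    h.continuousOn_modelRho.mono (ball_subset_closedBall.trans (closedBall_subset_closedBall hr₁))
  have := h1.isOpen_inter_preimage isOpen_ball (isOpen_Iio (a := (0 : ℝ)))
  rwa [inter_comm] at this

variable [FiniteDimensional ℂ V]

theorem eq_self_on_slice {f : V → V} {r₁ : ℝ} (hr₁r : r₁ ≤ r)
    (hfd : DifferentiableOn ℂ f ({x | modelRho e E x < 0} ∩ ball 0 r₁))
    (hfm : ∀ x, modelRho e E x < 0 → ‖x‖ < r₁ → modelRho e E (f x) < 0 ∧ ‖f x‖ ≤ r)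
    (hfo : ∀ ε > 0, ∃ δ > 0, ∀ x, modelRho e E x < 0 → ‖x‖ < δ → ‖f x - x‖ ≤ ε * ‖x‖ ^ 3)
    {z : V} (hz0 : z ≠ 0) (hez : inner ℂ e z = 0)
    (hz1 : 8 * sobolevConst * ‖z‖ < r₁) (hz2 : 120 * C * sobolevConst ^ 2 * ‖z‖ ≤ 1)
    (hz3 : 96 * (2 * (40 * C * sobolevConst ^ 4 + 4 * C * sobolevConst ^ 3)) * ‖z‖ < 1) :
    (∃ x, modelRho e E x < 0 ∧ ‖x‖ < r₁ ∧ perp e x = z) ∧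
      ∀ x, modelRho e E x < 0 → ‖x‖ < r₁ → perp e x = z → f x = x := by
  set B := 4 * ‖z‖ with hBdef
  have hB : 0 ≤ B := by positivity
  have hBr₁ : 2 * (sobolevConst * B) < r₁ := by rw [hBdef]; linarith
  have hBr : 2 * (sobolevConst * B) ≤ r := (hBr₁.trans_le hr₁r).le
  have hsmall : 30 * C * sobolevConst ^ 2 * B ≤ 1 := by rw [hBdef]; linarith
  set b : ℂ → V := fun t => (1 - t)⁻¹ • z with hbdef
  set s : Set ℂ := closedBall 0 (1 / 2)
  have hs : ∀ t ∈ s, ‖t‖ ≤ 1 / 2 := fun t ht => mem_closedBall_zero_iff.1 ht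
  have hst : ∀ t ∈ s, 1 / 2 ≤ ‖1 - t‖ := by
    intro t ht
    have h1 := norm_sub_norm_le (1 : ℂ) t
    rw [norm_one] at h1
    linarith [hs t ht]
  have hs0 : ∀ t ∈ s, 1 - t ≠ 0 := fun t ht h0 => by
    have := hst t ht
    rw [h0, norm_zero] at this
    norm_num at this
  have hbc : ContinuousOn b s :=
    ((continuousOn_const.sub continuousOn_id).inv₀ hs0).smul continuousOn_const
  have hb : ∀ t ∈ s, ‖b t‖ ≤ B / 2 := by
    intro t ht
    have h1 : ‖1 - t‖⁻¹ ≤ 2 := inv_le_of_inv_le₀ (by norm_num) (by linarith [hst t ht])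
    rw [hbdef, norm_smul, norm_inv, hBdef]
    nlinarith [norm_nonneg z]
  have hbe : ∀ t, inner ℂ e (b t) = 0 := fun t => by rw [inner_smul_right, hez, mul_zero]
  have hbP : ∀ t, perp e (b t) = b t := fun t => by rw [perp_apply, hbe, zero_smul, sub_zero]
  have hex : ∀ t : ℂ, ∃ c : ℕ → V, t ∈ s →
      SobolevBound B c ∧ nextCoeff (modelMap e E η) (perp e) (b t) t c = c := by
    intro t
    by_cases ht : t ∈ s
    · obtain ⟨c, hc⟩ := exists_nextCoeff_fixed h.quadLip_map h.C_nonneg hB hBr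
        (norm_perp_le h.norm_e) hsmall (hb t ht) (hs t ht)
      exact ⟨c, fun _ => hc⟩
    · exact ⟨0, fun h' => absurd h' ht⟩
  choose c hcf using hex
  have hc : ∀ t ∈ s, SobolevBound B (c t) := fun t ht => (hcf t ht).1
  have hfix : ∀ t ∈ s, nextCoeff (modelMap e E η) (perp e) (b t) t (c t) = c t :=
    fun t ht => (hcf t ht).2
  have hcont := continuousOn_discMap_nextCoeff_fixed h.quadLip_map h.C_nonneg hB hBr
    (norm_perp_le h.norm_e) hsmall hs hbc hb hc hfix
  set w : ℂ → ℂ := fun t => (1 - t) * inner ℂ e (discMap (c t) t) with hw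
  have hwc : ContinuousOn w s :=
    (continuousOn_const.sub continuousOn_id).mul (continuousOn_const.inner (𝕜 := ℂ) hcont)
  have hpt : ∀ t ∈ s, (1 - t) • discMap (c t) t = z + w t • e := by
    intro t ht
    have hP := map_discMap_of_fixed h.quadLip_map h.C_nonneg hB hBr (hc t ht) (hfix t ht)
      (perp_perp h.norm_e) (hbP t) ((hs t ht).trans (by norm_num))
    rw [← perp_add_inner_smul e (discMap (c t) t), hP, smul_add, hbdef,
      smul_inv_smul₀ (hs0 t ht), smul_smul]
  have hball : ∀ t ∈ s, t ∈ ball (0 : ℂ) 1 := fun t ht =>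
    mem_ball_zero_iff.2 ((hs t ht).trans_lt (by norm_num))
  have hb0 : ∀ t ∈ s, b t ≠ 0 := fun t ht => smul_ne_zero (inv_ne_zero (hs0 t ht)) hz0
  have hneg : ∀ t ∈ s, modelRho e E (z + w t • e) < 0 := by
    intro t ht
    rw [← hpt t ht]
    exact modelRho_neg_of_fixed h hB hBr (hc t ht) (hbe t) (hfix t ht) (hb0 t ht)
      (mem_ball_zero_iff.1 (hball t ht)) (hball t ht)
  have hnorm : ∀ t ∈ s, ‖z + w t • e‖ < r₁ := by
    intro t ht
    rw [← hpt t ht]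
    exact (norm_one_sub_smul_discMap_le_radius hB le_rfl (hc t ht)
      ((hs t ht).trans (by norm_num))).trans_lt hBr₁
  have hfixf : ∀ t ∈ s, f (z + w t • e) = z + w t • e := by
    intro t ht
    rw [← hpt t ht]
    exact eq_self_on_disc_of_fixed h hB hBr (hc t ht) (hbe t) (hfix t ht) (hb0 t ht)
      (mem_ball_zero_iff.1 (hball t ht)) hBr₁ hfd hfm hfo (hball t ht)
  have h0s : (0 : ℂ) ∈ s := by simp [s]
  have h1s : (1 / 2 : ℂ) ∈ s := by simp [s]
  have hperp : ∀ a : ℂ, perp e (z + a • e) = z := by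
    intro a
    rw [map_add, map_smul, perp_self h.norm_e, smul_zero, add_zero, perp_apply, hez, zero_smul,
      sub_zero]
  refine ⟨⟨z + w 0 • e, hneg 0 h0s, hnorm 0 h0s, hperp _⟩, ?_⟩
  set K := 2 * (40 * C * sobolevConst ^ 4 + 4 * C * sobolevConst ^ 3) with hK
  have hest : ∀ t ∈ s, ‖inner ℂ e (discMap (c t) t) - (‖b t‖ ^ 2 : ℝ)‖ ≤ K * (64 * ‖z‖ ^ 3) := by
    intro t ht
    refine (norm_inner_discMap_sub_le h.quadLip_map h.C_nonneg hB hBr (hc t ht) (hfix t ht) (hbe t)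
      (inner_perp h.norm_e) h.inner_modelMap (norm_perp_le h.norm_e) (hb t ht) (hs t ht)
      h.C_nonneg h.abs_E_le fun _ => rfl).trans_eq ?_
    rw [hBdef, hK]; ring
  have hne : w 0 ≠ w (1 / 2) := by
    intro heq
    have e0 := hest 0 h0s
    have e1 := hest (1 / 2) h1s
    have hb0' : b 0 = z := by simp [hbdef]
    have hb1' : ‖b (1 / 2)‖ = 2 * ‖z‖ := by
      rw [hbdef, norm_smul]; norm_num
    rw [hb0'] at e0
    rw [hb1'] at e1
    simp only [hw, sub_zero, one_mul] at heq
    rw [heq] at e0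
    have hzpos : 0 < ‖z‖ := norm_pos_iff.2 hz0
    set q := inner ℂ e (discMap (c (1 / 2)) (1 / 2))
    have h1 : ((‖z‖ ^ 2 : ℝ) : ℂ) = ((1 - 1 / 2) * q - (‖z‖ ^ 2 : ℝ))
        - (1 / 2) * (q - ((2 * ‖z‖) ^ 2 : ℝ)) := by
      push_cast; ring
    have h2 : ‖z‖ ^ 2 ≤ 3 / 2 * (K * (64 * ‖z‖ ^ 3)) := by
      calc ‖z‖ ^ 2 = ‖((‖z‖ ^ 2 : ℝ) : ℂ)‖ := by
            rw [Complex.norm_real, Real.norm_of_nonneg (by positivity)]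
        _ ≤ ‖(1 - 1 / 2) * q - (‖z‖ ^ 2 : ℝ)‖ + ‖(1 / 2) * (q - ((2 * ‖z‖) ^ 2 : ℝ))‖ :=
            (congrArg norm h1).trans_le (norm_sub_le _ _)
        _ ≤ 3 / 2 * (K * (64 * ‖z‖ ^ 3)) := by
            rw [norm_mul (1 / 2 : ℂ)]
            have : ‖(1 / 2 : ℂ)‖ = 1 / 2 := by norm_num
            rw [this]; linarith
    have h3 : ‖z‖ ^ 2 * 1 ≤ ‖z‖ ^ 2 * (96 * K * ‖z‖) := by nlinarith
    have := le_of_mul_le_mul_left h3 (by positivity)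
    linarith
  -- the identity theorem on the slice
  set ι : ℂ → V := fun a => z + a • e with hι
  have hιd : Differentiable ℂ ι :=
    (differentiable_const z).add (differentiable_id.smul (differentiable_const e))
  set S : Set ℂ := ι ⁻¹' ({x | modelRho e E x < 0} ∩ ball 0 r₁) with hS
  have hSo : IsOpen S := (h.isOpen_inter_ball hr₁r).preimage hιd.continuous
  have hSc : IsPreconnected S := by
    refine Convex.isPreconnected ?_
    intro x hx y hy a a' ha ha' haa
    have h1 := h.convex_inter_ball hr₁r hx hy ha ha' haa
    have h2 : a • ι x + a' • ι y = ι (a • x + a' • y) := by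
      simp only [hι, smul_add, add_smul, smul_assoc]
      nth_rewrite 3 [← one_smul ℝ z]
      rw [← haa, add_smul]; abel
    rw [h2] at h1
    exact h1
  have hkd : DifferentiableOn ℂ (fun a => f (ι a) - ι a) S :=
    (hfd.comp hιd.differentiableOn fun _ ha => ha).sub hιd.differentiableOn
  have hwS : ∀ t ∈ s, w t ∈ S := fun t ht => ⟨hneg t ht, mem_ball_zero_iff.2 (hnorm t ht)⟩
  have hacc : ∃ᶠ a in 𝓝[≠] (w 0), f (ι a) - ι a = 0 := by
    have h1 : IsPreconnected (w '' s) := (convex_closedBall (0 : ℂ) (1 / 2)).isPreconnected.image w hwc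
    have h2 := h1.preperfect_of_nontrivial
      ⟨w 0, mem_image_of_mem w h0s, w (1 / 2), mem_image_of_mem w h1s, hne⟩ (w 0)
      (mem_image_of_mem w h0s)
    rw [accPt_iff_frequently_nhdsNE] at h2
    refine h2.mono ?_
    rintro _ ⟨t, ht, rfl⟩
    exact sub_eq_zero.2 (hfixf t ht)
  have hzero := (hkd.analyticOnNhd hSo).eqOn_zero_of_preconnected_of_frequently_eq_zero hSc
    (hwS 0 h0s) hacc
  intro x hx hxr hPx
  have hxι : ι (inner ℂ e x) = x := by
    rw [hι, ← hPx]; exact perp_add_inner_smul e x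
  have hxS : inner ℂ e x ∈ S := by
    rw [hS, mem_preimage, hxι]; exact ⟨hx, mem_ball_zero_iff.2 hxr⟩
  have := hzero hxS
  simp only [hxι, Pi.zero_apply] at this
  exact sub_eq_zero.1 this

theorem exists_open_eq_self {f : V → V} {r₁ : ℝ} (hr₁ : 0 < r₁) (hr₁r : r₁ ≤ r)
    (hfd : DifferentiableOn ℂ f ({x | modelRho e E x < 0} ∩ ball 0 r₁))
    (hfm : ∀ x, modelRho e E x < 0 → ‖x‖ < r₁ → modelRho e E (f x) < 0 ∧ ‖f x‖ ≤ r)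
    (hfo : ∀ ε > 0, ∃ δ > 0, ∀ x, modelRho e E x < 0 → ‖x‖ < δ → ‖f x - x‖ ≤ ε * ‖x‖ ^ 3)
    (hb : ∃ b : V, b ≠ 0 ∧ inner ℂ e b = 0) :
    ∃ U : Set V, IsOpen U ∧ U.Nonempty ∧ U ⊆ {x | modelRho e E x < 0} ∩ ball 0 r₁ ∧
      ∀ x ∈ U, f x = x := by
  set K := 96 * (2 * (40 * C * sobolevConst ^ 4 + 4 * C * sobolevConst ^ 3)) with hK
  have hS := one_le_sobolevConst
  have hC := h.C_nonneg
  have hS0 : (0 : ℝ) ≤ sobolevConst := zero_le_one.trans hS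
  have hK0 : 0 ≤ K := by positivity
  set L := 8 * sobolevConst / r₁ + 120 * C * sobolevConst ^ 2 + K with hL
  have hL0 : 0 < L := by positivity
  have hslice := fun z (hz0 : z ≠ 0) (hez : inner ℂ e z = (0 : ℂ)) (hzL : L * ‖z‖ < 1) => by
    have hzn := norm_nonneg z
    have h1 : 0 ≤ 8 * sobolevConst / r₁ * ‖z‖ := by positivity
    have h2 : 0 ≤ 120 * C * sobolevConst ^ 2 * ‖z‖ := by positivity
    have h3 : 0 ≤ K * ‖z‖ := by positivity
    have h4 : 8 * sobolevConst / r₁ * ‖z‖ + 120 * C * sobolevConst ^ 2 * ‖z‖ + K * ‖z‖ < 1 := by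
      rw [hL] at hzL; linarith
    have h5 : 8 * sobolevConst * ‖z‖ < r₁ := by
      have h6 : 8 * sobolevConst / r₁ * ‖z‖ < 1 := by linarith
      rwa [div_mul_eq_mul_div, div_lt_one hr₁] at h6
    exact eq_self_on_slice h hr₁r hfd hfm hfo hz0 hez h5 (by linarith) (by linarith)
  refine ⟨({x | modelRho e E x < 0} ∩ ball 0 r₁)
    ∩ {x | perp e x ≠ 0 ∧ L * ‖perp e x‖ < 1}, ?_, ?_, inter_subset_left, ?_⟩
  · refine (h.isOpen_inter_ball hr₁r).inter (IsOpen.inter ?_ ?_)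
    · exact isOpen_ne_fun (perp e).continuous continuous_const
    · exact isOpen_lt (continuous_const.mul (perp e).continuous.norm) continuous_const
  · obtain ⟨b, hb0, hbe⟩ := hb
    have hbn : 0 < ‖b‖ := norm_pos_iff.2 hb0
    set τ : ℝ := 1 / (2 * L * ‖b‖) with hτ
    have hτ0 : 0 < τ := by positivity
    have hz0 : (τ : ℂ) • b ≠ 0 := smul_ne_zero (by exact_mod_cast hτ0.ne') hb0
    have hzL : L * ‖(τ : ℂ) • b‖ < 1 := by
      rw [norm_smul, Complex.norm_real, Real.norm_of_nonneg hτ0.le, hτ]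
      field_simp
      norm_num
    obtain ⟨x, hx, hxr, hPx⟩ := (hslice _ hz0 (by rw [inner_smul_right, hbe, mul_zero]) hzL).1
    exact ⟨x, ⟨hx, mem_ball_zero_iff.2 hxr⟩, by rw [hPx]; exact hz0, by rw [hPx]; exact hzL⟩
  · rintro x ⟨⟨hx, hxr⟩, hx0, hxL⟩
    exact (hslice _ hx0 (inner_perp h.norm_e x) hxL).2 x hx (mem_ball_zero_iff.1 hxr) rfl

end Slice

section Taylor

open Asymptotics

variable {X Y : Type*} [NormedAddCommGroup X] [NormedAddCommGroup Y]

theorem QuadLip.mono {C C' r r' : ℝ} {f : X → Y} (h : QuadLip C r f) (hC : C ≤ C') (hr : r' ≤ r) :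
    QuadLip C' r' f := by
  refine ⟨h.1, fun x y hx hy => (h.2 x y (hx.trans hr) (hy.trans hr)).trans ?_⟩
  gcongr

theorem eventually_forall_norm_le {P : X → Prop} (h : ∀ᶠ x in 𝓝 (0 : X), P x) :
    ∀ᶠ r in 𝓝[>] (0 : ℝ), ∀ x, ‖x‖ ≤ r → P x := by
  obtain ⟨ε, hε, hP⟩ := Metric.eventually_nhds_iff.1 h
  filter_upwards [Ioo_mem_nhdsGT hε] with r hr x hx
  exact hP (by rw [dist_zero_right]; exact hx.trans_lt hr.2)

variable [NormedSpace ℝ X] [NormedSpace ℝ Y]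

theorem exists_eventually_quadLip {f : X → Y} (hf : ContDiffAt ℝ 2 f 0) (h0 : f 0 = 0)
    (hd : fderiv ℝ f 0 = 0) : ∃ C, 0 ≤ C ∧ ∀ᶠ r in 𝓝[>] (0 : ℝ), QuadLip C r f := by
  have h1 : ContDiffAt ℝ 1 (fderiv ℝ f) 0 := hf.fderiv_right (by norm_num)
  obtain ⟨K, t, ht, hK⟩ := h1.exists_lipschitzOnWith
  have hdiff : ∀ᶠ x in 𝓝 (0 : X), DifferentiableAt ℝ f x :=
    (hf.eventually (by simp)).mono fun x hx => hx.differentiableAt (by norm_num)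
  refine ⟨K, K.2, ?_⟩
  filter_upwards [eventually_forall_norm_le (hdiff.and ht)] with r hr
  refine ⟨h0, fun x y hx hy => ?_⟩
  set m := max ‖x‖ ‖y‖
  have hm : m ≤ r := max_le hx hy
  have hm' : ∀ z ∈ closedBall (0 : X) m, ‖z‖ ≤ r := fun z hz =>
    (mem_closedBall_zero_iff.1 hz).trans hm
  have hr0 : ‖(0 : X)‖ ≤ r := by rw [norm_zero]; exact (norm_nonneg x).trans hx
  refine (convex_closedBall (0 : X) m).norm_image_sub_le_of_norm_fderiv_le
    (fun z hz => (hr z (hm' z hz)).1) (fun z hz => ?_)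
    (mem_closedBall_zero_iff.2 (le_max_right _ _)) (mem_closedBall_zero_iff.2 (le_max_left _ _))
  have h2 := hK.dist_le_mul z (hr z (hm' z hz)).2 0 (hr 0 hr0).2
  rw [hd, dist_zero_right, dist_zero_right] at h2
  exact h2.trans (mul_le_mul_of_nonneg_left (mem_closedBall_zero_iff.1 hz) K.2)

theorem isLittleO_taylor_two {f : X → Y} (hf : ContDiffAt ℝ 2 f 0) :
    (fun x => f x - f 0 - fderiv ℝ f 0 x - (1 / 2 : ℝ) • fderiv ℝ (fderiv ℝ f) 0 x x)
      =o[𝓝 0] fun x => ‖x‖ ^ 2 := by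
  set A := fderiv ℝ f 0
  set Q := fderiv ℝ (fderiv ℝ f) 0 with hQ
  have hsymm : IsSymmSndFDerivAt ℝ f 0 := hf.isSymmSndFDerivAt (by simp)
  have h1 : HasFDerivAt (fderiv ℝ f) Q 0 :=
    ((hf.fderiv_right (m := 1) (by norm_num)).differentiableAt (by norm_num)).hasFDerivAt
  have hdiff : ∀ᶠ x in 𝓝 (0 : X), DifferentiableAt ℝ f x :=
    (hf.eventually (by simp)).mono fun x hx => hx.differentiableAt (by norm_num)
  set G : X → Y := fun x => f x - A x - (1 / 2 : ℝ) • Q x x with hG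
  have hGd : ∀ x, DifferentiableAt ℝ f x → HasFDerivAt G (fderiv ℝ f x - A - Q x) x := by
    intro x hx
    have h2 : HasFDerivAt (fun x => Q x x) (Q.flip x + Q x) x := by
      have := Q.hasFDerivAt (x := x) |>.clm_apply (hasFDerivAt_id x)
      refine this.congr_fderiv ?_
      ext v
      simp [add_comm]
    refine ((hx.hasFDerivAt.sub A.hasFDerivAt).sub (h2.const_smul (1 / 2 : ℝ))).congr_fderiv ?_
    ext v
    have h3 : Q v x = Q x v := hsymm v x
    simp only [_root_.sub_apply, _root_.smul_apply,
      _root_.add_apply, ContinuousLinearMap.flip_apply, h3]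
    rw [← two_smul ℝ (Q x v), smul_smul]
    norm_num
  rw [isLittleO_iff]
  intro ε hε
  have h2 := (isLittleO_iff.1 h1.isLittleO) hε
  obtain ⟨r, hr, hall⟩ := Metric.eventually_nhds_iff.1 (hdiff.and h2)
  filter_upwards [ball_mem_nhds (0 : X) hr] with x hx
  have hxr : ‖x‖ < r := mem_ball_zero_iff.1 hx
  have h3 := (convex_closedBall (0 : X) ‖x‖).norm_image_sub_le_of_norm_hasFDerivWithin_le
    (f := G) (f' := fun z => fderiv ℝ f z - A - Q z) (C := ε * ‖x‖) (x := 0) (y := x)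
    (fun z hz => ?_) (fun z hz => ?_) (by simp) (by simp)
  · rw [Real.norm_of_nonneg (sq_nonneg _)]
    have h4 : G x - G 0 = f x - f 0 - A x - (1 / 2 : ℝ) • Q x x := by
      simp only [hG, map_zero, smul_zero, sub_zero]
      abel
    rw [h4, sub_zero] at h3
    linarith
  · have hz' : dist z 0 < r := by
      rw [dist_zero_right]; exact (mem_closedBall_zero_iff.1 hz).trans_lt hxr
    exact (hGd z (hall hz').1).hasFDerivWithinAt
  · have hz1 := mem_closedBall_zero_iff.1 hz
    have hz' : dist z 0 < r := by rw [dist_zero_right]; exact hz1.trans_lt hxr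
    have h4 := (hall hz').2
    rw [sub_zero] at h4
    exact h4.trans (mul_le_mul_of_nonneg_left hz1 hε.le)

theorem eq_zero_of_homogeneous_of_isLittleO {q : X → Y} {k : ℕ}
    (hq : ∀ (t : ℝ) x, q (t • x) = t ^ k • q x) (ho : q =o[𝓝 0] fun x => ‖x‖ ^ k) (x : X) :
    q x = 0 := by
  refine norm_le_zero_iff.1 (le_of_forall_pos_le_add fun ε hε => ?_)
  rw [zero_add]
  have h1 := (isLittleO_iff.1 ho) (show 0 < ε / (‖x‖ ^ k + 1) by positivity)
  have h2 : Tendsto (fun t : ℝ => t • x) (𝓝[>] 0) (𝓝 0) := by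
    have : Continuous fun t : ℝ => t • x := by fun_prop
    simpa using (this.tendsto 0).mono_left nhdsWithin_le_nhds
  obtain ⟨t, ht, ht0⟩ := ((h2.eventually h1).and self_mem_nhdsWithin).exists
  have ht0' : (0 : ℝ) < t := ht0
  rw [hq, norm_smul, norm_pow, norm_pow, norm_norm, norm_smul, Real.norm_of_nonneg ht0'.le,
    mul_pow] at ht
  have h3 : t ^ k * ‖q x‖ ≤ t ^ k * (ε / (‖x‖ ^ k + 1) * ‖x‖ ^ k) := by linarith
  refine (le_of_mul_le_mul_left h3 (by positivity)).trans ?_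
  rw [div_mul_eq_mul_div, div_le_iff₀ (by positivity)]
  nlinarith [pow_nonneg (norm_nonneg x) k]

theorem fderiv_eq_zero_of_isLittleO_sq {f : X → Y} (hf : ContDiffAt ℝ 2 f 0)
    (ho : f =o[𝓝 0] fun x => ‖x‖ ^ 2) :
    f 0 = 0 ∧ fderiv ℝ f 0 = 0 ∧ fderiv ℝ (fderiv ℝ f) 0 = 0 := by
  have h0 : f 0 = 0 := by
    have := ((isLittleO_iff.1 ho) one_pos).self_of_nhds
    simpa using this
  have h1 : fderiv ℝ f 0 = 0 := by
    refine HasFDerivAt.fderiv (HasFDerivAt.of_isLittleO ?_)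
    simp only [h0, sub_zero, _root_.zero_apply]
    refine ho.trans ?_
    exact isLittleO_norm_pow_id one_lt_two
  refine ⟨h0, h1, ?_⟩
  have h2 := isLittleO_taylor_two hf
  rw [h0, h1] at h2
  have h3 := (ho.sub h2)
  simp only [_root_.zero_apply, sub_zero, sub_sub_cancel] at h3
  have h4 : ∀ x, (1 / 2 : ℝ) • fderiv ℝ (fderiv ℝ f) 0 x x = 0 := by
    refine eq_zero_of_homogeneous_of_isLittleO (k := 2) (fun t x => ?_) h3
    simp only [map_smul, _root_.smul_apply]
    rw [smul_smul, smul_smul, smul_smul]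
    congr 1; ring
  have h5 : ∀ x, fderiv ℝ (fderiv ℝ f) 0 x x = 0 := fun x =>
    (smul_eq_zero.1 (h4 x)).resolve_left (by norm_num)
  have hsymm : IsSymmSndFDerivAt ℝ f 0 := hf.isSymmSndFDerivAt (by simp)
  ext x y
  have h6 := h5 (x + y)
  simp only [map_add, _root_.add_apply, h5, zero_add, add_zero] at h6
  have h7 : fderiv ℝ (fderiv ℝ f) 0 y x = fderiv ℝ (fderiv ℝ f) 0 x y := hsymm y x
  rw [h7, ← two_smul ℝ] at h6
  exact (smul_eq_zero.1 h6).resolve_left (by norm_num)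

end Taylor

section ModelExists

open Asymptotics

variable {V : Type*} [NormedAddCommGroup V] [InnerProductSpace ℂ V] [FiniteDimensional ℂ V]

/-- The Riesz representation of real functionals with respect to the real part of a complex
inner product. -/
theorem exists_real_riesz : ∃ T : (V →L[ℝ] ℝ) →L[ℝ] V,
    ∀ (l : V →L[ℝ] ℝ) (x : V), (inner ℂ (T l) x).re = l x := by
  let : InnerProductSpace ℝ V := InnerProductSpace.complexToReal
  have := FiniteDimensional.complete ℂ V
  have : FiniteDimensional ℝ V := FiniteDimensional.complexToReal V
  have : FiniteDimensional ℝ (V →L[ℝ] ℝ) := inferInstance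
  let T₀ : (V →L[ℝ] ℝ) →ₗ[ℝ] V :=
    { toFun := fun l => (InnerProductSpace.toDual ℝ V).symm l
      map_add' := fun l l' => map_add _ l l'
      map_smul' := fun a l => by
        rw [LinearIsometryEquiv.map_smulₛₗ]; simp }
  refine ⟨LinearMap.toContinuousLinearMap T₀, fun l x => ?_⟩
  have h1 := InnerProductSpace.toDual_symm_apply (𝕜 := ℝ) (x := x) (y := l)
  rw [real_inner_eq_re_inner ℂ] at h1
  exact h1

theorem exists_modelData {e : V} (he : ‖e‖ = 1) {E : V → ℝ} (hE : ContDiffAt ℝ 3 E 0)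
    (hEo : E =o[𝓝 0] fun x => ‖x‖ ^ 2) : ∃ η C r, ModelData e E η C r := by
  have := FiniteDimensional.complete ℂ V
  obtain ⟨T, hT⟩ := exists_real_riesz (V := V)
  obtain ⟨hE0, hE1, hE2⟩ := fderiv_eq_zero_of_isLittleO_sq (hE.of_le (by norm_num)) hEo
  have hdE : ContDiffAt ℝ 2 (fderiv ℝ E) 0 := hE.fderiv_right (by norm_num)
  set η : V → V := fun x => (1 / 2 : ℝ) • T (fderiv ℝ E x) with hη
  have hηc : ContDiffAt ℝ 2 η 0 := (T.contDiff.contDiffAt.comp 0 hdE).const_smul _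
  have hη0 : η 0 = 0 := by simp [hη, hE1]
  have hηd : HasFDerivAt η (0 : V →L[ℝ] V) 0 := by
    have h1 : HasFDerivAt (fderiv ℝ E) (0 : V →L[ℝ] V →L[ℝ] ℝ) 0 := by
      have := (hdE.differentiableAt (by norm_num)).hasFDerivAt
      rwa [hE2] at this
    have h2 := (T.hasFDerivAt.comp (0 : V) h1).const_smul (1 / 2 : ℝ)
    refine h2.congr_fderiv ?_
    simp
  have hηT : ∀ x v, 2 * (inner ℂ (η x) v).re = fderiv ℝ E x v := by
    intro x v
    change 2 * (inner ℂ ((1 / 2 : ℝ) • T (fderiv ℝ E x)) v).re = _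
    rw [← hT (fderiv ℝ E x) v, ← Complex.coe_smul, inner_smul_left, Complex.conj_ofReal,
      Complex.re_ofReal_mul]
    ring
  set ie : V →L[ℝ] ℂ := (innerSL ℂ e).restrictScalars ℝ with hie
  have hie_apply : ∀ x, ie x = inner ℂ e x := fun _ => rfl
  set pe : V →L[ℝ] V := (perp e).restrictScalars ℝ with hpe
  have hU_eq : modelU e η = fun x => 1 - ie x - ie (η x) := rfl
  have hU0 : modelU e η 0 = 1 := by simp [hU_eq, hη0]
  have hUc : ContDiffAt ℝ 2 (modelU e η) 0 :=
    (contDiffAt_const.sub ie.contDiff.contDiffAt).sub (ie.contDiff.contDiffAt.comp 0 hηc)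
  have hUd : HasFDerivAt (modelU e η) (-ie) 0 := by
    have := (((hasFDerivAt_const (1 : ℂ) (0 : V)).sub ie.hasFDerivAt).sub
      (ie.hasFDerivAt.comp (0 : V) hηd))
    refine this.congr_fderiv ?_
    simp
  have hLc : ContDiffAt ℝ 2 (modelLog e η) 0 := by
    have h1 : ContDiffAt ℝ 2 Complex.log (modelU e η 0) := by
      rw [hU0]
      exact (Complex.contDiffAt_log (n := 2) Complex.one_mem_slitPlane).restrict_scalars ℝ
    exact ((h1.comp 0 hUc).add ie.contDiff.contDiffAt).smul contDiffAt_const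
  have hLd : fderiv ℝ (modelLog e η) 0 = 0 := by
    have h1 : HasFDerivAt Complex.log
        (((1 : ℂ →L[ℂ] ℂ).smulRight ((1 : ℂ)⁻¹)).restrictScalars ℝ) (modelU e η 0) := by
      rw [hU0]
      exact (Complex.hasDerivAt_log Complex.one_mem_slitPlane).hasFDerivAt.restrictScalars ℝ
    have h2 := ((h1.comp (0 : V) hUd).add ie.hasFDerivAt).smul_const e
    refine HasFDerivAt.fderiv (h2.congr_fderiv ?_)
    ext x
    simp
  have hL0 : modelLog e η 0 = 0 := by simp [modelLog, hU0]
  have hMc : ContDiffAt ℝ 2 (modelMap e E η) 0 := by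
    have h1 : ContDiffAt ℝ 2 (fun x => (modelU e η x)⁻¹) 0 :=
      hUc.inv (by rw [hU0]; exact one_ne_zero)
    have h2 : ContDiffAt ℝ 2 (fun x => pe (x + η x)) 0 :=
      pe.contDiff.contDiffAt.comp 0 (contDiffAt_id.add hηc)
    have h3 : ContDiffAt ℝ 2 (fun x : V => ((‖x‖ ^ 2 + E x : ℝ) : ℂ)) 0 :=
      Complex.ofRealCLM.contDiff.contDiffAt.comp 0
        (((contDiff_norm_sq ℂ).contDiffAt).add (hE.of_le (by norm_num)))
    exact ((h1.smul h2).sub pe.contDiff.contDiffAt).sub (h3.smul contDiffAt_const)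
  have hM0 : modelMap e E η 0 = 0 := by simp [modelMap, hη0, hE0]
  have hMd : fderiv ℝ (modelMap e E η) 0 = 0 := by
    have h1 : DifferentiableAt ℝ (fun x => (modelU e η x)⁻¹) 0 :=
      (hUc.inv (by rw [hU0]; exact one_ne_zero)).differentiableAt (by norm_num)
    have h2 : HasFDerivAt (fun x => pe (x + η x)) (pe ∘L (ContinuousLinearMap.id ℝ V + 0)) 0 :=
      pe.hasFDerivAt.comp (0 : V) ((hasFDerivAt_id (0 : V)).add hηd)
    have h3 : HasFDerivAt (fun x : V => ‖x‖ ^ 2 + E x) (0 : V →L[ℝ] ℝ) 0 := by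
      have hE1' : HasFDerivAt E (0 : V →L[ℝ] ℝ) 0 := by
        have := (hE.differentiableAt (by norm_num)).hasFDerivAt
        rwa [hE1] at this
      have hn : HasFDerivAt (fun x : V => ‖x‖ ^ 2) (0 : V →L[ℝ] ℝ) 0 := by
        refine HasFDerivAt.of_isLittleO ?_
        simpa using isLittleO_norm_pow_id (E' := V) one_lt_two
      have := hn.add hE1'
      rwa [add_zero] at this
    have h4 := (Complex.ofRealCLM.hasFDerivAt.comp (0 : V) h3).smul_const e
    have h5 := ((h1.hasFDerivAt.smul h2).sub pe.hasFDerivAt).sub h4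
    refine HasFDerivAt.fderiv (h5.congr_fderiv ?_)
    ext x
    simp [hU0, hη0]
  obtain ⟨C₁, hC₁, hq₁⟩ := exists_eventually_quadLip hdE hE1 hE2
  obtain ⟨C₂, hC₂, hq₂⟩ := exists_eventually_quadLip hMc hM0 hMd
  obtain ⟨C₃, hC₃, hq₃⟩ := exists_eventually_quadLip hLc hL0 hLd
  have hdiff : ∀ᶠ x in 𝓝 (0 : V), DifferentiableAt ℝ E x :=
    (hE.eventually (by simp)).mono fun x hx => hx.differentiableAt (by norm_num)
  have hUne : ∀ᶠ x in 𝓝 (0 : V), modelU e η x ≠ 0 :=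
    hUc.continuousAt.eventually_ne (by rw [hU0]; exact one_ne_zero)
  have hηcont : ∀ᶠ x in 𝓝 (0 : V), ContinuousAt η x :=
    (hηc.eventually (by simp)).mono fun x hx => hx.continuousAt
  have hsmall : ∀ᶠ r in 𝓝[>] (0 : ℝ), C₁ * r ≤ 1 / 2 := by
    have : Tendsto (fun r : ℝ => C₁ * r) (𝓝[>] 0) (𝓝 (C₁ * 0)) :=
      ((continuous_const.mul continuous_id).tendsto 0).mono_left nhdsWithin_le_nhds
    rw [mul_zero] at this
    exact (this.eventually (gt_mem_nhds (by norm_num : (0 : ℝ) < 1 / 2))).mono fun _ h => h.le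
  have hpos : ∀ᶠ r in 𝓝[>] (0 : ℝ), r ∈ Ioi (0 : ℝ) := self_mem_nhdsWithin
  obtain ⟨r, hr0, hr₁, hr₂, hr₃, hrd, hrs⟩ := (hpos.and (hq₁.and (hq₂.and (hq₃.and
    ((eventually_forall_norm_le (hdiff.and (hUne.and hηcont))).and hsmall))))).exists
  have hr0' : (0 : ℝ) < r := hr0
  refine ⟨η, C₁ + C₂ + C₃, r, hr0, by positivity, he, fun x hx => ?_, fun x y hx hy => ?_,
    fun x hx => ((hrd x (mem_closedBall_zero_iff.1 hx)).2.2).continuousWithinAt,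
    fun x hx => (hrd x hx).2.1, hr₂.mono (by linarith) le_rfl, hr₃.mono (by linarith) le_rfl⟩
  · have h1 := (convex_closedBall (0 : V) ‖x‖).norm_image_sub_le_of_norm_fderiv_le (𝕜 := ℝ)
      (f := E) (C := C₁ * ‖x‖ ^ 2) (x := 0) (y := x)
      (fun z hz => (hrd z ((mem_closedBall_zero_iff.1 hz).trans hx)).1) (fun z hz => ?_)
      (by simp) (by simp)
    · rw [hE0, sub_zero, sub_zero, Real.norm_eq_abs] at h1
      refine h1.trans ?_
      have : 0 ≤ (C₂ + C₃) * ‖x‖ ^ 3 := by positivity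
      nlinarith
    · have hz1 := mem_closedBall_zero_iff.1 hz
      refine (hr₁.norm_le (hz1.trans hx)).trans ?_
      gcongr
  · rw [hηT]
    have h1 := ((convex_closedBall (0 : V) r).inter
      (convex_closedBall x ‖y - x‖)).norm_image_sub_le_of_norm_hasFDerivWithin_le' (𝕜 := ℝ)
      (f := E) (f' := fun z => fderiv ℝ E z) (φ := fderiv ℝ E x) (C := 1 / 2 * ‖y - x‖)
      (x := x) (y := y)
      (fun z hz => (hrd z (mem_closedBall_zero_iff.1 hz.1)).1.hasFDerivAt.hasFDerivWithinAt)
      (fun z hz => ?_) ⟨mem_closedBall_zero_iff.2 hx, mem_closedBall_self (norm_nonneg _)⟩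
      ⟨mem_closedBall_zero_iff.2 hy, mem_closedBall_iff_norm.2 le_rfl⟩
    · rw [Real.norm_eq_abs] at h1
      linarith
    · have hz1 := mem_closedBall_zero_iff.1 hz.1
      have hz2 := mem_closedBall_iff_norm.1 hz.2
      refine (hr₁.2 z x hz1 hx).trans ?_
      have h2 : C₁ * max ‖z‖ ‖x‖ ≤ 1 / 2 :=
        (mul_le_mul_of_nonneg_left (max_le hz1 hx) hC₁).trans hrs
      exact mul_le_mul h2 hz2 (norm_nonneg _) (by norm_num)

end ModelExists

section NormalForm

open Asymptotics Module
open scoped ComplexConjugate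

/-- A positive definite Hermitian form is the square of the Euclidean norm in suitable linear
coordinates. -/
theorem exists_linearEquiv_norm_sq {W : Type*} [AddCommGroup W] [Module ℂ W]
    [FiniteDimensional ℂ W] (c : InnerProductSpace.Core ℂ W) :
    ∃ S : W ≃ₗ[ℂ] EuclideanSpace ℂ (Fin (finrank ℂ W)), ∀ x, ‖S x‖ ^ 2 = (c.inner x x).re := by
  let : NormedAddCommGroup W := c.toNormedAddCommGroup
  let : InnerProductSpace ℂ W := InnerProductSpace.ofCore c.toCore
  refine ⟨(stdOrthonormalBasis ℂ W).repr.toLinearEquiv, fun x => ?_⟩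
  change ‖(stdOrthonormalBasis ℂ W).repr x‖ ^ 2 = _
  rw [LinearIsometryEquiv.norm_map, ← inner_self_eq_norm_sq (𝕜 := ℂ)]
  rfl

variable {V : Type*} [NormedAddCommGroup V] [NormedSpace ℂ V] [FiniteDimensional ℂ V]

/-- A real quadratic form whose Hermitian part is positive definite is the sum of a squared norm in
complex linear coordinates and the real part of a complex quadratic form. -/
theorem exists_hermitian_split (H : V →L[ℝ] V →L[ℝ] ℝ) (hsymm : ∀ x y, H x y = H y x)
    (hpos : ∀ x, x ≠ 0 → 0 < H x x + H (I • x) (I • x)) :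
    ∃ (S : V ≃L[ℂ] EuclideanSpace ℂ (Fin (finrank ℂ V))) (M : V →L[ℂ] V →L[ℂ] ℂ),
      ∀ x, (1 / 2) * H x x = ‖S x‖ ^ 2 + (M x x).re := by
  have hII : ∀ x : V, I • I • x = -x := fun x => by simp [smul_smul]
  have hsm : ∀ (r : ℂ) (x : V), r • x = r.re • x + r.im • I • x := fun r x => by
    rw [← Complex.coe_smul, ← Complex.coe_smul, smul_smul, ← add_smul, Complex.re_add_im]
  have hIr : ∀ (r : ℝ) (x : V), I • r • x = r • I • x := fun r x => smul_comm _ _ _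
  let c : InnerProductSpace.Core ℂ V :=
    { inner := fun x y => ⟨(1 / 4) * (H x y + H (I • x) (I • y)),
        -((1 / 4) * (H x (I • y) - H (I • x) y))⟩
      conj_inner_symm := fun x y => by
        apply Complex.ext
        · simp [hsymm y x, hsymm (I • y) (I • x)]
        · simp [hsymm y, hsymm (I • y)]
          ring
      re_inner_nonneg := fun x => by
        rcases eq_or_ne x 0 with rfl | hx
        · simp
        · have := hpos x hx
          change 0 ≤ (1 / 4) * (H x x + H (I • x) (I • x))
          linarith
      add_left := fun x y z => by
        apply Complex.ext <;> simp <;> ring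
      smul_left := fun x y r => by
        apply Complex.ext
        · simp only [hsm r, smul_add, hIr, hII, map_add, map_smul, map_neg,
            _root_.add_apply, _root_.smul_apply, _root_.neg_apply, Complex.mul_re, Complex.conj_re, Complex.conj_im, smul_eq_mul]
          ring
        · simp only [hsm r, smul_add, hIr, hII, map_add, map_smul, map_neg,
            _root_.add_apply, _root_.smul_apply, _root_.neg_apply, Complex.mul_im, Complex.conj_re, Complex.conj_im, smul_eq_mul]
          ring
      definite := fun x hx => by
        by_contra hne
        have h1 := hpos x hne
        have h2 : (1 / 4) * (H x x + H (I • x) (I • x)) = 0 := congrArg Complex.re hx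
        linarith }
  obtain ⟨S, hS⟩ := exists_linearEquiv_norm_sq c
  let M : V →ₗ[ℂ] V →ₗ[ℂ] ℂ := LinearMap.mk₂ ℂ
    (fun x y => ⟨(1 / 4) * (H x y - H (I • x) (I • y)),
        -((1 / 4) * (H x (I • y) + H (I • x) y))⟩)
    (fun x y z => by apply Complex.ext <;> simp <;> ring)
    (fun r x y => by
      apply Complex.ext
      · simp only [hsm r, smul_add, hIr, hII, map_add, map_smul, map_neg,
            _root_.add_apply, _root_.smul_apply, _root_.neg_apply, Complex.mul_re, smul_eq_mul]
        ring
      · simp only [hsm r, smul_add, hIr, hII, map_add, map_smul, map_neg,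
            _root_.add_apply, _root_.smul_apply, _root_.neg_apply, Complex.mul_im, smul_eq_mul]
        ring)
    (fun x y z => by apply Complex.ext <;> simp <;> ring)
    (fun r x y => by
      apply Complex.ext
      · simp only [hsm r, smul_add, hIr, hII, map_add, map_smul, map_neg, Complex.mul_re, smul_eq_mul]
        ring
      · simp only [hsm r, smul_add, hIr, hII, map_add, map_smul, map_neg, Complex.mul_im, smul_eq_mul]
        ring)
  refine ⟨S.toContinuousLinearEquiv, M.toContinuousBilinearMap, fun x => ?_⟩
  have h1 : ‖S x‖ ^ 2 = (1 / 4) * (H x x + H (I • x) (I • x)) := hS x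
  have h2 : (M x x).re = (1 / 4) * (H x x - H (I • x) (I • x)) := rfl
  rw [LinearMap.toContinuousBilinearMap_apply, h2, LinearEquiv.coe_toContinuousLinearEquiv', h1]
  ring

set_option maxHeartbeats 400000 in
/-- Holomorphic coordinates in which a function with given Taylor polynomial of order two takes the
form `‖x‖ ^ 2 - 2 * re ⟪e, x⟫ + o(‖x‖ ^ 2)`. -/
theorem exists_normalForm_of_split {W : Type*} [NormedAddCommGroup W] [InnerProductSpace ℂ W]
    [FiniteDimensional ℂ W] {σ : V → ℝ} (hσ : ContDiffAt ℝ 3 σ 0) {l : V →L[ℝ] ℝ} (hl : l ≠ 0)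
    (S : V ≃L[ℂ] W) (M : V →L[ℂ] V →L[ℂ] ℂ)
    (hσo : (fun x => σ x - l x - (‖S x‖ ^ 2 + (M x x).re)) =o[𝓝 0] fun x => ‖x‖ ^ 2) :
    ∃ (e : W) (E : W → ℝ) (P : OpenPartialHomeomorph V W) (t : ℝ),
      ‖e‖ = 1 ∧ 0 < t ∧ (0 : V) ∈ P.source ∧ P 0 = 0 ∧ ContDiff ℂ 3 P ∧
      ContDiffAt ℂ 3 P.symm 0 ∧ ContDiffAt ℝ 3 E 0 ∧ (E =o[𝓝 0] fun x => ‖x‖ ^ 2) ∧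
      ∀ x, modelRho e E x = t * σ (P.symm x) := by
  have := FiniteDimensional.complete ℂ V
  obtain ⟨T, hT⟩ := exists_real_riesz (V := W)
  set b := T (l ∘L (S.symm : _ →L[ℂ] V).restrictScalars ℝ) with hbdef
  have hb : ∀ x, (inner ℂ b (S x)).re = l x := fun x => by
    rw [hbdef, hT]
    simp
  have hb0 : b ≠ 0 := by
    rintro h0
    refine hl (ContinuousLinearMap.ext fun x => ?_)
    rw [← hb x, h0]
    simp
  have hbn : 0 < ‖b‖ := norm_pos_iff.2 hb0
  -- the scaling factor that normalizes the linear part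
  set s : ℝ := 2 / ‖b‖ with hs
  have hs0 : 0 < s := by positivity
  set u := (((1 / ‖b‖ : ℝ) : ℂ)) • b with hu
  have hun : ‖u‖ = 1 := by
    rw [hu, norm_smul, Complex.norm_real, Real.norm_eq_abs, abs_of_pos (by positivity)]
    field_simp
  have hub : ((s : ℂ)) • b = (2 : ℂ) • u := by
    rw [hu, smul_smul, hs]
    congr 1
    push_cast
    ring
  set w : V → W :=
    fun x => ((1 / 2 : ℂ) * (s : ℂ) ^ 2 * M x x) • u with hw
  set Φ : V → W := fun x => (s : ℂ) • S x + w x with hΦ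
  have hwc : ContDiff ℂ 3 w := by
    have hM : ContDiff ℂ 3 fun x => M x x := M.contDiff.clm_apply contDiff_id
    exact (contDiff_const.mul hM).smul contDiff_const
  have hΦc : ContDiff ℂ 3 Φ := (S.contDiff.const_smul _).add hwc
  have hw0 : w 0 = 0 := by simp [hw]
  have hΦ0 : Φ 0 = 0 := by simp [hΦ, hw0]
  have hwO : w =O[𝓝 0] fun x => ‖x‖ ^ 2 := by
    refine IsBigO.of_bound (1 / 2 * s ^ 2 * ‖M‖) (Eventually.of_forall fun x => ?_)
    rw [hw, norm_smul, hun, mul_one, norm_mul, norm_mul, norm_pow, Complex.norm_real,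
      Real.norm_eq_abs, abs_of_pos hs0, Real.norm_eq_abs, abs_of_nonneg (by positivity)]
    have h1 := M.le_opNorm₂ x x
    have h2 : ‖(1 / 2 : ℂ)‖ = 1 / 2 := by norm_num
    rw [h2, mul_assoc _ ‖M‖]
    gcongr
    linarith
  have hwd : HasFDerivAt w (0 : V →L[ℂ] _) 0 := by
    refine HasFDerivAt.of_isLittleO ?_
    simp only [hw0, sub_zero, _root_.zero_apply]
    exact hwO.trans_isLittleO (isLittleO_norm_pow_id one_lt_two)
  let S' : V ≃L[ℂ] W :=
    S.trans (ContinuousLinearEquiv.smulLeft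
      (Units.mk0 (s : ℂ) (Complex.ofReal_ne_zero.2 hs0.ne')))
  have hΦd : HasFDerivAt Φ (S' : V →L[ℂ] W) 0 := by
    have h1 := (S.hasFDerivAt (x := (0 : V))).const_smul (s : ℂ)
    refine (h1.add hwd).congr_fderiv ?_
    ext x
    simp [S']
  have h3 : (3 : WithTop ℕ∞) ≠ 0 := by norm_num
  set P := hΦc.contDiffAt.toOpenPartialHomeomorph Φ hΦd h3 with hP
  have hPΦ : (P : V → _) = Φ := rfl
  have hsrc : (0 : V) ∈ P.source := ContDiffAt.mem_toOpenPartialHomeomorph_source _ hΦd h3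
  have hsymmc : ContDiffAt ℂ 3 P.symm 0 := by
    have := hΦc.contDiffAt.to_localInverse hΦd h3
    rwa [hΦ0] at this
  have htgt : (0 : W) ∈ P.target := by
    have := P.map_source hsrc
    rwa [hPΦ, hΦ0] at this
  have hsymm0 : P.symm 0 = 0 := by
    have := P.left_inv hsrc
    rwa [hPΦ, hΦ0] at this
  set E : W → ℝ :=
    fun x => s ^ 2 * σ (P.symm x) - ‖x‖ ^ 2 - 2 * (inner ℂ u x).re with hE
  refine ⟨-u, E, P, s ^ 2, by rw [norm_neg, hun], by positivity, hsrc, hΦ0, hΦc, hsymmc, ?_, ?_,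
    fun x => ?_⟩
  · have h1 : ContDiffAt ℝ 3 (fun x => σ (P.symm x)) 0 := by
      refine ContDiffAt.comp (0 : W) ?_
        (hsymmc.restrict_scalars ℝ)
      rwa [hsymm0]
    have h2 : ContDiffAt ℝ 3 (fun x => (inner ℂ u x).re) 0 :=
      (Complex.reCLM ∘L (innerSL ℂ u).restrictScalars ℝ).contDiff.contDiffAt
    exact ((contDiffAt_const.mul h1).sub (contDiff_norm_sq ℂ).contDiffAt).sub
      (contDiffAt_const.mul h2)
  · have hG : (fun ξ => s ^ 2 * σ ξ - ‖Φ ξ‖ ^ 2 - 2 * (inner ℂ u (Φ ξ)).re) =o[𝓝 0]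
        fun ξ => ‖ξ‖ ^ 2 := by
      have h1 : (fun ξ => ‖(s : ℂ) • S ξ‖ ^ 2 - ‖Φ ξ‖ ^ 2) =o[𝓝 0] fun ξ => ‖ξ‖ ^ 2 := by
        have h2 : (fun ξ => 2 * ‖(s : ℂ) • S ξ‖ + ‖w ξ‖) =o[𝓝 0] fun _ => (1 : ℝ) := by
          rw [isLittleO_one_iff]
          have hc : Continuous fun ξ => 2 * ‖(s : ℂ) • S ξ‖ + ‖w ξ‖ :=
            (continuous_const.mul (S.continuous.const_smul _).norm).add hwc.continuous.norm
          have := hc.tendsto 0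
          simpa [hw0] using this
        have h4 := hwO.norm_left.mul_isLittleO h2
        simp only [mul_one] at h4
        refine IsBigO.trans_isLittleO (IsBigO.of_bound 1 (Eventually.of_forall fun ξ => ?_)) h4
        have h5 : |‖Φ ξ‖ - ‖(s : ℂ) • S ξ‖| ≤ ‖w ξ‖ := by
          have := abs_norm_sub_norm_le (Φ ξ) ((s : ℂ) • S ξ)
          rwa [hΦ, add_sub_cancel_left] at this
        have h6 : ‖Φ ξ‖ + ‖(s : ℂ) • S ξ‖ ≤ 2 * ‖(s : ℂ) • S ξ‖ + ‖w ξ‖ := by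
          have := norm_add_le ((s : ℂ) • S ξ) (w ξ)
          change ‖(s : ℂ) • S ξ + w ξ‖ + _ ≤ _
          linarith
        rw [one_mul, Real.norm_eq_abs, Real.norm_eq_abs, abs_of_nonneg (a := ‖w ξ‖ * _)
          (by positivity), abs_sub_comm, sq_sub_sq, abs_mul, abs_of_nonneg (a := ‖Φ ξ‖ + _)
          (by positivity), mul_comm]
        gcongr
      have h2 := (hσo.const_mul_left (s ^ 2)).add h1
      refine h2.congr_left fun ξ => ?_
      have h4 : ‖(s : ℂ) • S ξ‖ ^ 2 = s ^ 2 * ‖S ξ‖ ^ 2 := by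
        rw [norm_smul, Complex.norm_real, mul_pow, Real.norm_eq_abs, sq_abs]
      have h5 : 2 * (inner ℂ u (Φ ξ)).re = s ^ 2 * l ξ + s ^ 2 * (M ξ ξ).re := by
        have h6 : 2 * inner ℂ u ((s : ℂ) • S ξ) = (s : ℂ) ^ 2 * inner ℂ b (S ξ) := by
          have h7 : 2 * inner ℂ u (S ξ) = (s : ℂ) * inner ℂ b (S ξ) := by
            have := congrArg (fun v => inner ℂ v (S ξ)) hub
            simp only [inner_smul_left, Complex.conj_ofReal, map_ofNat] at this
            exact this.symm
          rw [inner_smul_right]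
          linear_combination (s : ℂ) * h7
        have h7 : 2 * inner ℂ u (w ξ) = (s : ℂ) ^ 2 * M ξ ξ := by
          have : inner ℂ u u = (1 : ℂ) := inner_self_of_norm_eq_one hun
          rw [hw, inner_smul_right, this]
          ring
        have h8 : 2 * inner ℂ u (Φ ξ) = ((s ^ 2 : ℝ) : ℂ) * (inner ℂ b (S ξ) + M ξ ξ) := by
          rw [hΦ, inner_add_right]
          push_cast
          linear_combination h6 + h7
        have h9 := congrArg Complex.re h8
        rw [Complex.re_ofReal_mul, Complex.add_re, hb] at h9
        have h10 : (2 * inner ℂ u (Φ ξ)).re = 2 * (inner ℂ u (Φ ξ)).re := by simp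
        linarith
      rw [h4, h5]
      ring
    have hO : P.symm =O[𝓝 0] fun x => x := by
      have := (hsymmc.differentiableAt (by norm_num)).hasFDerivAt.isBigO_sub
      simpa [hsymm0] using this
    have hcont : Tendsto P.symm (𝓝 0) (𝓝 0) := by
      have := hsymmc.continuousAt.tendsto
      rwa [hsymm0] at this
    have h1 := (hG.comp_tendsto hcont).trans_isBigO (hO.norm_norm.pow 2)
    refine h1.congr' ?_ EventuallyEq.rfl
    filter_upwards [P.open_target.mem_nhds htgt] with x hx
    have : Φ (P.symm x) = x := P.right_inv hx
    simp only [comp_apply, this, hE]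
  · simp only [modelRho, hE, inner_neg_left, Complex.neg_re]
    ring

/-- Near a strongly pseudoconvex point, holomorphic coordinates bring a defining function into the
form `‖x‖ ^ 2 - 2 * re ⟪e, x⟫ + o(‖x‖ ^ 2)`. -/
theorem exists_normalForm {σ : V → ℝ} (hσ : ContDiffAt ℝ 3 σ 0) {l : V →L[ℝ] ℝ} (hl : l ≠ 0)
    {H : V →L[ℝ] V →L[ℝ] ℝ} (hsymm : ∀ x y, H x y = H y x)
    (hpos : ∀ x, x ≠ 0 → 0 < H x x + H (I • x) (I • x))
    (hσo : (fun x => σ x - l x - (1 / 2) * H x x) =o[𝓝 0] fun x => ‖x‖ ^ 2) :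
    ∃ (e : EuclideanSpace ℂ (Fin (finrank ℂ V))) (E : EuclideanSpace ℂ (Fin (finrank ℂ V)) → ℝ)
      (P : OpenPartialHomeomorph V (EuclideanSpace ℂ (Fin (finrank ℂ V)))) (t : ℝ),
      ‖e‖ = 1 ∧ 0 < t ∧ (0 : V) ∈ P.source ∧ P 0 = 0 ∧ ContDiff ℂ 3 P ∧
      ContDiffAt ℂ 3 P.symm 0 ∧ ContDiffAt ℝ 3 E 0 ∧ (E =o[𝓝 0] fun x => ‖x‖ ^ 2) ∧
      ∀ x, modelRho e E x = t * σ (P.symm x) := by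
  obtain ⟨S, M, hSM⟩ := exists_hermitian_split H hsymm hpos
  simp only [hSM] at hσo
  exact exists_normalForm_of_split hσ hl S M hσo

end NormalForm

section LocalRigidity

open Asymptotics Module

variable {V : Type*} [NormedAddCommGroup V] [NormedSpace ℂ V] [FiniteDimensional ℂ V]

/-- A Hermitian form that is positive on the complex kernel of a functional becomes positive
definite after adding a large multiple of the square of the functional. -/
theorem exists_levi_correction (H : V →L[ℝ] V →L[ℝ] ℝ) (l : V →L[ℝ] ℝ)
    (hpos : ∀ x, x ≠ 0 → l x = 0 → l (I • x) = 0 → 0 < H x x + H (I • x) (I • x)) :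
    ∃ A : ℕ, ∀ x, x ≠ 0 →
      0 < H x x + H (I • x) (I • x) + A * (l x ^ 2 + l (I • x) ^ 2) := by
  have := FiniteDimensional.proper ℂ V
  set q : ℕ → V → ℝ := fun A x => H x x + H (I • x) (I • x) + A * (l x ^ 2 + l (I • x) ^ 2)
    with hq
  have hqc : ∀ A, Continuous (q A) := fun A => by
    have hI : Continuous fun x : V => I • x := continuous_const_smul I
    have h1 : Continuous fun x => H x x := H.continuous.clm_apply continuous_id
    have h2 : Continuous fun x => H (I • x) (I • x) := h1.comp hI
    exact (h1.add h2).add (continuous_const.mul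
      ((l.continuous.pow 2).add ((l.continuous.comp hI).pow 2)))
  have hmono : ∀ x, Monotone fun A => q A x := fun x A B hAB => by
    have : (A : ℝ) ≤ B := by exact_mod_cast hAB
    simp only [hq]
    gcongr
  obtain ⟨A, hA⟩ := (isCompact_sphere (0 : V) 1).elim_directed_cover (fun A => {x | 0 < q A x})
    (fun A => isOpen_lt continuous_const (hqc A))
    (fun x hx => by
      have hx0 : x ≠ 0 := by
        rintro rfl
        simp at hx
      rw [mem_iUnion]
      by_cases hk : l x ^ 2 + l (I • x) ^ 2 = 0
      · have h1 : l x = 0 := by nlinarith [sq_nonneg (l x), sq_nonneg (l (I • x))]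
        have h2 : l (I • x) = 0 := by nlinarith [sq_nonneg (l x), sq_nonneg (l (I • x))]
        refine ⟨0, ?_⟩
        simpa [hq] using hpos x hx0 h1 h2
      · have hk' : 0 < l x ^ 2 + l (I • x) ^ 2 := lt_of_le_of_ne (by positivity) (Ne.symm hk)
        obtain ⟨A, hA⟩ := exists_nat_gt
          (-(H x x + H (I • x) (I • x)) / (l x ^ 2 + l (I • x) ^ 2))
        refine ⟨A, ?_⟩
        rw [div_lt_iff₀ hk'] at hA
        change 0 < q A x
        simp only [hq]
        linarith)
    (directed_of_isDirected_le fun A B hAB x hx => lt_of_lt_of_le hx (hmono x hAB))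
  refine ⟨A, fun x hx => ?_⟩
  have hn : 0 < ‖x‖ := norm_pos_iff.2 hx
  have hy : (‖x‖⁻¹ : ℝ) • x ∈ sphere (0 : V) 1 := by
    simp [norm_smul, hn.ne']
  have h1 : 0 < q A ((‖x‖⁻¹ : ℝ) • x) := hA hy
  have h2 : q A ((‖x‖⁻¹ : ℝ) • x) = (‖x‖⁻¹) ^ 2 * q A x := by
    simp only [hq, smul_comm I (‖x‖⁻¹ : ℝ) x, map_smul, _root_.smul_apply, smul_eq_mul]
    ring
  rw [h2] at h1
  exact pos_of_mul_pos_right h1 (by positivity)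

/-- Near a strongly pseudoconvex point a defining function can be modified, without changing its
sublevel set, so that it has a normal form in holomorphic coordinates. -/
theorem exists_normalForm_of_levi {ρ : V → ℝ} (hρ : ContDiffAt ℝ 3 ρ 0) (hρ0 : ρ 0 = 0)
    (hd : fderiv ℝ ρ 0 ≠ 0)
    (hL : ∀ x, x ≠ 0 → fderiv ℝ ρ 0 x = 0 → fderiv ℝ ρ 0 (I • x) = 0 →
      0 < fderiv ℝ (fderiv ℝ ρ) 0 x x + fderiv ℝ (fderiv ℝ ρ) 0 (I • x) (I • x)) :
    ∃ (e : EuclideanSpace ℂ (Fin (finrank ℂ V))) (E : EuclideanSpace ℂ (Fin (finrank ℂ V)) → ℝ)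
      (P : OpenPartialHomeomorph V (EuclideanSpace ℂ (Fin (finrank ℂ V)))) (σ : V → ℝ),
      ‖e‖ = 1 ∧ (∀ᶠ x in 𝓝 0, (σ x < 0 ↔ ρ x < 0)) ∧ (0 : V) ∈ P.source ∧ P 0 = 0 ∧
      ContDiff ℂ 3 P ∧ ContDiffAt ℂ 3 P.symm 0 ∧ ContDiffAt ℝ 3 E 0 ∧
      (E =o[𝓝 0] fun x => ‖x‖ ^ 2) ∧ ∀ x, modelRho e E x = σ (P.symm x) := by
  set l := fderiv ℝ ρ 0 with hl
  set H := fderiv ℝ (fderiv ℝ ρ) 0 with hH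
  obtain ⟨A, hA⟩ := exists_levi_correction H l hL
  have hsymm : ∀ x y, H x y = H y x := fun x y =>
    (hρ.isSymmSndFDerivAt (by simp; norm_num)).eq x y
  set a : ℝ := A / 2 with ha
  set H' : V →L[ℝ] V →L[ℝ] ℝ := H + (A : ℝ) • l.smulRight l with hH'
  have hH'_apply : ∀ x y, H' x y = H x y + A * (l x * l y) := fun x y => by
    simp [hH']
  have htay : (fun x => ρ x - l x - (1 / 2) * H x x) =o[𝓝 0] fun x => ‖x‖ ^ 2 := by
    have := isLittleO_taylor_two (hρ.of_le (by norm_num : (2 : WithTop ℕ∞) ≤ 3))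
    refine this.congr_left fun x => ?_
    rw [hρ0, smul_eq_mul, sub_zero]
  have hlin : (fun x => ρ x - l x) =o[𝓝 0] fun x => ‖x‖ := by
    have := (hρ.differentiableAt (by norm_num)).hasFDerivAt.isLittleO
    simpa [hρ0] using this.norm_right
  have hplus : (fun x => ρ x + l x) =O[𝓝 0] fun x => ‖x‖ := by
    have h1 : (fun x => l x) =O[𝓝 0] fun x => ‖x‖ := (l.isBigO_id _).norm_right
    refine (hlin.isBigO.add (h1.const_mul_left 2)).congr_left fun x => ?_
    ring
  obtain ⟨e, E, P, t, he, ht, hP⟩ := exists_normalForm (σ := fun x => ρ x + a * ρ x ^ 2)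
    (hρ.add (contDiffAt_const.mul (hρ.pow 2))) hd (H := H')
    (fun x y => by rw [hH'_apply, hH'_apply, hsymm x y, mul_comm (l x)])
    (fun x hx => by
      rw [hH'_apply, hH'_apply]
      have := hA x hx
      linarith)
    (by
      have h1 := (hlin.mul_isBigO hplus).const_mul_left a
      have h2 := htay.add (h1.congr_right fun x => (sq ‖x‖).symm)
      refine h2.congr_left fun x => ?_
      rw [hH'_apply, ha]
      ring)
  refine ⟨e, E, P, fun x => t * (ρ x + a * ρ x ^ 2), he, ?_, hP⟩
  have hc : ContinuousAt (fun x => 1 + a * ρ x) 0 :=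
    continuousAt_const.add (continuousAt_const.mul hρ.continuousAt)
  have h1 : ∀ᶠ x in 𝓝 (0 : V), 0 < 1 + a * ρ x :=
    hc.eventually (lt_mem_nhds (by simp [hρ0]))
  filter_upwards [h1] with x hx
  have : t * (ρ x + a * ρ x ^ 2) = (t * (1 + a * ρ x)) * ρ x := by ring
  rw [this]
  have h2 := mul_pos ht hx
  exact ⟨fun h => by_contra fun h3 => absurd h (not_lt.2 (mul_nonneg h2.le (not_lt.1 h3))),
    fun h => mul_neg_of_pos_of_neg h2 h⟩

/-- **Local rigidity**: a holomorphic self-map tangent to the identity to third order at a strongly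
pseudoconvex boundary point is the identity on some nonempty open set. -/
theorem exists_eventually_eq_self (hV : 2 ≤ finrank ℂ V) {ρ : V → ℝ} (hρ : ContDiffAt ℝ 3 ρ 0)
    (hρ0 : ρ 0 = 0) (hd : fderiv ℝ ρ 0 ≠ 0)
    (hL : ∀ x, x ≠ 0 → fderiv ℝ ρ 0 x = 0 → fderiv ℝ ρ 0 (I • x) = 0 →
      0 < fderiv ℝ (fderiv ℝ ρ) 0 x x + fderiv ℝ (fderiv ℝ ρ) 0 (I • x) (I • x))
    {F : V → V} (hF : DifferentiableOn ℂ F {x | ρ x < 0})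
    (hFm : MapsTo F {x | ρ x < 0} {x | ρ x < 0})
    (hFo : ∀ ε > 0, ∃ δ > 0, ∀ x, ρ x < 0 → ‖x‖ < δ → ‖F x - x‖ ≤ ε * ‖x‖ ^ 3) :
    ∃ z, ρ z < 0 ∧ ∀ᶠ x in 𝓝 z, F x = x := by
  obtain ⟨e, E, P, σ, he, hσρ, hsrc, hP0, hPc, hPs, hE, hEo, hmodel⟩ :=
    exists_normalForm_of_levi hρ hρ0 hd hL
  obtain ⟨η, C, r, hM⟩ := exists_modelData he hE hEo
  have hsymm0 : P.symm 0 = 0 := by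
    have := P.left_inv hsrc
    rwa [hP0] at this
  have htgt : (0 : EuclideanSpace ℂ (Fin (finrank ℂ V))) ∈ P.target := by
    have := P.map_source hsrc
    rwa [hP0] at this
  obtain ⟨K, s, hs, hK⟩ := ((hPc.contDiffAt (x := (0 : V))).hasStrictFDerivAt
    (by norm_num)).exists_lipschitzOnWith
  have hPr : ∀ᶠ x in 𝓝 (0 : V), ‖P x‖ < r := by
    have : ContinuousAt (fun x => ‖P x‖) 0 := hPc.continuous.norm.continuousAt
    exact this.eventually (gt_mem_nhds (by simpa [hP0] using hM.r_pos))
  obtain ⟨R, hR, hRball⟩ := Metric.eventually_nhds_iff_ball.1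
    (hσρ.and (hPr.and ((P.open_source.eventually_mem hsrc).and hs)))
  obtain ⟨δ, hδ, hFδ⟩ := hFo 1 one_pos
  set R₁ := min (R / 2) (min δ 1) with hR₁
  have hR₁pos : 0 < R₁ := by positivity
  have hRmem : ∀ x, ‖x‖ < R₁ → ‖x‖ < R ∧ (ρ x < 0 → ‖F x‖ < R) := fun x hx => by
    obtain ⟨h1, h2, h3⟩ : ‖x‖ < R / 2 ∧ ‖x‖ < δ ∧ ‖x‖ < 1 := by
      simpa [hR₁, lt_min_iff] using hx
    refine ⟨by linarith, fun hx' => ?_⟩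
    have h4 := hFδ x hx' h2
    have h5 : ‖x‖ ^ 3 ≤ ‖x‖ := pow_le_of_le_one (norm_nonneg x) h3.le (by norm_num)
    have h6 := norm_le_norm_add_norm_sub' (F x) x
    linarith
  obtain ⟨C', hC', hsymmO⟩ : ∃ C' > 0, ∀ᶠ x in 𝓝 0, ‖P.symm x‖ ≤ C' * ‖x‖ := by
    have h1 := (hPs.differentiableAt (by norm_num)).hasFDerivAt.isBigO_sub
    simp only [hsymm0, sub_zero] at h1
    obtain ⟨C', hC', h2⟩ := h1.exists_pos
    exact ⟨C', hC', h2.bound⟩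
  have hsymmR : ∀ᶠ x in 𝓝 0, ‖P.symm x‖ < R₁ :=
    hPs.continuousAt.norm.eventually (gt_mem_nhds (by simpa [hsymm0] using hR₁pos))
  have hsymmd : ∀ᶠ x in 𝓝 0, DifferentiableAt ℂ P.symm x :=
    (hPs.eventually (by simp)).mono fun x hx => hx.differentiableAt (by norm_num)
  obtain ⟨r₀, hr₀, hrball⟩ := Metric.eventually_nhds_iff_ball.1
    (hsymmO.and (hsymmR.and (hsymmd.and (P.open_target.eventually_mem htgt))))
  have hD : ∀ x, modelRho e E x < 0 → ‖x‖ < r₀ → ρ (P.symm x) < 0 := fun x hx hxr => by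
    rw [hmodel] at hx
    have h1 := (hRmem _ (hrball x (mem_ball_zero_iff.2 hxr)).2.1).1
    exact (hRball _ (mem_ball_zero_iff.2 h1)).1.1 hx
  obtain ⟨U, hUo, ⟨x₀, hx₀⟩, hUsub, hUf⟩ := exists_open_eq_self hM (r₁ := min r₀ r)
    (f := fun x => P (F (P.symm x))) (lt_min hr₀ hM.r_pos) (min_le_right _ _)
    (fun x hx => by
      have hxr := lt_of_lt_of_le (mem_ball_zero_iff.1 hx.2) (min_le_left r₀ r)
      have h1 := hrball x (mem_ball_zero_iff.2 hxr)
      have h2 : DifferentiableWithinAt ℂ (fun x => F (P.symm x))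
          ({x | modelRho e E x < 0} ∩ ball 0 (min r₀ r)) x :=
        (hF _ (hD x hx.1 hxr)).comp x h1.2.2.1.differentiableWithinAt fun y hy =>
          hD y hy.1 (lt_of_lt_of_le (mem_ball_zero_iff.1 hy.2) (min_le_left r₀ r))
      exact ((hPc.differentiable (by norm_num)).differentiableAt).comp_differentiableWithinAt x h2)
    (fun x hx hxr => by
      have hxr' := lt_of_lt_of_le hxr (min_le_left r₀ r)
      have h1 := hrball x (mem_ball_zero_iff.2 hxr')
      have h2 := hRball _ (mem_ball_zero_iff.2 ((hRmem _ h1.2.1).2 (hD x hx hxr')))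
      rw [hmodel, P.left_inv h2.2.2.1]
      exact ⟨h2.1.2 (hFm (hD x hx hxr')), h2.2.1.le⟩)
    (fun ε hε => by
      obtain ⟨δ', hδ', h⟩ := hFo (ε / (K * C' ^ 3 + 1)) (by positivity)
      refine ⟨min r₀ (δ' / C'), by positivity, fun x hx hxr => ?_⟩
      obtain ⟨hxr', hxδ⟩ := lt_min_iff.1 hxr
      have h1 := hrball x (mem_ball_zero_iff.2 hxr')
      have h2 := hRball _ (mem_ball_zero_iff.2 ((hRmem _ h1.2.1).2 (hD x hx hxr')))
      have h3 := hRball _ (mem_ball_zero_iff.2 ((hRmem _ h1.2.1).1))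
      have h4 := hK.norm_sub_le h2.2.2.2 h3.2.2.2
      rw [P.right_inv h1.2.2.2] at h4
      have h5 := h _ (hD x hx hxr') (h1.1.trans_lt (by rwa [lt_div_iff₀' hC'] at hxδ))
      calc ‖P (F (P.symm x)) - x‖ ≤ K * (ε / (K * C' ^ 3 + 1) * (C' * ‖x‖) ^ 3) := by
            refine h4.trans ?_
            gcongr
            refine h5.trans ?_
            gcongr
            exact h1.1
        _ = (K * C' ^ 3) / (K * C' ^ 3 + 1) * (ε * ‖x‖ ^ 3) := by
            field_simp
        _ ≤ 1 * (ε * ‖x‖ ^ 3) := by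
            gcongr
            rw [div_le_one (by positivity)]
            linarith
        _ = ε * ‖x‖ ^ 3 := one_mul _)
    (by
      have h1 := Submodule.finrank_add_finrank_orthogonal
        (ℂ ∙ e : Submodule ℂ (EuclideanSpace ℂ (Fin (finrank ℂ V))))
      have h2 : finrank ℂ (ℂ ∙ e : Submodule ℂ _) = 1 :=
        finrank_span_singleton (by rintro rfl; simp at he)
      rw [h2, finrank_euclideanSpace_fin] at h1
      have : Nontrivial (ℂ ∙ e : Submodule ℂ _)ᗮ :=
        Module.nontrivial_of_finrank_pos (R := ℂ) (by omega)
      obtain ⟨b, hb⟩ := exists_ne (0 : (ℂ ∙ e : Submodule ℂ _)ᗮ)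
      exact ⟨b, fun h => hb (Subtype.ext h), Submodule.mem_orthogonal_singleton_iff_inner_right.1 b.2⟩)
  have hUr : ∀ x ∈ U, modelRho e E x < 0 ∧ ‖x‖ < r₀ := fun x hx =>
    ⟨(hUsub hx).1, lt_of_lt_of_le (mem_ball_zero_iff.1 (hUsub hx).2) (min_le_left r₀ r)⟩
  have hx₀r := hUr x₀ hx₀
  have hx₀t := (hrball x₀ (mem_ball_zero_iff.2 hx₀r.2)).2.2.2
  refine ⟨P.symm x₀, hD x₀ hx₀r.1 hx₀r.2, ?_⟩
  have hPU : ∀ᶠ x in 𝓝 (P.symm x₀), P x ∈ U :=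
    hPc.continuous.continuousAt.eventually_mem (hUo.mem_nhds (by rwa [P.right_inv hx₀t]))
  filter_upwards [hPU, P.open_source.eventually_mem (P.map_target hx₀t)] with x hx hxs
  have h1 := hUr _ hx
  have h2 := hD _ h1.1 h1.2
  have h3 := (hrball _ (mem_ball_zero_iff.2 h1.2)).2.1
  have h4 := hUf _ hx
  simp only [P.left_inv hxs] at h2 h3 h4
  exact P.injOn (hRball _ (mem_ball_zero_iff.2 ((hRmem _ h3).2 h2))).2.2.1 hxs h4

end LocalRigidity

section Identity

variable {V : Type*} [NormedAddCommGroup V] [NormedSpace ℂ V]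
  {W : Type*} [NormedAddCommGroup W] [NormedSpace ℂ W] [CompleteSpace W]

/-- Two holomorphic maps on a convex open set that agree near a point agree everywhere. -/
theorem DifferentiableOn.eqOn_of_convex_of_eventuallyEq {B : Set V} (hB : IsOpen B)
    (hBc : Convex ℝ B) {f g : V → W} (hf : DifferentiableOn ℂ f B) (hg : DifferentiableOn ℂ g B)
    {w : V} (hw : w ∈ B) (hfg : f =ᶠ[𝓝 w] g) : EqOn f g B := by
  intro y hy
  set γ : ℂ → V := fun t => w + t • (y - w) with hγ
  have hγd : Differentiable ℂ γ := (differentiable_id.smul_const _).const_add _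
  have hγ0 : γ 0 = w := by simp [hγ]
  have hγ1 : γ 1 = y := by simp [hγ]
  have hconv : Convex ℝ (γ ⁻¹' B) := by
    intro s hs t ht a b ha hb hab
    have h : γ (a • s + b • t) = a • γ s + b • γ t := by
      simp only [hγ, smul_add, add_smul, smul_assoc]
      have : w = a • w + b • w := by rw [← add_smul, hab, one_smul]
      nth_rewrite 1 [this]
      abel
    rw [mem_preimage, h]
    exact hBc hs ht ha hb hab
  have hopen : IsOpen (γ ⁻¹' B) := hB.preimage hγd.continuous
  have hfa := (hf.comp hγd.differentiableOn (mapsTo_preimage γ B)).analyticOnNhd hopen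
  have hga := (hg.comp hγd.differentiableOn (mapsTo_preimage γ B)).analyticOnNhd hopen
  have h0 : (f ∘ γ) =ᶠ[𝓝 0] (g ∘ γ) := by
    have : Tendsto γ (𝓝 0) (𝓝 w) := by
      have := hγd.continuous.tendsto 0
      rwa [hγ0] at this
    exact this.eventually hfg
  have h1 := hfa.eqOn_of_preconnected_of_eventuallyEq hga hconv.isPreconnected
    (z₀ := 0) (by rw [mem_preimage, hγ0]; exact hw) h0 (by rw [mem_preimage, hγ1]; exact hy :
      (1 : ℂ) ∈ γ ⁻¹' B)
  simpa [hγ1] using h1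

/-- **Identity theorem** for holomorphic maps on a preconnected open set. -/
theorem DifferentiableOn.eqOn_of_isPreconnected_of_eventuallyEq {Ω : Set V} (hΩ : IsOpen Ω)
    (hΩc : IsPreconnected Ω) {f g : V → W} (hf : DifferentiableOn ℂ f Ω)
    (hg : DifferentiableOn ℂ g Ω) {w : V} (hw : w ∈ Ω) (hfg : f =ᶠ[𝓝 w] g) : EqOn f g Ω := by
  have hsub : Ω ⊆ {z | f =ᶠ[𝓝 z] g} := by
    refine hΩc.subset_of_closure_inter_subset isOpen_setOfPred_eventually_nhds ⟨w, hw, hfg⟩ ?_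
    rintro z ⟨hz, hzΩ⟩
    obtain ⟨ε, hε, hball⟩ := Metric.isOpen_iff.1 hΩ z hzΩ
    obtain ⟨v, hv, hzv⟩ := Metric.mem_closure_iff.1 hz ε hε
    have h1 := DifferentiableOn.eqOn_of_convex_of_eventuallyEq isOpen_ball (convex_ball z ε)
      (hf.mono hball) (hg.mono hball) (w := v) (by rwa [mem_ball, dist_comm]) hv
    exact h1.eventuallyEq_of_mem (ball_mem_nhds z hε)
  exact fun z hz => (hsub hz).self_of_nhds

end Identity

theorem localized_burns_krantz
    {n : ℕ} (hn : 2 ≤ n) (Ω : Set (En n)) (ρ : En n → ℝ)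
    (hΩ : IsDomain' Ω) (hbd : Bornology.IsBounded Ω)
    (hρ : IsPcxCinfBoundary Ω ρ)
    (p : En n) (hp : p ∈ frontier Ω) (hspc : StronglyPcxAt ρ p)
    (F : En n → En n) (hF : DifferentiableOn ℂ F Ω) (hFself : MapsTo F Ω Ω)
    (ho : LittleOh Ω F p 3) :
    ∀ z ∈ Ω, F z = z := by
  obtain ⟨⟨hρs, hΩρ, hfr, hdρ⟩, -⟩ := hρ
  have hρ3 : ContDiff ℝ 3 ρ := hρs.of_le
    (show ((3 : ℕ∞) : WithTop ℕ∞) ≤ _ from WithTop.coe_le_coe.2 le_top)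
  have hρp : ρ p = 0 := by
    rw [hfr] at hp
    exact hp
  have hdp : fderiv ℝ ρ p ≠ 0 := hdρ p hp
  set φ : En n → ℝ := fun x => ρ (p + x) with hφ
  have hφd : ∀ x, fderiv ℝ φ x = fderiv ℝ ρ (p + x) := fun x => fderiv_comp_add_left p
  have hφ0 : fderiv ℝ φ 0 = fderiv ℝ ρ p := by rw [hφd, add_zero]
  have hφ2 : fderiv ℝ (fderiv ℝ φ) 0 = fderiv ℝ (fderiv ℝ ρ) p := by
    rw [funext hφd, fderiv_comp_add_left, add_zero]
  have hmem : ∀ x, φ x < 0 ↔ p + x ∈ Ω := fun x => by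
    rw [hΩρ]
    rfl
  obtain ⟨z, hz, hzF⟩ := exists_eventually_eq_self (V := En n) (ρ := φ)
    (F := fun x => F (p + x) - p) (by rw [finrank_euclideanSpace_fin]; exact hn)
    (hρ3.comp (contDiff_const.add contDiff_id)).contDiffAt (by simpa [hφ] using hρp)
    (by rwa [hφ0])
    (fun x hx h1 h2 => by
      rw [hφ0] at h1 h2
      have h3 := hspc x hx ⟨h1, h2⟩
      rw [LeviForm, iteratedFDeriv_two_apply, iteratedFDeriv_two_apply] at h3
      rw [hφ2]
      simp only [Matrix.cons_val_zero, Matrix.cons_val_one] at h3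
      linarith)
    (fun x hx => by
      have h1 : DifferentiableWithinAt ℂ (fun x => F (p + x)) {x | φ x < 0} x :=
        (hF _ ((hmem x).1 hx)).comp x ((differentiable_id.const_add p).differentiableAt
          |>.differentiableWithinAt) fun y hy => (hmem y).1 hy
      exact h1.sub_const p)
    (fun x hx => by
      rw [mem_ofPred_eq, hmem, add_sub_cancel]
      exact hFself ((hmem x).1 hx))
    (fun ε hε => by
      have h1 := ho.eventually (gt_mem_nhds hε)
      rw [eventually_nhdsWithin_iff] at h1
      obtain ⟨δ, hδ, h2⟩ := Metric.eventually_nhds_iff_ball.1 h1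
      refine ⟨δ, hδ, fun x hx hxδ => ?_⟩
      have h3 := h2 (p + x) (by simpa [mem_ball_iff_norm] using hxδ) ((hmem x).1 hx)
      have hx0 : x ≠ 0 := by
        rintro rfl
        simp [hφ, hρp] at hx
      rw [add_sub_cancel_left, div_lt_iff₀ (by positivity)] at h3
      rw [sub_sub]
      exact h3.le)
  have hnear : F =ᶠ[𝓝 (p + z)] id := by
    have h1 : Tendsto (fun y => y - p) (𝓝 (p + z)) (𝓝 z) := by
      have := (continuous_sub_right p).tendsto (p + z)
      rwa [add_sub_cancel_left] at this
    filter_upwards [h1.eventually hzF] with y hy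
    simpa using hy
  exact DifferentiableOn.eqOn_of_isPreconnected_of_eventuallyEq hΩ.1 hΩ.2.isPreconnected hF
    differentiableOn_id ((hmem z).1 hz) hnear
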